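/- arXiv:1502.01779 — 3 statements merged into one kernel-verified Lean document; each statement's English description precedes it below -/
import Mathlib

section
/- There exists a compact convex body K ⊆ ℝ³ (a compact convex set with nonempty interior) such that for every positive integer m there are translation vectors t₁, …, t₍₃ₘ₎ ∈ ℝ³ for which the complement ℝ³ ∖ ⋃_{i=1}^{3m} (tᵢ + K) has exactly m³ − m + 1 connected components. In particular, the maximum number of holes in the union of n translates of a compact convex body in ℝ³ is Ω(n³). -/
open Pointwise

namespace CV

/-- the scales `2^{-k}` -/
noncomputable def rr (k : ℕ) : ℝ := (1 / 2) ^ k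
noncomputable def ph (k : ℕ) (x y : ℝ) : ℝ :=
  rr k ^ 2 + 2 * rr k * y - rr k / 4 * |y + rr k * (1 + x / 16)|
noncomputable def ps (k : ℕ) (x y : ℝ) : ℝ :=
  2 * rr k * (y + 7) + rr k ^ 2 * (x + 1) / 4 - 4 * rr k ^ 2
/-- the convex body, in coordinates -/
def KK (x y z : ℝ) : Prop :=
  -2 ≤ x ∧ y ≤ 0 ∧ x - y ≤ 10 ∧ (∀ k, z ≤ 100 + ph k x y) ∧ (∀ k, -100 + ps k x y ≤ z)
/-- lower planes of the `j`-th upper body -/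
noncomputable def pl (j k : ℕ) (x y : ℝ) : ℝ :=
  2 * rr k * (y + 6 * rr j) + rr k ^ 2 * x / 4 - 4 * rr k ^ 2 - 7 * rr j ^ 2
def shA (a x y : ℝ) : Prop := -2 ≤ x - a ∧ y ≤ 0 ∧ x - a - y ≤ 10
def shB (j : ℕ) (x y : ℝ) : Prop := -1 ≤ x ∧ y ≤ 7 - 6 * rr j ∧ x - y ≤ 4 + 6 * rr j
def shC (w e x y : ℝ) : Prop := w ≤ x ∧ x - w ≤ y + e ∧ y ≤ 12 - e
def S (a : ℝ) (j : ℕ) (x y : ℝ) : Prop :=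
  shA a x y ∧ shB j x y ∧ ∃ z, (∀ k, z ≤ ph k (x - a) y) ∧ ∀ k, pl j k x y ≤ z
noncomputable def v (a : ℝ) (j : ℕ) (x : ℝ) : ℝ := -rr j * (1 + (x - a) / 16)

lemma rr_pos (k : ℕ) : 0 < rr k := by unfold rr; positivity
lemma rr_le_one (k : ℕ) : rr k ≤ 1 := by
  unfold rr; exact pow_le_one₀ (by norm_num) (by norm_num)
lemma rr_add (k d : ℕ) : rr (k + d) = rr k * (1 / 2) ^ d := by unfold rr; rw [pow_add]
lemma rr_anti {k l : ℕ} (h : k ≤ l) : rr l ≤ rr k := by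
  unfold rr; exact pow_le_pow_of_le_one (by norm_num) (by norm_num) h
lemma rr_ratio (j k : ℕ) : 8 * rr j ≤ rr k ∨ rr k = 4 * rr j ∨ rr k = 2 * rr j ∨ rr k = rr j ∨
    rr k = rr j / 2 ∨ rr k ≤ rr j / 4 := by
  by_cases h1 : k + 3 ≤ j
  · left
    have := rr_anti h1
    rw [rr_add] at this; linarith
  by_cases h2 : j = k + 2
  · subst h2; right; left; rw [rr_add]; ring
  by_cases h3 : j = k + 1
  · subst h3; right; right; left; rw [rr_add]; ring
  by_cases h4 : j = k
  · subst h4; right; right; right; left; rfl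
  by_cases h5 : k = j + 1
  · subst h5; right; right; right; right; left; rw [rr_add]; ring
  · right; right; right; right; right
    have := rr_anti (show j + 2 ≤ k by omega)
    rw [rr_add] at this; linarith

lemma rr_ratio3 (j k : ℕ) : 2 * rr j ≤ rr k ∨ rr k = rr j ∨ rr k ≤ rr j / 2 := by
  have hj := rr_pos j
  rcases rr_ratio j k with h | h | h | h | h | h
  · left; linarith
  · left; linarith
  · left; linarith
  · right; left; exact h
  · right; right; linarith
  · right; right; linarith

/-- facet lemma -/
lemma pl_le (j k : ℕ) (x y : ℝ) (hx : -1 ≤ x) (hx0 : x ≤ 0) (hy : -(5 / 2) * rr j ≤ y)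
    (hy0 : y ≤ 0) : pl j k x y ≤ rr j ^ 2 + 2 * rr j * y + rr j ^ 2 * x / 4 := by
  have hj := rr_pos j
  have hk := rr_pos k
  have key : 0 ≤ (rr j - rr k) * (2 * (y + 6 * rr j) - (4 - x / 4) * (rr j + rr k)) := by
    have := rr_ratio3 j k
    rcases this with h | h | h
    · apply mul_nonneg_of_nonpos_of_nonpos
      · linarith
      · nlinarith
    · rw [h]; simp
    · apply mul_nonneg
      · linarith
      · nlinarith
  unfold pl
  nlinarith

lemma ph_ge_contact (j k : ℕ) (x y : ℝ) (hx : -2 ≤ x) (hx0 : x ≤ 0) (hy : y = -rr j * (1 + x / 16)) :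
    rr j ^ 2 + 2 * rr j * y ≤ ph k x y := by
  have hj := rr_pos j
  have hk := rr_pos k
  unfold ph
  obtain ⟨w, hw⟩ : ∃ w, w = 1 + x / 16 := ⟨_, rfl⟩
  have hw1 : 7 / 8 ≤ w := by rw [hw]; linarith
  have hw2 : w ≤ 1 := by rw [hw]; linarith
  rw [← hw] at hy ⊢
  have e : y + rr k * w = (rr k - rr j) * w := by rw [hy]; ring
  rw [e, abs_mul, abs_of_pos (show 0 < w by linarith)]
  have := rr_ratio3 j k
  generalize rr j = r at *
  generalize rr k = s at *
  rcases this with h | h | h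
  · rw [abs_of_nonneg (by linarith)]
    have : 0 ≤ (s - r) * (s - r * (2 * w - 1) - s / 4 * w) := by
      apply mul_nonneg (by linarith)
      nlinarith
    subst hy; nlinarith
  · subst h; simp
  · rw [abs_of_nonpos (by linarith)]
    have : 0 ≤ (r - s) * (r * (2 * w - 1) - s - s / 4 * w) := by
      apply mul_nonneg (by linarith)
      nlinarith
    subst hy; nlinarith
end CV

namespace CV

lemma pl_self (j : ℕ) (x y : ℝ) : pl j j x y = rr j ^ 2 + 2 * rr j * y + rr j ^ 2 * x / 4 := by
  unfold pl; ring

lemma S_plane {a : ℝ} {j : ℕ} {x y : ℝ} (h : S a j x y) (k : ℕ) :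
    rr j ^ 2 + 2 * rr j * y + rr j ^ 2 * x / 4 ≤ ph k (x - a) y := by
  obtain ⟨-, -, z, h1, h2⟩ := h
  rw [← pl_self]; exact (h2 j).trans (h1 k)

lemma S_T {a : ℝ} {j : ℕ} {x y : ℝ} (h : S a j x y) : |y - v a j x| ≤ -rr j * x := by
  have h1 := S_plane h j
  have hj := rr_pos j
  unfold ph at h1
  have e : y + rr j * (1 + (x - a) / 16) = y - v a j x := by unfold v; ring
  rw [e] at h1
  have : rr j * |y - v a j x| ≤ rr j * (-rr j * x) := by nlinarith
  exact le_of_mul_le_mul_left this hj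

lemma S_nonpos {a : ℝ} {j : ℕ} {x y : ℝ} (h : S a j x y) : x ≤ 0 := by
  have h1 := S_T h
  have h2 := abs_nonneg (y - v a j x)
  have hj := rr_pos j
  by_contra hx
  push Not at hx
  nlinarith

lemma S_of_plane {a : ℝ} {j : ℕ} {x y : ℝ} (ha0 : 0 ≤ a) (ha1 : a ≤ 1) (hx : -1 ≤ x) (hx0 : x ≤ 0)
    (hy : -(5 / 2) * rr j ≤ y) (hy0 : y ≤ 0)
    (h : ∀ k, rr j ^ 2 + 2 * rr j * y + rr j ^ 2 * x / 4 ≤ ph k (x - a) y) : S a j x y := by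
  have hj := rr_pos j
  have hj1 := rr_le_one j
  refine ⟨⟨by linarith, hy0, by linarith⟩, ⟨hx, by linarith, by linarith⟩, _, h, ?_⟩
  intro k; exact pl_le j k x y hx hx0 hy hy0

lemma S_contact {a : ℝ} {j : ℕ} {x : ℝ} (ha0 : 0 ≤ a) (ha1 : a ≤ 1) (hx : -1 ≤ x) (hx0 : x ≤ 0) :
    S a j x (v a j x) := by
  have hj := rr_pos j
  apply S_of_plane ha0 ha1 hx hx0
  · unfold v; nlinarith
  · unfold v; nlinarith
  · intro k
    have := ph_ge_contact j k (x - a) (v a j x) (by linarith) (by linarith) rfl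
    nlinarith [sq_nonneg (rr j)]

lemma ph_big {j k : ℕ} {x y : ℝ} (h : 8 * rr j ≤ rr k) (hx : -2 ≤ x) (hx0 : x ≤ 0)
    (hy : -2 * rr j ≤ y) (hy0 : y ≤ 0) : rr j ^ 2 ≤ ph k x y := by
  have hj := rr_pos j
  unfold ph
  generalize rr j = r at *
  generalize rr k = s at *
  rw [abs_of_nonneg (by nlinarith)]
  have : s / 4 * (s * (1 + x / 16)) ≤ s / 4 * s := by
    apply mul_le_mul_of_nonneg_left _ (by linarith)
    nlinarith
  have : s * (-2 * r) ≤ s * y := mul_le_mul_of_nonneg_left hy (by linarith)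
  nlinarith

lemma S_left {a : ℝ} {j : ℕ} {x x' y : ℝ} (ha0 : 0 ≤ a) (ha1 : a ≤ 1) (hx : -1 ≤ x) (hxx : x ≤ x')
    (h : S a j x' y) : S a j x y := by
  have hx0' := S_nonpos h
  have hj := rr_pos j
  have hT := abs_le.1 (S_T h)
  have hy0 : y ≤ 0 := h.1.2.1
  have hy : -2 * rr j ≤ y := by
    have := hT.1
    unfold v at this; nlinarith
  apply S_of_plane ha0 ha1 hx (by linarith) (by linarith) hy0
  intro k
  have hp := S_plane h k
  have hk := rr_pos k
  by_cases h8 : 8 * rr j ≤ rr k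
  · have := ph_big (x := x - a) h8 (by linarith) (by linarith) hy hy0
    nlinarith [sq_nonneg (rr j)]
  · have h4 : rr k ≤ 4 * rr j := by
      rcases rr_ratio j k with h | h | h | h | h | h
      · exact absurd h h8
      all_goals linarith
    unfold ph at hp ⊢
    have : |y + rr k * (1 + (x - a) / 16)| ≤ |y + rr k * (1 + (x' - a) / 16)| + rr k * (x' - x) / 16 := by
      have h1 : 0 ≤ rr k * (x' - x) := mul_nonneg hk.le (by linarith)
      calc |y + rr k * (1 + (x - a) / 16)|
          = |(y + rr k * (1 + (x' - a) / 16)) + (-(rr k * (x' - x) / 16))| := by congr 1; ring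
        _ ≤ _ := abs_add_le _ _
        _ = _ := by rw [abs_neg, abs_of_nonneg (a := rr k * (x' - x) / 16) (by linarith)]
    have h2 : rr k / 4 * |y + rr k * (1 + (x - a) / 16)| ≤
      rr k / 4 * (|y + rr k * (1 + (x' - a) / 16)| + rr k * (x' - x) / 16) :=
      mul_le_mul_of_nonneg_left this (by linarith)
    have h3 : rr k ^ 2 * (x' - x) ≤ (4 * rr j) ^ 2 * (x' - x) := by
      apply mul_le_mul_of_nonneg_right _ (by linarith)
      exact pow_le_pow_left₀ hk.le h4 2
    nlinarith

lemma ph_conv (k : ℕ) (x y1 y2 s t : ℝ) (hs : 0 ≤ s) (ht : 0 ≤ t) (hst : s + t = 1) :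
    s * ph k x y1 + t * ph k x y2 ≤ ph k x (s * y1 + t * y2) := by
  unfold ph
  have hk := rr_pos k
  have : |s * y1 + t * y2 + rr k * (1 + x / 16)| ≤
      s * |y1 + rr k * (1 + x / 16)| + t * |y2 + rr k * (1 + x / 16)| := by
    calc _ = |s * (y1 + rr k * (1 + x / 16)) + t * (y2 + rr k * (1 + x / 16))| := by
          congr 1; linear_combination (-(rr k * (1 + x / 16))) * hst
      _ ≤ _ := abs_add_le _ _
      _ = _ := by rw [abs_mul, abs_mul, abs_of_nonneg hs, abs_of_nonneg ht]
  have := mul_le_mul_of_nonneg_left this (show 0 ≤ rr k / 4 by linarith)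
  obtain rfl : t = 1 - s := by linarith
  nlinarith

lemma S_conv {a : ℝ} {j : ℕ} {x y1 y2 y : ℝ} (h1 : S a j x y1) (h2 : S a j x y2) (hy1 : y1 ≤ y)
    (hy2 : y ≤ y2) : S a j x y := by
  rcases eq_or_lt_of_le (hy1.trans hy2) with h | h
  · obtain rfl : y = y1 := by linarith
    exact h1
  obtain ⟨⟨a1, a2, a3⟩, ⟨b1, b2, b3⟩, z1, p1, q1⟩ := h1
  obtain ⟨⟨c1, c2, c3⟩, ⟨d1, d2, d3⟩, z2, p2, q2⟩ := h2
  refine ⟨⟨a1, by linarith, by linarith⟩, ⟨b1, by linarith, by linarith⟩, ?_⟩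
  have hd : 0 < y2 - y1 := by linarith
  set s := (y2 - y) / (y2 - y1) with hs
  set t := (y - y1) / (y2 - y1) with ht
  have hs0 : 0 ≤ s := div_nonneg (by linarith) hd.le
  have ht0 : 0 ≤ t := div_nonneg (by linarith) hd.le
  have hst : s + t = 1 := by rw [hs, ht]; field_simp; ring
  have hye : y = s * y1 + t * y2 := by rw [hs, ht]; field_simp; ring
  refine ⟨s * z1 + t * z2, fun k => ?_, fun k => ?_⟩
  · rw [hye]
    refine le_trans ?_ (ph_conv k _ _ _ _ _ hs0 ht0 hst)
    exact add_le_add (mul_le_mul_of_nonneg_left (p1 k) hs0) (mul_le_mul_of_nonneg_left (p2 k) ht0)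
  · refine le_trans (le_of_eq ?_) (add_le_add (mul_le_mul_of_nonneg_left (q1 k) hs0) (mul_le_mul_of_nonneg_left (q2 k) ht0))
    have ht' : t = 1 - s := by linarith
    clear_value s t
    rw [hye, ht']; unfold pl; ring

lemma S_closing {j : ℕ} {y : ℝ} (hy : -(3 / 2) * rr j ≤ y) (hy0 : y ≤ -(3 / 4) * rr j) :
    S 0 j (-1) y := by
  have hj := rr_pos j
  apply S_of_plane le_rfl zero_le_one le_rfl (by norm_num) (by linarith) (by linarith)
  intro k
  have hk := rr_pos k
  rcases rr_ratio j k with h | h | h | h | h | h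
  · have := ph_big (x := -1 - 0) (y := y) h (by norm_num) (by norm_num) (by linarith) (by linarith)
    refine le_trans ?_ this
    have : rr j * y ≤ 0 := mul_nonpos_of_nonneg_of_nonpos hj.le (by linarith)
    nlinarith [sq_nonneg (rr j)]
  · unfold ph; rw [h]; generalize rr j = r at *
    rw [abs_of_nonneg (by linarith)]; nlinarith
  · unfold ph; rw [h]; generalize rr j = r at *
    rw [abs_of_nonneg (by linarith)]; nlinarith
  · unfold ph; rw [h]; generalize rr j = r at *
    have : |y + r * (1 + (-1 - 0) / 16)| ≤ r := by
      rw [abs_le]; constructor <;> linarith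
    nlinarith
  · unfold ph; rw [h]; generalize rr j = r at *
    rw [abs_of_nonpos (by linarith)]; nlinarith
  · unfold ph; generalize rr j = r at *; generalize rr k = s at *
    rw [abs_of_nonpos (by linarith)]
    have : r / 4 * y ≤ s * y := by nlinarith
    nlinarith
end CV

namespace CV

/-- spacing of the walls -/
noncomputable def dl (m : ℕ) : ℝ := 1 / (64 * (m : ℝ) ^ 2)
/-- positions of the walls -/
noncomputable def xw (m : ℕ) : ℕ → ℝ
  | 0 => -1
  | k + 1 => -((m : ℝ) - k) * dl m
noncomputable def aa (m n : ℕ) : ℝ := ((n % m : ℕ) : ℝ) / m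
noncomputable def vv (m N n : ℕ) (x : ℝ) : ℝ := v (aa m n) (N + n / m) x
def RS (m N n : ℕ) (x y : ℝ) : Prop := S (aa m n) (N + n / m) x y
def Good (m N : ℕ) (x y : ℝ) : Prop :=
  (∀ n < m ^ 2, ¬ RS m N n x y) ∧ ∀ k < m, ¬ shC (xw m (k + 1)) (2 * rr N) x y

lemma aa_nonneg (m n : ℕ) : 0 ≤ aa m n := by unfold aa; positivity
lemma aa_le {m : ℕ} (hm : 0 < m) (n : ℕ) : aa m n ≤ 1 := by
  unfold aa
  rw [div_le_one (by exact_mod_cast hm)]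
  exact_mod_cast (Nat.mod_lt n hm).le
lemma dl_pos {m : ℕ} (hm : 0 < m) : 0 < dl m := by
  have : (0 : ℝ) < m := by exact_mod_cast hm
  unfold dl; positivity
lemma m_dl {m : ℕ} (hm : 0 < m) : m * dl m = 1 / (64 * m) := by
  have : (0 : ℝ) < m := by exact_mod_cast hm
  unfold dl; field_simp
lemma m_dl_le {m : ℕ} (hm : 0 < m) : m * dl m ≤ 1 / 64 := by
  have : (1 : ℝ) ≤ m := by exact_mod_cast hm
  rw [m_dl hm]
  apply one_div_le_one_div_of_le <;> linarith
lemma dl_le {m : ℕ} (hm : 0 < m) : dl m ≤ 1 / 64 := by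
  have : (1 : ℝ) ≤ m := by exact_mod_cast hm
  have h1 := m_dl_le hm
  have h2 := dl_pos hm
  nlinarith

lemma xw_zero (m : ℕ) : xw m 0 = -1 := rfl
lemma xw_succ (m k : ℕ) : xw m (k + 1) = -((m : ℝ) - k) * dl m := rfl
lemma xw_step {m : ℕ} (hm : 0 < m) (k : ℕ) : xw m k + dl m ≤ xw m (k + 1) := by
  rcases k with _ | k
  · rw [xw_zero, xw_succ]
    have h1 := m_dl_le hm
    have h2 := dl_le hm
    push_cast; linarith
  · rw [xw_succ, xw_succ]; push_cast; linarith
lemma xw_strictMono {m : ℕ} (hm : 0 < m) : StrictMono (xw m) :=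
  strictMono_nat_of_lt_succ fun k => by
    have := xw_step hm k; have := dl_pos hm; linarith
lemma xw_last {m : ℕ} (hm : 0 < m) : xw m m = - dl m := by
  obtain ⟨k, rfl⟩ : ∃ k, m = k + 1 := ⟨m - 1, by omega⟩
  rw [xw_succ]; push_cast; ring
lemma xw_ge {m : ℕ} (hm : 0 < m) (k : ℕ) : -1 ≤ xw m k := by
  rw [← xw_zero m]; exact (xw_strictMono hm).monotone (Nat.zero_le _)
lemma xw_neg {m : ℕ} (hm : 0 < m) {k : ℕ} (hk : k ≤ m) : xw m k < 0 := by
  have := (xw_strictMono hm).monotone hk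
  rw [xw_last hm] at this
  have := dl_pos hm; linarith

lemma vv_gap {m : ℕ} (hm : 0 < m) (N n : ℕ) {x : ℝ} (hx : -1 ≤ x) :
    rr (N + n / m) / (16 * m) ≤ vv m N (n + 1) x - vv m N n x := by
  have hm' : (0 : ℝ) < m := by exact_mod_cast hm
  have hmod := Nat.mod_lt n hm
  have hr := rr_pos (N + n / m)
  unfold vv v aa
  by_cases h : n % m + 1 = m
  · have h1 : (n + 1) % m = 0 := by
      rw [Nat.add_mod_eq_ite]
      rcases Nat.lt_or_ge 1 m with h1 | h1
      · rw [Nat.mod_eq_of_lt h1, if_pos (by omega)]; omega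
      · obtain rfl : m = 1 := by omega
        simp [Nat.mod_one]
    have h2 : (n + 1) / m = n / m + 1 := by
      rw [Nat.succ_div_of_dvd (Nat.dvd_of_mod_eq_zero h1)]
    rw [h1, h2, ← add_assoc, rr_add _ 1]
    have h3 : ((n % m : ℕ) : ℝ) = m - 1 := by
      have : ((n % m : ℕ) : ℝ) + 1 = m := by exact_mod_cast h
      linarith
    rw [h3]
    generalize rr (N + n / m) = r at *
    have e1 : r / (16 * m) = r / 16 * (1 / m) := by field_simp
    have e2 : ((m : ℝ) - 1) / m = 1 - 1 / m := by field_simp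
    rw [e1, e2]
    push_cast
    generalize (1 / (m : ℝ)) = q
    rw [zero_div, pow_one]
    nlinarith
  · have h0 : n % m + 1 < m := by omega
    have h1 : (n + 1) % m = n % m + 1 := by
      rw [Nat.add_mod, Nat.mod_eq_of_lt (show 1 < m by omega), Nat.mod_eq_of_lt h0]
    have h2 : (n + 1) / m = n / m := by
      rw [Nat.succ_div_of_not_dvd]
      intro h
      have := Nat.mod_eq_zero_of_dvd h
      omega
    rw [h1, h2]
    push_cast
    apply le_of_eq
    field_simp
    ring

lemma vv_mono {m : ℕ} (hm : 0 < m) (N : ℕ) {x : ℝ} (hx : -1 ≤ x) :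
    StrictMono (fun n => vv m N n x) :=
  strictMono_nat_of_lt_succ fun n => by
    have := vv_gap hm N n hx
    have hm' : (0 : ℝ) < m := by exact_mod_cast hm
    have hr := rr_pos (N + n / m)
    have : 0 < rr (N + n / m) / (16 * m) := by positivity
    linarith

lemma vv_anti (m N n : ℕ) {x x' : ℝ} (h : x ≤ x') : vv m N n x' ≤ vv m N n x := by
  unfold vv v
  have hr := rr_pos (N + n / m)
  nlinarith

lemma vv_neg {m : ℕ} (hm : 0 < m) (N n : ℕ) {x : ℝ} (hx : -1 ≤ x) : vv m N n x < 0 := by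
  unfold vv v
  have hr := rr_pos (N + n / m)
  have := aa_le hm n
  nlinarith

lemma vv_ge (m N n : ℕ) {x : ℝ} (hx : x ≤ 0) : -rr N ≤ vv m N n x := by
  unfold vv v
  have hr := rr_pos (N + n / m)
  have h1 := rr_anti (Nat.le_add_right N (n / m))
  have := aa_nonneg m n
  nlinarith

lemma vv_cont (m N n : ℕ) : Continuous (vv m N n) := by unfold vv v; fun_prop

lemma RS_contact {m : ℕ} (hm : 0 < m) (N n : ℕ) {x : ℝ} (hx : -1 ≤ x) (hx0 : x ≤ 0) :
    RS m N n x (vv m N n x) := S_contact (aa_nonneg m n) (aa_le hm n) hx hx0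

lemma RS_left {m : ℕ} (hm : 0 < m) {N n : ℕ} {x x' y : ℝ} (hx : -1 ≤ x) (hxx : x ≤ x')
    (h : RS m N n x' y) : RS m N n x y := S_left (aa_nonneg m n) (aa_le hm n) hx hxx h

lemma RS_range {m N n : ℕ} {x y : ℝ} (h : RS m N n x y) : -1 ≤ x ∧ x ≤ 0 ∧ y ≤ 0 :=
  ⟨h.2.1.1, S_nonpos h, h.1.2.1⟩

lemma RS_conv {m N n : ℕ} {x y1 y2 y : ℝ} (h1 : RS m N n x y1) (h2 : RS m N n x y2) (hy1 : y1 ≤ y)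
    (hy2 : y ≤ y2) : RS m N n x y := S_conv h1 h2 hy1 hy2

lemma RS_closing {m : ℕ} (hm : 0 < m) (N : ℕ) {y : ℝ} (h1 : vv m N 0 (-1) ≤ y)
    (h2 : y ≤ vv m N (m ^ 2 - 1) (-1)) : ∃ n < m ^ 2, RS m N n (-1) y := by
  have key : ∀ j, -(3 / 2) * rr N ≤ y → y ≤ -(3 / 4) * rr (N + j) →
      ∃ j' ≤ j, -(3 / 2) * rr (N + j') ≤ y ∧ y ≤ -(3 / 4) * rr (N + j') := by
    intro j h1
    induction j with
    | zero => intro h2; exact ⟨0, le_rfl, h1, h2⟩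
    | succ j ih =>
      intro h2
      by_cases h3 : -(3 / 2) * rr (N + (j + 1)) ≤ y
      · exact ⟨j + 1, le_rfl, h3, h2⟩
      · have e : rr (N + (j + 1)) = rr (N + j) / 2 := by rw [← add_assoc, rr_add _ 1]; ring
        obtain ⟨j', hj', h⟩ := ih (by rw [e] at h3; linarith)
        exact ⟨j', by omega, h⟩
  have e1 : (m ^ 2 - 1) / m = m - 1 := by
    obtain ⟨k, rfl⟩ : ∃ k, m = k + 1 := ⟨m - 1, by omega⟩
    apply Nat.div_eq_of_lt_le
    · have : (k + 1) ^ 2 = (k + 1) * (k + 1) := by ring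
      rw [this]; simp
      have : (k + 1) * (k + 1) = k * (k + 1) + k + 1 := by ring
      omega
    · have : (k + 1) ^ 2 = (k + 1) * (k + 1) := by ring
      have h0 : 0 < (k + 1) * (k + 1) := by positivity
      rw [this, show k + 1 - 1 + 1 = k + 1 from rfl]
      omega
  obtain ⟨j, hj, h3, h4⟩ := key (m - 1) (by
      have := vv_ge m N 0 (x := -1) (by norm_num)
      have := rr_pos N; linarith) (by
      refine h2.trans ?_
      unfold vv v
      rw [e1]
      have := rr_pos (N + (m - 1))
      have := aa_le hm (m ^ 2 - 1)
      nlinarith)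
  refine ⟨j * m, ?_, ?_⟩
  · nlinarith [show j < m by omega]
  · unfold RS aa
    rw [Nat.mul_mod_left, Nat.mul_div_cancel _ hm]
    simpa using S_closing h3 h4

end CV

namespace CV

def Box2 (m N n k : ℕ) (x y : ℝ) : Prop :=
  xw m k < x ∧ x < xw m (k + 1) ∧ vv m N n x < y ∧ y < vv m N (n + 1) x

lemma box_good_exists {m N : ℕ} (hm : 0 < m) (hN : 2 * rr N ≤ dl m / 2) {n k : ℕ} (hk : k < m) :
    ∃ x y, Box2 m N n k x y ∧ Good m N x y ∧ y ≤ 0 ∧ -1 ≤ y := by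
  have hd := dl_pos hm
  have hm' : (0 : ℝ) < m := by exact_mod_cast hm
  have hst := xw_step hm k
  have hg := xw_ge hm k
  have hneg := xw_neg hm (show k + 1 ≤ m by omega)
  obtain ⟨x, hx⟩ : ∃ x, x = xw m (k + 1) - dl m / 4 := ⟨_, rfl⟩
  obtain ⟨y, hy⟩ : ∃ y, y = (vv m N n x + vv m N (n + 1) x) / 2 := ⟨_, rfl⟩
  have hx1 : -1 ≤ x := by linarith
  have hmono := vv_mono hm N hx1
  have hgap := vv_gap hm N n hx1
  have hr := rr_pos (N + n / m)
  have hrN := rr_pos N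
  have hpos : 0 < rr (N + n / m) / (16 * m) := by positivity
  have h0 := vv_neg hm N n hx1
  have h1 := vv_neg hm N (n + 1) hx1
  have h2 := vv_ge m N n (x := x) (by linarith)
  have h3 := vv_ge m N (n + 1) (x := x) (by linarith)
  have hrN1 := rr_le_one N
  have hxs : -x < 1 / (32 * m) := by
    have : xw m (k + 1) ≥ - (m * dl m) := by
      rw [xw_succ]
      have : (0 : ℝ) ≤ k := by positivity
      nlinarith
    have h4 : dl m ≤ m * dl m := by
      have : (1 : ℝ) ≤ m := by exact_mod_cast hm
      nlinarith
    have h5 := m_dl hm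
    have h6 : 1 / (32 * (m : ℝ)) = 2 * (1 / (64 * m)) := by field_simp; norm_num
    have h7 : 0 < 1 / (64 * (m : ℝ)) := by positivity
    rw [h6, ← h5]
    rw [← h5] at h7
    linarith
  refine ⟨x, y, ⟨by linarith, by linarith, by linarith, by linarith⟩, ⟨?_, ?_⟩, by linarith, by linarith⟩
  · intro n' _ hS
    have hT := S_T hS
    have hr' := rr_pos (N + n' / m)
    have hlt : -rr (N + n' / m) * x < rr (N + n' / m) / (32 * m) := by
      have := mul_lt_mul_of_pos_left hxs hr'
      calc _ = rr (N + n' / m) * -x := by ring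
        _ < _ := this
        _ = _ := by ring
    have e16 : ∀ s : ℝ, s / (16 * m) = 2 * (s / (32 * m)) := by intro s; field_simp; ring
    have hp' : 0 < rr (N + n' / m) / (32 * m) := by positivity
    change |y - vv m N n' x| ≤ _ at hT
    have hT := hT.trans_lt hlt
    rw [abs_lt] at hT
    rcases lt_trichotomy n' n with h | h | h
    · have g := vv_gap hm N n' hx1
      have := hmono.monotone (show n' + 1 ≤ n by omega)
      rw [e16] at g
      linarith
    · subst h
      rw [e16] at hgap
      linarith
    · have := hmono.monotone (show n + 1 ≤ n' by omega)
      have hle : rr (N + n' / m) / (32 * m) ≤ rr (N + n / m) / (32 * m) := by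
        apply div_le_div_of_nonneg_right _ (by positivity)
        exact rr_anti (Nat.add_le_add_left (Nat.div_le_div_right h.le) N)
      rw [e16] at hgap
      linarith
  · intro k' _ hC
    obtain ⟨c1, c2, c3⟩ := hC
    rcases Nat.lt_or_ge k' k with h | h
    · have := (xw_strictMono hm).monotone (show k' + 1 ≤ k by omega)
      linarith
    · have := (xw_strictMono hm).monotone (show k + 1 ≤ k' + 1 by omega)
      linarith

lemma shC_right {w e x x' y : ℝ} (hxx : x ≤ x') (hwx : w ≤ x) (h : shC w e x' y) :
    shC w e x y := ⟨hwx, by linarith [h.2.1], h.2.2⟩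

/-- moving to the right inside a column -/
lemma good_right {m N : ℕ} (hm : 0 < m) {k : ℕ} {x x' y : ℝ} (hx1 : -1 ≤ x) (hx : xw m k ≤ x)
    (hxx : x ≤ x') (hx' : k < m → x' < xw m (k + 1)) (h : Good m N x y) : Good m N x' y := by
  refine ⟨fun n hn hS => h.1 n hn (RS_left hm hx1 hxx hS), fun k' hk' hC => ?_⟩
  rcases Nat.lt_or_ge k' k with h1 | h1
  · have := (xw_strictMono hm).monotone (show k' + 1 ≤ k by omega)
    exact h.2 k' hk' (shC_right hxx (by linarith) hC)
  · have := (xw_strictMono hm).monotone (show k + 1 ≤ k' + 1 by omega)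
    have := hC.1
    have := hx' (by omega)
    linarith

lemma row_right {m N : ℕ} (hm : 0 < m) {n : ℕ} (hn : n + 1 < m ^ 2) {x x' y : ℝ} (hx1 : -1 ≤ x)
    (hxx : x ≤ x') (hx0 : x' ≤ 0) (h : Good m N x y)
    (h1 : vv m N n x < y) (h2 : y < vv m N (n + 1) x) :
    vv m N n x' < y ∧ y < vv m N (n + 1) x' := by
  refine ⟨(vv_anti m N n hxx).trans_lt h1, ?_⟩
  by_contra hc
  push Not at hc
  obtain ⟨u, hu, he⟩ := intermediate_value_Icc' hxx (vv_cont m N (n + 1)).continuousOn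
    (show y ∈ Set.Icc _ _ from ⟨hc, h2.le⟩)
  apply h.1 (n + 1) hn
  apply RS_left hm hx1 hu.1
  rw [← he]
  exact RS_contact hm N _ (by linarith [hu.1]) (by linarith [hu.2])

/-- moving vertically inside a box -/
lemma good_vert {m N : ℕ} (hm : 0 < m) {n k : ℕ} {x y1 y2 y : ℝ} (hx1 : -1 ≤ x) (hx0 : x ≤ 0)
    (hk' : x < xw m (k + 1))
    (g1 : Good m N x y1) (g2 : Good m N x y2)
    (h1 : vv m N n x < y1) (h2 : y2 < vv m N (n + 1) x)
    (hy1 : y1 ≤ y) (hy2 : y ≤ y2) : Good m N x y := by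
  have hmono := (vv_mono hm N hx1).monotone
  constructor
  · intro n' hn' hS
    rcases Nat.lt_or_ge n n' with h | h
    · have := hmono (show n + 1 ≤ n' by omega)
      simp only at this
      exact g2.1 n' hn' (RS_conv hS (RS_contact hm N n' hx1 hx0) hy2 (by linarith))
    · have := hmono h
      simp only at this
      exact g1.1 n' hn' (RS_conv (RS_contact hm N n' hx1 hx0) hS (by linarith) hy1)
  · intro k'' hk'' hC
    rcases Nat.lt_or_ge k'' k with h | h
    · apply g2.2 k'' hk''
      have : y2 < 0 := h2.trans (vv_neg hm N _ hx1)
      have := rr_le_one N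
      exact ⟨hC.1, by linarith [hC.2.1], by linarith⟩
    · have := (xw_strictMono hm).monotone (show k + 1 ≤ k'' + 1 by omega)
      linarith [hC.1]

lemma good_down {m N : ℕ} (hm : 0 < m) {x y y' : ℝ} (hx1 : -1 ≤ x) (hx0 : x ≤ 0)
    (hy : y < vv m N 0 x) (hyy : y' ≤ y) (h : Good m N x y) : Good m N x y' := by
  have hmono := (vv_mono hm N hx1).monotone
  constructor
  · intro n hn hS
    have := hmono (Nat.zero_le n)
    simp only at this
    exact h.1 n hn (RS_conv hS (RS_contact hm N n hx1 hx0) hyy (by linarith))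
  · intro k hk hC
    have := rr_le_one N
    have := vv_neg hm N 0 hx1
    exact h.2 k hk ⟨hC.1, by linarith [hC.2.1], by linarith⟩

lemma good_up {m N : ℕ} (hm : 0 < m) (hN : 2 * rr N ≤ dl m / 2) {k : ℕ} {x y y' : ℝ} (hx1 : -1 ≤ x)
    (hx0 : x ≤ 0)
    (hx : xw m k + 3 * dl m / 4 ≤ x) (hx' : x < xw m (k + 1))
    (hy : vv m N (m ^ 2 - 1) x < y) (hyy : y ≤ y') (hy' : y' ≤ dl m / 8) (h : Good m N x y) :
    Good m N x y' := by
  have hmono := (vv_mono hm N hx1).monotone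
  have hd := dl_pos hm
  constructor
  · intro n hn hS
    have := hmono (show n ≤ m ^ 2 - 1 by omega)
    simp only at this
    exact h.1 n hn (RS_conv (RS_contact hm N n hx1 hx0) hS (by linarith) hyy)
  · intro k' hk' hC
    rcases Nat.lt_or_ge k' k with h | h
    · have := (xw_strictMono hm).monotone (show k' + 1 ≤ k by omega)
      linarith [hC.2.1]
    · have := (xw_strictMono hm).monotone (show k + 1 ≤ k' + 1 by omega)
      linarith [hC.1]

/-- Location of a good point in the strip. -/
lemma exists_column {m : ℕ} {x : ℝ} (hx1 : -1 ≤ x) (hx : x < xw m m) :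
    ∃ k < m, xw m k ≤ x ∧ x < xw m (k + 1) := by
  have key : ∀ l, x < xw m l → ∃ k < l, xw m k ≤ x ∧ x < xw m (k + 1) := by
    intro l
    induction l with
    | zero => intro h; rw [xw_zero] at h; linarith
    | succ l ih =>
      intro h
      by_cases h1 : xw m l ≤ x
      · exact ⟨l, by omega, h1, h⟩
      · obtain ⟨k, hk, h2⟩ := ih (by linarith)
        exact ⟨k, by omega, h2⟩
  exact key m hx

lemma exists_row {m N : ℕ} {x y : ℝ} (h0 : vv m N 0 x ≤ y) (l : ℕ) (h1 : y ≤ vv m N l x) (hl : 0 < l) :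
    ∃ n < l, vv m N n x ≤ y ∧ y ≤ vv m N (n + 1) x := by
  induction l with
  | zero => omega
  | succ l ih =>
    by_cases h : vv m N l x ≤ y
    · exact ⟨l, by omega, h, h1⟩
    · rcases Nat.eq_zero_or_pos l with rfl | hl
      · exact absurd h0 h
      · obtain ⟨k, hk, h2⟩ := ih (by linarith) hl
        exact ⟨k, by omega, h2⟩

/-- Closed boxes contain no good points besides those of the open boxes. -/
lemma closed_box {m N : ℕ} (hm : 0 < m) {n k : ℕ} (hn : n + 1 < m ^ 2) (hk : k < m)
    {x y : ℝ} (h : Good m N x y) (h1 : xw m k ≤ x) (h2 : x ≤ xw m (k + 1))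
    (h3 : vv m N n x ≤ y) (h4 : y ≤ vv m N (n + 1) x) : Box2 m N n k x y := by
  have hx1 : -1 ≤ x := (xw_ge hm k).trans h1
  have hx0 : x < 0 := h2.trans_lt (xw_neg hm hk)
  have hr := rr_pos N
  have hr1 := rr_le_one N
  have hyr : -rr N ≤ y := (vv_ge m N n hx0.le).trans h3
  have hy0 : y < 0 := h4.trans_lt (vv_neg hm N _ hx1)
  have hwall : ∀ k' < m, x ≠ xw m (k' + 1) := by
    intro k' hk' he
    exact h.2 k' hk' ⟨he.ge, by linarith, by linarith⟩
  refine ⟨lt_of_le_of_ne h1 ?_, lt_of_le_of_ne h2 (hwall k hk), lt_of_le_of_ne h3 ?_, lt_of_le_of_ne h4 ?_⟩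
  · intro he
    rcases k with _ | k
    · rw [xw_zero] at he
      subst he
      have hmono := (vv_mono hm N hx1).monotone
      obtain ⟨n', hn', hS⟩ := RS_closing hm N (y := y) ((hmono (Nat.zero_le n)).trans h3)
        (h4.trans (hmono (show n + 1 ≤ m ^ 2 - 1 by omega)))
      exact h.1 n' hn' hS
    · exact hwall k (by omega) he.symm
  · intro he
    apply h.1 n (by omega)
    rw [← he]; exact RS_contact hm N n hx1 hx0.le
  · intro he
    apply h.1 (n + 1) (by omega)
    rw [he]; exact RS_contact hm N _ hx1 hx0.le

lemma box_unique {m N : ℕ} (hm : 0 < m) {n k n' k' : ℕ} {x y : ℝ} (h : Box2 m N n k x y)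
    (h' : Box2 m N n' k' x y) : n = n' ∧ k = k' := by
  have hx1 : -1 ≤ x := (xw_ge hm k).trans h.1.le
  have hmono := (vv_mono hm N hx1)
  have hw := xw_strictMono hm
  obtain ⟨a1, a2, a3, a4⟩ := h
  obtain ⟨b1, b2, b3, b4⟩ := h'
  have c1 := hw.lt_iff_lt.1 (a1.trans b2)
  have c2 := hw.lt_iff_lt.1 (b1.trans a2)
  have c3 := hmono.lt_iff_lt.1 (a3.trans b4)
  have c4 := hmono.lt_iff_lt.1 (b3.trans a4)
  omega
end CV

namespace CV

lemma D_bounds {x y : ℝ} (h1 : -2 ≤ x) (h2 : y ≤ 0) (h3 : x - y ≤ 10) (k : ℕ) :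
    -40 ≤ ph k x y ∧ ph k x y ≤ 1 ∧ -40 ≤ ps k x y ∧ ps k x y ≤ 40 := by
  have hk := rr_pos k
  have hk1 := rr_le_one k
  unfold ph ps
  generalize rr k = s at *
  have hs2 : s ^ 2 ≤ 1 := by nlinarith
  have e1 : 0 ≤ s ^ 2 := sq_nonneg s
  have hsy : -12 ≤ s * y := by nlinarith
  have hsy0 : s * y ≤ 0 := by nlinarith
  have hx : s ^ 2 * x ≤ 10 := by nlinarith
  have hx' : -2 ≤ s ^ 2 * x := by nlinarith
  have hab : |y + s * (1 + x / 16)| ≤ 14 := by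
    rw [abs_le]; constructor <;> nlinarith
  have hab0 := abs_nonneg (y + s * (1 + x / 16))
  have hm : s / 4 * |y + s * (1 + x / 16)| ≤ 7 / 2 := by nlinarith
  have hm0 : 0 ≤ s / 4 * |y + s * (1 + x / 16)| := by positivity
  refine ⟨by nlinarith, by nlinarith, by nlinarith, by nlinarith⟩

lemma KK_bounds {x y z : ℝ} (h : KK x y z) : -2 ≤ x ∧ x ≤ 10 ∧ -12 ≤ y ∧ y ≤ 0 ∧ -140 ≤ z ∧ z ≤ 101 := by
  obtain ⟨h1, h2, h3, h4, h5⟩ := h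
  have := D_bounds h1 h2 h3 0
  have := h4 0
  have := h5 0
  refine ⟨h1, by linarith, by linarith, h2, by linarith, by linarith⟩

lemma KK_down {x y z z' : ℝ} (h : KK x y z') (hz : z ≤ z') (hz' : -50 ≤ z) : KK x y z := by
  obtain ⟨h1, h2, h3, h4, h5⟩ := h
  exact ⟨h1, h2, h3, fun k => hz.trans (h4 k), fun k => by linarith [(D_bounds h1 h2 h3 k).2.2.2]⟩

lemma KK_up {x y z z' : ℝ} (h : KK x y z') (hz : z' ≤ z) (hz' : z ≤ 50) : KK x y z := by
  obtain ⟨h1, h2, h3, h4, h5⟩ := h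
  exact ⟨h1, h2, h3, fun k => by linarith [(D_bounds h1 h2 h3 k).1], fun k => (h5 k).trans hz⟩

def BA (m i : ℕ) (x y z : ℝ) : Prop := KK (x - (i : ℝ) / m) y (z + 100)
def BB (N j : ℕ) (x y z : ℝ) : Prop :=
  KK (x - 1) (y - (7 - 6 * rr (N + j))) (z - (100 - 7 * rr (N + j) ^ 2))
def BC (m N k : ℕ) (x y z : ℝ) : Prop := KK (x - (2 + xw m (k + 1))) (y - (12 - 2 * rr N)) z

def air (m N : ℕ) (x y z : ℝ) : Prop :=
  (∀ i < m, ¬ BA m i x y z) ∧ (∀ j < m, ¬ BB N j x y z) ∧ ∀ k < m, ¬ BC m N k x y z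

def MM (m N : ℕ) (x y z : ℝ) : Prop :=
  (∀ i < m, ¬ (shA ((i : ℝ) / m) x y ∧ ∀ k, z ≤ ph k (x - (i : ℝ) / m) y)) ∧
  (∀ j < m, ¬ (shB (N + j) x y ∧ ∀ k, pl (N + j) k x y ≤ z)) ∧
  ∀ k < m, ¬ shC (xw m (k + 1)) (2 * rr N) x y

lemma pl_eq (J k : ℕ) (x y : ℝ) :
    pl J k x y = ps k (x - 1) (y - (7 - 6 * rr J)) - 7 * rr J ^ 2 := by
  unfold pl ps; ring

lemma shB_D {J : ℕ} {x y : ℝ} (h : shB J x y) :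
    -2 ≤ x - 1 ∧ y - (7 - 6 * rr J) ≤ 0 ∧ (x - 1) - (y - (7 - 6 * rr J)) ≤ 10 := by
  obtain ⟨h1, h2, h3⟩ := h
  exact ⟨by linarith, by linarith, by linarith⟩

lemma shC_D {w e x y : ℝ} : shC w e x y ↔
    -2 ≤ x - (2 + w) ∧ y - (12 - e) ≤ 0 ∧ (x - (2 + w)) - (y - (12 - e)) ≤ 10 := by
  constructor
  · rintro ⟨h1, h2, h3⟩
    exact ⟨by linarith, by linarith, by linarith⟩
  · rintro ⟨h1, h2, h3⟩
    exact ⟨by linarith, by linarith, by linarith⟩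

lemma MM_air {m N : ℕ} {x y z : ℝ} (h : MM m N x y z) : air m N x y z := by
  obtain ⟨h1, h2, h3⟩ := h
  refine ⟨fun i hi hA => h1 i hi ?_, fun j hj hB => h2 j hj ?_, fun k hk hC => h3 k hk ?_⟩
  · obtain ⟨a1, a2, a3, a4, a5⟩ := hA
    exact ⟨⟨a1, a2, a3⟩, fun k => by linarith [a4 k]⟩
  · obtain ⟨a1, a2, a3, a4, a5⟩ := hB
    refine ⟨⟨by linarith, by linarith, by linarith⟩, fun k => ?_⟩
    rw [pl_eq]; linarith [a5 k]
  · obtain ⟨a1, a2, a3, a4, a5⟩ := hC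
    exact shC_D.2 ⟨a1, a2, a3⟩

lemma air_MM {m N : ℕ} {x y z : ℝ} (h : air m N x y z) (hz : -50 ≤ z) (hz' : z ≤ 50) :
    MM m N x y z := by
  obtain ⟨h1, h2, h3⟩ := h
  refine ⟨fun i hi hA => h1 i hi ?_, fun j hj hB => h2 j hj ?_, fun k hk hC => h3 k hk ?_⟩
  · obtain ⟨⟨a1, a2, a3⟩, a4⟩ := hA
    exact ⟨a1, a2, a3, fun k => by linarith [a4 k], fun k => by
      linarith [(D_bounds a1 a2 a3 k).2.2.2]⟩
  · obtain ⟨a0, a4⟩ := hB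
    obtain ⟨a1, a2, a3⟩ := shB_D a0
    have r0 := rr_pos (N + j)
    have r1 := rr_le_one (N + j)
    have : rr (N + j) ^ 2 ≤ 1 := by nlinarith
    refine ⟨a1, a2, a3, fun k => ?_, fun k => ?_⟩
    · linarith [(D_bounds a1 a2 a3 k).1]
    · have := a4 k
      rw [pl_eq] at this; linarith
  · obtain ⟨a1, a2, a3⟩ := shC_D.1 hC
    exact ⟨a1, a2, a3, fun k => by linarith [(D_bounds a1 a2 a3 k).1], fun k => by
      linarith [(D_bounds a1 a2 a3 k).2.2.2]⟩

lemma MM_fiber {m N : ℕ} {x y z z1 z2 : ℝ} (h1 : MM m N x y z1) (h2 : MM m N x y z2)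
    (hz1 : z1 ≤ z) (hz2 : z ≤ z2) : MM m N x y z :=
  ⟨fun i hi hA => h1.1 i hi ⟨hA.1, fun k => hz1.trans (hA.2 k)⟩,
   fun j hj hB => h2.2.1 j hj ⟨hB.1, fun k => (hB.2 k).trans hz2⟩, h1.2.2⟩

lemma MM_good {m N : ℕ} (hm : 0 < m) {x y z : ℝ} (h : MM m N x y z) : Good m N x y := by
  refine ⟨fun n hn hS => ?_, h.2.2⟩
  obtain ⟨hA, hB, z', p, q⟩ := hS
  have h1 := h.1 (n % m) (Nat.mod_lt n hm)
  have h2 := h.2.1 (n / m) (by rw [Nat.div_lt_iff_lt_mul hm]; nlinarith)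
  rcases le_total z z' with hz | hz
  · exact h1 ⟨hA, fun k => hz.trans (p k)⟩
  · exact h2 ⟨hB, fun k => (q k).trans hz⟩

lemma ph_lower {a x y : ℝ} (h : shA a x y) (k : ℕ) : -40 ≤ ph k (x - a) y :=
  (D_bounds h.1 h.2.1 h.2.2 k).1

lemma pl_upper {J : ℕ} {x y : ℝ} (h : shB J x y) (k : ℕ) : pl J k x y ≤ 40 := by
  obtain ⟨a1, a2, a3⟩ := shB_D h
  rw [pl_eq]
  nlinarith [(D_bounds a1 a2 a3 k).2.2.2, sq_nonneg (rr J)]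

lemma good_MM {m N : ℕ} {x y : ℝ} (h : Good m N x y) : ∃ z, MM m N x y z := by
  classical
  have hpair : ∀ i < m, ∀ j < m, shA ((i : ℝ) / m) x y → shB (N + j) x y →
      (⨅ k, ph k (x - (i : ℝ) / m) y) < ⨆ k, pl (N + j) k x y := by
    intro i hi j hj hA hB
    have hn : j * m + i < m ^ 2 := by nlinarith
    have hS := h.1 _ hn
    have e1 : (j * m + i) % m = i := by
      rw [mul_comm, Nat.mul_add_mod, Nat.mod_eq_of_lt hi]
    have e2 : (j * m + i) / m = j := by
      rw [mul_comm, Nat.mul_add_div (by omega), Nat.div_eq_of_lt hi, add_zero]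
    by_contra hc
    push Not at hc
    apply hS
    unfold RS aa
    rw [e1, e2]
    refine ⟨hA, hB, _, fun k => hc.trans (ciInf_le ⟨-40, ?_⟩ k), fun k => le_ciSup (f := fun k => pl (N + j) k x y) ⟨40, ?_⟩ k⟩
    · rintro _ ⟨k, rfl⟩; exact ph_lower hA k
    · rintro _ ⟨k, rfl⟩; exact pl_upper hB k
  let sA := ((Finset.range m).filter (fun i : ℕ => shA ((i : ℝ) / m) x y)).image
    (fun i : ℕ => ⨅ k, ph k (x - (i : ℝ) / m) y)
  let sB := ((Finset.range m).filter (fun j => shB (N + j) x y)).image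
    (fun j => ⨆ k, pl (N + j) k x y)
  obtain ⟨z, hz1, hz2⟩ := Order.exists_between_finsets sA sB (by
    intro u hu w hw
    simp only [sA, sB, Finset.mem_image, Finset.mem_filter, Finset.mem_range] at hu hw
    obtain ⟨i, ⟨hi, hA⟩, rfl⟩ := hu
    obtain ⟨j, ⟨hj, hB⟩, rfl⟩ := hw
    exact hpair i hi j hj hA hB)
  refine ⟨z, fun i hi hA => ?_, fun j hj hB => ?_, h.2⟩
  · have := hz1 (⨅ k, ph k (x - (i : ℝ) / m) y) (by
      simp only [sA, Finset.mem_image, Finset.mem_filter, Finset.mem_range]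
      exact ⟨i, ⟨hi, hA.1⟩, rfl⟩)
    obtain ⟨k, hk⟩ := exists_lt_of_ciInf_lt this
    exact absurd (hA.2 k) (not_le.2 hk)
  · have := hz2 (⨆ k, pl (N + j) k x y) (by
      simp only [sB, Finset.mem_image, Finset.mem_filter, Finset.mem_range]
      exact ⟨j, ⟨hj, hB.1⟩, rfl⟩)
    obtain ⟨k, hk⟩ := exists_lt_of_lt_ciSup this
    exact absurd (hB.2 k) (not_le.2 hk)

lemma MM_level {m N : ℕ} (hm : 0 < m) {x y z : ℝ} (h : MM m N x y z) (hx1 : -1 ≤ x) (hx0 : x ≤ 0)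
    (hy1 : -1 ≤ y) (hy0 : y ≤ 0) : -50 < z ∧ z < 50 := by
  have hA : shA (((0 : ℕ) : ℝ) / m) x y := by
    simp only [Nat.cast_zero, zero_div]
    exact ⟨by linarith, hy0, by linarith⟩
  have r0 := rr_pos (N + 0)
  have r1 := rr_le_one (N + 0)
  have hB : shB (N + 0) x y := ⟨hx1, by linarith, by linarith⟩
  constructor
  · by_contra hc
    exact h.1 0 hm ⟨hA, fun k => by linarith [ph_lower hA k]⟩
  · by_contra hc
    exact h.2.1 0 hm ⟨hB, fun k => by linarith [pl_upper hB k]⟩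

lemma ph_cont (k : ℕ) : Continuous (fun p : ℝ × ℝ => ph k p.1 p.2) := by unfold ph; fun_prop
lemma ps_cont (k : ℕ) : Continuous (fun p : ℝ × ℝ => ps k p.1 p.2) := by unfold ps; fun_prop
lemma pl_cont (J k : ℕ) : Continuous (fun p : ℝ × ℝ => pl J k p.1 p.2) := by unfold pl; fun_prop

lemma KK_closed : IsClosed {p : Fin 3 → ℝ | KK (p 0) (p 1) (p 2)} := by
  have hp : ∀ k, Continuous (fun p : Fin 3 → ℝ => ph k (p 0) (p 1)) := fun k => by unfold ph; fun_prop
  have hs : ∀ k, Continuous (fun p : Fin 3 → ℝ => ps k (p 0) (p 1)) := fun k => by unfold ps; fun_prop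
  unfold KK
  simp only [Set.ofPred_and, Set.ofPred_forall]
  refine IsClosed.inter (isClosed_le (by fun_prop) (by fun_prop)) (IsClosed.inter (isClosed_le (by fun_prop) (by fun_prop)) (IsClosed.inter (isClosed_le (by fun_prop) (by fun_prop)) (IsClosed.inter ?_ ?_)))
  · exact isClosed_iInter fun k => isClosed_le (by fun_prop) (continuous_const.add (hp k))
  · exact isClosed_iInter fun k => isClosed_le (continuous_const.add (hs k)) (by fun_prop)

lemma MM_open (m N : ℕ) : IsOpen {p : Fin 3 → ℝ | MM m N (p 0) (p 1) (p 2)} := by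
  unfold MM
  simp only [Set.ofPred_and, Set.ofPred_forall]
  have hp : ∀ k (a : ℝ), Continuous (fun p : Fin 3 → ℝ => ph k (p 0 - a) (p 1)) := fun k a => by unfold ph; fun_prop
  have hs : ∀ J k, Continuous (fun p : Fin 3 → ℝ => pl J k (p 0) (p 1)) := fun J k => by unfold pl; fun_prop
  refine IsOpen.inter ?_ (IsOpen.inter ?_ ?_)
  · refine (Set.finite_lt_nat m).isOpen_biInter fun i _ => ?_
    rw [← isClosed_compl_iff]
    have : {p : Fin 3 → ℝ | ¬(shA ((i : ℝ) / m) (p 0) (p 1) ∧ ∀ k, p 2 ≤ ph k (p 0 - (i : ℝ) / m) (p 1))}ᶜ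
      = {p | shA ((i : ℝ) / m) (p 0) (p 1)} ∩ ⋂ k, {p | p 2 ≤ ph k (p 0 - (i : ℝ) / m) (p 1)} := by
      ext p; simp
    rw [this]
    refine IsClosed.inter ?_ (isClosed_iInter fun k => isClosed_le (by fun_prop) (hp _ _))
    unfold shA
    simp only [Set.ofPred_and]
    exact IsClosed.inter (isClosed_le (by fun_prop) (by fun_prop)) (IsClosed.inter (isClosed_le (by fun_prop) (by fun_prop)) (isClosed_le (by fun_prop) (by fun_prop)))
  · refine (Set.finite_lt_nat m).isOpen_biInter fun j _ => ?_
    rw [← isClosed_compl_iff]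
    have : {p : Fin 3 → ℝ | ¬(shB (N + j) (p 0) (p 1) ∧ ∀ k, pl (N + j) k (p 0) (p 1) ≤ p 2)}ᶜ
      = {p | shB (N + j) (p 0) (p 1)} ∩ ⋂ k, {p | pl (N + j) k (p 0) (p 1) ≤ p 2} := by
      ext p; simp
    rw [this]
    refine IsClosed.inter ?_ (isClosed_iInter fun k => isClosed_le (hs _ _) (by fun_prop))
    unfold shB
    simp only [Set.ofPred_and]
    exact IsClosed.inter (isClosed_le (by fun_prop) (by fun_prop)) (IsClosed.inter (isClosed_le (by fun_prop) (by fun_prop)) (isClosed_le (by fun_prop) (by fun_prop)))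
  · refine (Set.finite_lt_nat m).isOpen_biInter fun k _ => ?_
    rw [← isClosed_compl_iff]
    have : {p : Fin 3 → ℝ | ¬ shC (xw m (k + 1)) (2 * rr N) (p 0) (p 1)}ᶜ
      = {p | shC (xw m (k + 1)) (2 * rr N) (p 0) (p 1)} := by
      ext p; simp
    rw [this]
    unfold shC
    simp only [Set.ofPred_and]
    exact IsClosed.inter (isClosed_le (by fun_prop) (by fun_prop)) (IsClosed.inter (isClosed_le (by fun_prop) (by fun_prop)) (isClosed_le (by fun_prop) (by fun_prop)))
end CV

namespace CV

def Air (m N : ℕ) : Set (Fin 3 → ℝ) := {p | air m N (p 0) (p 1) (p 2)}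

/-- being in a common connected subset of `Air` -/
def CC (m N : ℕ) (p q : Fin 3 → ℝ) : Prop :=
  ∃ s ⊆ Air m N, IsPreconnected s ∧ p ∈ s ∧ q ∈ s

lemma CC.symm {m N : ℕ} {p q : Fin 3 → ℝ} (h : CC m N p q) : CC m N q p := by
  obtain ⟨s, h1, h2, h3, h4⟩ := h
  exact ⟨s, h1, h2, h4, h3⟩

lemma CC.trans {m N : ℕ} {p q r : Fin 3 → ℝ} (h : CC m N p q) (h' : CC m N q r) : CC m N p r := by
  obtain ⟨s, h1, h2, h3, h4⟩ := h
  obtain ⟨t, g1, g2, g3, g4⟩ := h'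
  exact ⟨s ∪ t, Set.union_subset h1 g1, h2.union q h4 g3 g2, Or.inl h3, Or.inr g4⟩

lemma CC_path {m N : ℕ} {f g h : ℝ → ℝ} (hf : Continuous f) (hg : Continuous g) (hh : Continuous h)
    {a b : ℝ} (H : ∀ s ∈ Set.uIcc a b, air m N (f s) (g s) (h s)) :
    CC m N ![f a, g a, h a] ![f b, g b, h b] := by
  refine ⟨(fun s => ![f s, g s, h s]) '' Set.uIcc a b, ?_, ?_, ⟨a, Set.left_mem_uIcc, rfl⟩,
    ⟨b, Set.right_mem_uIcc, rfl⟩⟩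
  · rintro _ ⟨s, hs, rfl⟩
    exact H s hs
  · apply Set.ordConnected_uIcc.isPreconnected.image
    apply Continuous.continuousOn
    fun_prop

lemma CC_z {m N : ℕ} {x y z z' : ℝ} (h : MM m N x y z) (h' : MM m N x y z') :
    CC m N ![x, y, z] ![x, y, z'] := by
  refine CC_path (f := fun _ => x) (g := fun _ => y) (h := fun s => s) (by fun_prop) (by fun_prop)
    (by fun_prop) fun s hs => MM_air ?_
  rcases Set.mem_uIcc.1 hs with hs | hs
  · exact MM_fiber h h' hs.1 hs.2
  · exact MM_fiber h' h hs.1 hs.2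

lemma CC_move {m N : ℕ} {f g : ℝ → ℝ} (hf : Continuous f) (hg : Continuous g) {a b : ℝ}
    (hab : a ≤ b) (H : ∀ s ∈ Set.Icc a b, Good m N (f s) (g s)) {z z' : ℝ}
    (h : MM m N (f a) (g a) z) (h' : MM m N (f b) (g b) z') :
    CC m N ![f a, g a, z] ![f b, g b, z'] := by
  let P : ℝ → ℝ → Prop := fun s t => ∀ z z', MM m N (f s) (g s) z → MM m N (f t) (g t) z' →
    CC m N ![f s, g s, z] ![f t, g t, z']
  have key : P a b := by
    refine isPreconnected_Icc.induction₂ (s := Set.Icc a b) P ?_ ?_ ?_ ⟨le_rfl, hab⟩ ⟨hab, le_rfl⟩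
    · intro s hs
      obtain ⟨z0, hz0⟩ := good_MM (H s hs)
      have hopen : IsOpen {t : ℝ | MM m N (f t) (g t) z0} := by
        have hc : Continuous (fun t : ℝ => (![f t, g t, z0] : Fin 3 → ℝ)) := by fun_prop
        exact (MM_open m N).preimage hc
      obtain ⟨δ, hδ, hball⟩ := Metric.isOpen_iff.1 hopen s hz0
      apply mem_nhdsWithin_of_mem_nhds
      filter_upwards [Metric.ball_mem_nhds s hδ] with t ht z z' hz hz'
      have hseg : ∀ u ∈ Set.uIcc s t, MM m N (f u) (g u) z0 := by
        intro u hu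
        apply hball
        rw [Metric.mem_ball, Real.dist_eq] at ht ⊢
        have := Set.abs_sub_left_of_mem_uIcc hu
        exact this.trans_lt ht
      refine ((CC_z hz hz0).trans ?_).trans (CC_z (hseg t Set.right_mem_uIcc) hz')
      exact CC_path (h := fun _ => z0) hf hg (by fun_prop) fun u hu => MM_air (hseg u hu)
    · intro s t u hs ht hu h1 h2 z z' hz hz'
      obtain ⟨z0, hz0⟩ := good_MM (H t ht)
      exact (h1 z z0 hz hz0).trans (h2 z0 z' hz0 hz')
    · intro s t hs ht h1 z z' hz hz'
      exact (h1 z' z hz' hz).symm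
  exact key z z' h h'

lemma div_le_one' {m i : ℕ} (hi : i < m) : (i : ℝ) / m ≤ 1 := by
  rw [div_le_one (by exact_mod_cast (by omega : 0 < m))]; exact_mod_cast hi.le

lemma air_of_z {m N : ℕ} {x y z : ℝ} (hz : z ≤ -310 ∨ 310 ≤ z) : air m N x y z := by
  refine ⟨fun i hi hA => ?_, fun j hj hB => ?_, fun k hk hC => ?_⟩
  · have := KK_bounds hA
    rcases hz with hz | hz <;> linarith
  · have := KK_bounds hB
    have r0 := rr_pos (N + j)
    have r1 := rr_le_one (N + j)
    have : rr (N + j) ^ 2 ≤ 1 := by nlinarith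
    have : 0 ≤ rr (N + j) ^ 2 := by positivity
    rcases hz with hz | hz <;> linarith
  · have := KK_bounds hC
    rcases hz with hz | hz <;> linarith

lemma air_of_x {m N : ℕ} {x y z : ℝ} (hx : 20 ≤ x) : air m N x y z := by
  refine ⟨fun i hi hA => ?_, fun j hj hB => ?_, fun k hk hC => ?_⟩
  · have := KK_bounds hA
    have := div_le_one' hi
    linarith
  · have := KK_bounds hB
    linarith
  · have := KK_bounds hC
    have := xw_neg (by omega : 0 < m) (show k + 1 ≤ m by omega)
    linarith

def base : Fin 3 → ℝ := ![100, 0, 0]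

lemma CC_far {m N : ℕ} {x y z : ℝ} (hz : z ≤ -310 ∨ 310 ≤ z) : CC m N ![x, y, z] base := by
  have h1 : CC m N ![x, y, z] ![100, y, z] :=
    CC_path (f := fun s => s) (g := fun _ => y) (h := fun _ => z) (by fun_prop) (by fun_prop)
      (by fun_prop) fun s _ => air_of_z hz
  have h2 : CC m N ![100, y, z] ![100, y, 0] :=
    CC_path (f := fun _ => 100) (g := fun _ => y) (h := fun s => s) (by fun_prop) (by fun_prop)
      (by fun_prop) fun s _ => air_of_x (by norm_num)
  have h3 : CC m N ![100, y, 0] ![100, 0, 0] :=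
    CC_path (f := fun _ => 100) (g := fun s => s) (h := fun _ => 0) (by fun_prop) (by fun_prop)
      (by fun_prop) fun s _ => air_of_x (by norm_num)
  exact (h1.trans h2).trans h3

lemma CC_high {m N : ℕ} {x y z : ℝ} (h : air m N x y z) (hz : 50 < z) : CC m N ![x, y, z] base := by
  have h1 : CC m N ![x, y, z] ![x, y, max z 310] := by
    refine CC_path (f := fun _ => x) (g := fun _ => y) (h := fun s => s) (by fun_prop) (by fun_prop)
      (by fun_prop) fun s hs => ?_
    rw [Set.uIcc_of_le (le_max_left _ _)] at hs
    have hs := hs.1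
    refine ⟨fun i hi hA => h.1 i hi ?_, fun j hj hB => h.2.1 j hj ?_, fun k hk hC => h.2.2 k hk ?_⟩
    · exact KK_down hA (by linarith) (by linarith)
    · exact KK_down hB (by linarith) (by nlinarith [sq_nonneg (rr (N + j))])
    · exact KK_down hC (by linarith) (by linarith)
  exact h1.trans (CC_far (Or.inr (le_max_right _ _)))

lemma CC_low {m N : ℕ} {x y z : ℝ} (h : air m N x y z) (hz : z < -50) : CC m N ![x, y, z] base := by
  have h1 : CC m N ![x, y, z] ![x, y, min z (-310)] := by
    refine CC_path (f := fun _ => x) (g := fun _ => y) (h := fun s => s) (by fun_prop) (by fun_prop)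
      (by fun_prop) fun s hs => ?_
    rw [Set.uIcc_of_ge (min_le_left _ _)] at hs
    have hs := hs.2
    refine ⟨fun i hi hA => h.1 i hi ?_, fun j hj hB => h.2.1 j hj ?_, fun k hk hC => h.2.2 k hk ?_⟩
    · exact KK_up hA (by linarith) (by linarith)
    · have r0 := rr_pos (N + j)
      have r1 := rr_le_one (N + j)
      exact KK_up hB (by linarith) (by nlinarith)
    · exact KK_up hC (by linarith) (by linarith)
  exact h1.trans (CC_far (Or.inl (min_le_right _ _)))

lemma CC_freeA {m N : ℕ} {x y z : ℝ} (h : MM m N x y z) (hf : ∀ i < m, ¬ shA ((i : ℝ) / m) x y) :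
    CC m N ![x, y, z] base := by
  have h1 : MM m N x y (min z (-310)) :=
    ⟨fun i hi hA => hf i hi hA.1, fun j hj hB => h.2.1 j hj ⟨hB.1, fun k => (hB.2 k).trans (min_le_left _ _)⟩, h.2.2⟩
  exact (CC_z h h1).trans (CC_far (Or.inl (min_le_right _ _)))

lemma CC_freeB {m N : ℕ} {x y z : ℝ} (h : MM m N x y z) (hf : ∀ j < m, ¬ shB (N + j) x y) :
    CC m N ![x, y, z] base := by
  have h1 : MM m N x y (max z 310) :=
    ⟨fun i hi hA => h.1 i hi ⟨hA.1, fun k => (le_max_left _ _).trans (hA.2 k)⟩, fun j hj hB => hf j hj hB.1, h.2.2⟩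
  exact (CC_z h h1).trans (CC_far (Or.inr (le_max_right _ _)))

lemma CC_right {m N : ℕ} {x x' y z z' : ℝ} (hxx : x ≤ x') (H : ∀ s ∈ Set.Icc x x', Good m N s y)
    (h : MM m N x y z) (h' : MM m N x' y z') : CC m N ![x, y, z] ![x', y, z'] :=
  CC_move (f := fun s => s) (g := fun _ => y) (by fun_prop) (by fun_prop) hxx H h h'

lemma CC_up {m N : ℕ} {x y y' z z' : ℝ} (hyy : y ≤ y') (H : ∀ s ∈ Set.Icc y y', Good m N x s)
    (h : MM m N x y z) (h' : MM m N x y' z') : CC m N ![x, y, z] ![x, y', z'] :=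
  CC_move (f := fun _ => x) (g := fun s => s) (by fun_prop) (by fun_prop) hyy H h h'

def Box (m N n k : ℕ) (x y z : ℝ) : Prop := Box2 m N n k x y ∧ -50 < z ∧ z < 50

/-- two points in the same box are connected -/
lemma CC_box {m N : ℕ} (hm : 0 < m) {n k : ℕ} (hn : n + 1 < m ^ 2) (hk : k < m)
    {x y z x' y' z' : ℝ} (hb : Box m N n k x y z) (ha : air m N x y z)
    (hb' : Box m N n k x' y' z') (ha' : air m N x' y' z') : CC m N ![x, y, z] ![x', y', z'] := by
  wlog hxx : x ≤ x' generalizing x y z x' y' z'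
  · exact (this hb' ha' hb ha (le_of_not_ge hxx)).symm
  obtain ⟨⟨b1, b2, b3, b4⟩, b5, b6⟩ := hb
  obtain ⟨⟨c1, c2, c3, c4⟩, c5, c6⟩ := hb'
  have hM := air_MM ha b5.le b6.le
  have hM' := air_MM ha' c5.le c6.le
  have hG := MM_good hm hM
  have hG' := MM_good hm hM'
  have hx1 : -1 ≤ x := (xw_ge hm k).trans b1.le
  have hx0 : x' < 0 := c2.trans (xw_neg hm hk)
  have hright : ∀ s ∈ Set.Icc x x', Good m N s y := fun s hs =>
    good_right hm hx1 b1.le hs.1 (fun _ => hs.2.trans_lt c2) hG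
  have hG2 := hright x' ⟨hxx, le_rfl⟩
  obtain ⟨z0, hz0⟩ := good_MM hG2
  obtain ⟨r1, r2⟩ := row_right hm hn hx1 hxx hx0.le hG b3 b4
  refine (CC_right hxx hright hM hz0).trans ?_
  rcases le_total y y' with h | h
  · exact CC_up h (fun s hs => good_vert hm (hx1.trans hxx) hx0.le c2 hG2 hG' r1 c4 hs.1 hs.2) hz0 hM'
  · exact (CC_up h (fun s hs => good_vert hm (hx1.trans hxx) hx0.le c2 hG' hG2 c3 r2 hs.1 hs.2) hM' hz0).symm

lemma CC_outer {m N : ℕ} (hm : 0 < m) (hN : 2 * rr N ≤ dl m / 2) {x y z : ℝ}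
    (ha : air m N x y z) (hb : ∀ n k, n + 1 < m ^ 2 → k < m → ¬ Box m N n k x y z) :
    CC m N ![x, y, z] base := by
  by_cases hz1 : 50 < z
  · exact CC_high ha hz1
  by_cases hz2 : z < -50
  · exact CC_low ha hz2
  push Not at hz1 hz2
  have hM := air_MM ha hz2 hz1
  have hG := MM_good hm hM
  have hd := dl_pos hm
  have hd' := dl_le hm
  by_cases hx1 : x < -1
  · exact CC_freeB hM fun j hj hB => by linarith [hB.1]
  by_cases hy0 : 0 < y
  · exact CC_freeA hM fun i hi hA => by linarith [hA.2.1]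
  push Not at hx1 hy0
  by_cases hxm : xw m m ≤ x
  · have hright : ∀ s, x ≤ s → Good m N s y := fun s hs =>
      good_right hm hx1 hxm hs (fun h => absurd h (lt_irrefl _)) hG
    obtain ⟨z0, hz0⟩ := good_MM (hright (max x 12) (le_max_left _ _))
    refine (CC_right (le_max_left _ _) (fun s hs => hright s hs.1) hM hz0).trans ?_
    refine CC_freeA hz0 fun i hi hA => ?_
    have := div_le_one' hi
    linarith [hA.2.2, le_max_right x 12]
  push Not at hxm
  obtain ⟨k, hk, hk1, hk2⟩ := exists_column hx1 hxm
  have hx0 : x < 0 := hxm.trans (xw_neg hm le_rfl)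
  by_cases hlow : y < vv m N 0 x
  · have hdn : ∀ s ≤ y, Good m N x s := fun s hs => good_down hm hx1 hx0.le hlow hs hG
    obtain ⟨z0, hz0⟩ := good_MM (hdn (min y (-20)) (min_le_left _ _))
    refine (CC_up (min_le_left _ _) (fun s hs => hdn s hs.2) hz0 hM).symm.trans ?_
    refine CC_freeA hz0 fun i hi hA => ?_
    have := div_le_one' hi
    linarith [hA.2.2, min_le_right y (-20)]
  by_cases hhigh : vv m N (m ^ 2 - 1) x < y
  · obtain ⟨x', hx'⟩ : ∃ x', x' = max x (xw m k + 3 * dl m / 4) := ⟨_, rfl⟩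
    have hxx : x ≤ x' := hx' ▸ le_max_left _ _
    have hxx2 : xw m k + 3 * dl m / 4 ≤ x' := hx' ▸ le_max_right _ _
    have hx'' : x' < xw m (k + 1) := by
      rw [hx', max_lt_iff]
      refine ⟨hk2, ?_⟩
      have := xw_step hm k
      linarith
    have hx0' : x' < 0 := hx''.trans (xw_neg hm hk)
    have hright : ∀ s ∈ Set.Icc x x', Good m N s y := fun s hs =>
      good_right hm hx1 hk1 hs.1 (fun _ => hs.2.trans_lt hx'') hG
    have hG2 := hright x' ⟨hxx, le_rfl⟩
    obtain ⟨z0, hz0⟩ := good_MM hG2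
    have hup : ∀ s ∈ Set.Icc y (dl m / 8), Good m N x' s := fun s hs =>
      good_up hm hN (hx1.trans hxx) hx0'.le hxx2 hx'' ((vv_anti m N _ hxx).trans_lt hhigh) hs.1 hs.2 hG2
    obtain ⟨z1, hz1⟩ := good_MM (hup (dl m / 8) ⟨by linarith, le_rfl⟩)
    refine ((CC_right hxx hright hM hz0).trans (CC_up (by linarith) hup hz0 hz1)).trans ?_
    exact CC_freeA hz1 fun i hi hA => by linarith [hA.2.1]
  push Not at hlow hhigh
  exfalso
  rcases Nat.eq_zero_or_pos (m ^ 2 - 1) with h0 | h0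
  · rw [h0] at hhigh
    have : y = vv m N 0 x := le_antisymm hhigh hlow
    apply hG.1 0 (by positivity)
    rw [this]
    exact RS_contact hm N 0 hx1 hx0.le
  · obtain ⟨n, hn, hn1, hn2⟩ := exists_row hlow _ hhigh h0
    have hyr : -rr N ≤ y := (vv_ge m N n hx0.le).trans hn1
    refine hb n k (by omega) hk ⟨closed_box hm (by omega) hk hG hk1 hk2.le hn1 hn2, ?_⟩
    exact MM_level hm hM hx1 hx0.le (by linarith [rr_le_one N]) hy0
end CV

namespace CV

lemma count_components {X β : Type*} [TopologicalSpace X] [TopologicalSpace β] [DiscreteTopology β]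
    (f : X → β) (hf : Continuous f) (hs : Function.Surjective f)
    (h : ∀ x y, f x = f y → connectedComponent x = connectedComponent y) :
    Nat.card (ConnectedComponents X) = Nat.card β := by
  refine Nat.card_congr (Equiv.ofBijective hf.connectedComponentsLift ⟨?_, ?_⟩)
  · intro a b hab
    obtain ⟨x, rfl⟩ := ConnectedComponents.surjective_coe a
    obtain ⟨y, rfl⟩ := ConnectedComponents.surjective_coe b
    rw [ConnectedComponents.coe_eq_coe]
    apply h
    simpa using hab
  · intro b
    obtain ⟨x, rfl⟩ := hs b
    exact ⟨x, by simp⟩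

lemma CC_component {m N : ℕ} {p q : Air m N} (h : CC m N p q) :
    connectedComponent p = connectedComponent q := by
  obtain ⟨s, h1, h2, h3, h4⟩ := h
  have hp : IsPreconnected ((↑) ⁻¹' s : Set (Air m N)) := by
    rw [← Topology.IsInducing.subtypeVal.isPreconnected_image]
    rwa [Subtype.image_preimage_coe, Set.inter_eq_right.2 h1]
  exact (connectedComponent_eq (hp.subset_connectedComponent (x := q) h4 h3)).symm

lemma vec_eta (p : Fin 3 → ℝ) : ![p 0, p 1, p 2] = p := by
  ext i; fin_cases i <;> rfl

def BoxS (m N n k : ℕ) : Set (Air m N) := {p | Box m N n k (p.1 0) (p.1 1) (p.1 2)}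

lemma BoxS_open (m N n k : ℕ) : IsOpen (BoxS m N n k) := by
  have c : ∀ i, Continuous (fun p : Air m N => p.1 i) := fun i =>
    (continuous_apply i).comp continuous_subtype_val
  have c1 := (vv_cont m N n).comp (c 0)
  have c2 := (vv_cont m N (n + 1)).comp (c 0)
  unfold BoxS Box Box2
  simp only [Set.ofPred_and]
  refine IsOpen.inter (IsOpen.inter ?_ (IsOpen.inter ?_ (IsOpen.inter ?_ ?_))) (IsOpen.inter ?_ ?_)
  · exact isOpen_lt continuous_const (c 0)
  · exact isOpen_lt (c 0) continuous_const
  · exact isOpen_lt c1 (c 1)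
  · exact isOpen_lt (c 1) c2
  · exact isOpen_lt continuous_const (c 2)
  · exact isOpen_lt (c 2) continuous_const

lemma BoxS_closed {m N : ℕ} (hm : 0 < m) {n k : ℕ} (hn : n + 1 < m ^ 2) (hk : k < m) :
    IsClosed (BoxS m N n k) := by
  have c : ∀ i, Continuous (fun p : Air m N => p.1 i) := fun i =>
    (continuous_apply i).comp continuous_subtype_val
  have c1 := (vv_cont m N n).comp (c 0)
  have c2 := (vv_cont m N (n + 1)).comp (c 0)
  have : BoxS m N n k = {p : Air m N | ((xw m k ≤ p.1 0 ∧ p.1 0 ≤ xw m (k + 1) ∧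
      vv m N n (p.1 0) ≤ p.1 1 ∧ p.1 1 ≤ vv m N (n + 1) (p.1 0)) ∧ -50 ≤ p.1 2 ∧ p.1 2 ≤ 50)} := by
    ext ⟨p, hp⟩
    constructor
    · rintro ⟨⟨a1, a2, a3, a4⟩, a5, a6⟩
      exact ⟨⟨a1.le, a2.le, a3.le, a4.le⟩, a5.le, a6.le⟩
    · rintro ⟨⟨a1, a2, a3, a4⟩, a5, a6⟩
      have hM := air_MM hp a5 a6
      have hx1 : -1 ≤ p 0 := (xw_ge hm k).trans a1
      have hx0 : p 0 < 0 := lt_of_le_of_lt a2 (xw_neg hm hk)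
      refine ⟨closed_box hm hn hk (MM_good hm hM) a1 a2 a3 a4, MM_level hm hM hx1 hx0.le ?_ ?_⟩
      · have := (vv_ge m N n hx0.le).trans a3
        linarith [rr_le_one N]
      · exact a4.trans (vv_neg hm N _ hx1).le
  rw [this]
  simp only [Set.ofPred_and]
  refine IsClosed.inter (IsClosed.inter ?_ (IsClosed.inter ?_ (IsClosed.inter ?_ ?_))) (IsClosed.inter ?_ ?_)
  · exact isClosed_le continuous_const (c 0)
  · exact isClosed_le (c 0) continuous_const
  · exact isClosed_le c1 (c 1)
  · exact isClosed_le (c 1) c2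
  · exact isClosed_le continuous_const (c 2)
  · exact isClosed_le (c 2) continuous_const

open Classical in
noncomputable def lab (m N : ℕ) (p : Air m N) : Option (Fin (m ^ 2 - 1) × Fin m) :=
  if h : ∃ c : Fin (m ^ 2 - 1) × Fin m, p ∈ BoxS m N c.1 c.2 then some h.choose else none

lemma lab_some {m N : ℕ} (hm : 0 < m) {p : Air m N} {c : Fin (m ^ 2 - 1) × Fin m} :
    lab m N p = some c ↔ p ∈ BoxS m N c.1 c.2 := by
  unfold lab
  constructor
  · intro h
    split_ifs at h with h1
    rw [Option.some.injEq] at h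
    rw [← h]; exact h1.choose_spec
  · intro h
    have h1 : ∃ c : Fin (m ^ 2 - 1) × Fin m, p ∈ BoxS m N c.1 c.2 := ⟨c, h⟩
    rw [dif_pos h1]
    have := box_unique hm h1.choose_spec.1 h.1
    rw [Option.some.injEq]
    exact Prod.ext (Fin.ext this.1) (Fin.ext this.2)

lemma lab_none {m N : ℕ} {p : Air m N} :
    lab m N p = none ↔ ∀ c : Fin (m ^ 2 - 1) × Fin m, p ∉ BoxS m N c.1 c.2 := by
  unfold lab
  split_ifs with h1
  · simp only [reduceCtorEq, false_iff]; push Not; exact h1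
  · push Not at h1; simpa using h1

lemma main_count {m N : ℕ} (hm : 0 < m) (hN : 2 * rr N ≤ dl m / 2) :
    Nat.card (ConnectedComponents (Air m N)) = m ^ 3 - m + 1 := by
  let _ : TopologicalSpace (Option (Fin (m ^ 2 - 1) × Fin m)) := ⊥
  have : DiscreteTopology (Option (Fin (m ^ 2 - 1) × Fin m)) := ⟨rfl⟩
  have hlt : ∀ n : Fin (m ^ 2 - 1), (n : ℕ) + 1 < m ^ 2 := fun n => by have := n.2; omega
  rw [count_components (lab m N)]
  · rw [Nat.card_eq_fintype_card, Fintype.card_option, Fintype.card_prod, Fintype.card_fin,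
      Fintype.card_fin, Nat.sub_mul, one_mul, ← pow_succ]
  · rw [continuous_discrete_rng]
    rintro (_ | c)
    · have : lab m N ⁻¹' {none} = (⋃ c : Fin (m ^ 2 - 1) × Fin m, BoxS m N c.1 c.2)ᶜ := by
        ext p
        simp only [Set.mem_preimage, Set.mem_singleton_iff, lab_none, Set.mem_compl_iff, Set.mem_iUnion, not_exists]
      rw [this, isOpen_compl_iff]
      exact isClosed_iUnion_of_finite fun c => BoxS_closed hm (hlt _) c.2.2
    · have : lab m N ⁻¹' {some c} = BoxS m N c.1 c.2 := by
        ext p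
        simp only [Set.mem_preimage, Set.mem_singleton_iff, lab_some hm]
      rw [this]
      exact BoxS_open _ _ _ _
  · rintro (_ | c)
    · refine ⟨⟨base, air_of_x (by norm_num [base])⟩, lab_none.2 ?_⟩
      rintro c ⟨⟨-, h, -⟩, -⟩
      have := xw_neg hm (show (c.2 : ℕ) + 1 ≤ m from c.2.2)
      have e : (base 0 : ℝ) = 100 := rfl
      simp only [e] at h
      linarith
    · obtain ⟨x, y, hb, hg, hy0, hy1⟩ := box_good_exists (n := c.1) hm hN c.2.2
      obtain ⟨z, hz⟩ := good_MM hg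
      refine ⟨⟨![x, y, z], MM_air hz⟩, (lab_some hm).2 ⟨hb, ?_⟩⟩
      exact MM_level hm hz ((xw_ge hm _).trans hb.1.le) (hb.2.1.trans (xw_neg hm c.2.2)).le hy1 hy0
  · rintro p q h
    rcases hl : lab m N p with _ | c
    · have hl' := h.symm.trans hl
      have key : ∀ p : Air m N, lab m N p = none → CC m N p base := by
        intro p hp
        rw [lab_none] at hp
        have := CC_outer hm hN p.2 fun n k hn hk => hp (⟨n, by omega⟩, ⟨k, hk⟩)
        rwa [vec_eta] at this
      exact CC_component ((key p hl).trans (key q hl').symm)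
    · have hl' := h.symm.trans hl
      rw [lab_some hm] at hl hl'
      apply CC_component
      have := CC_box hm (hlt _) c.2.2 hl p.2 hl' q.2
      rwa [vec_eta, vec_eta] at this

def KS : Set (Fin 3 → ℝ) := {p | KK (p 0) (p 1) (p 2)}

lemma KS_compact : IsCompact KS := by
  refine IsCompact.of_isClosed_subset (isCompact_Icc (a := ![-2, -12, -140]) (b := ![10, 0, 101])) KK_closed ?_
  intro p hp
  obtain ⟨h1, h2, h3, h4, h5, h6⟩ := KK_bounds hp
  constructor
  · intro i; fin_cases i <;> simpa
  · intro i; fin_cases i <;> simpa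

lemma KS_convex : Convex ℝ KS := by
  intro p hp q hq s t hs ht hst
  obtain ⟨a1, a2, a3, a4, a5⟩ := hp
  obtain ⟨b1, b2, b3, b4, b5⟩ := hq
  change KK (s * p 0 + t * q 0) (s * p 1 + t * q 1) (s * p 2 + t * q 2)
  obtain rfl : t = 1 - s := by linarith
  refine ⟨by nlinarith, by nlinarith, by nlinarith, fun k => ?_, fun k => ?_⟩
  · have h1 := mul_le_mul_of_nonneg_left (a4 k) hs
    have h2 := mul_le_mul_of_nonneg_left (b4 k) ht
    refine (add_le_add h1 h2).trans ?_
    have hk := rr_pos k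
    unfold ph
    have : |s * p 1 + (1 - s) * q 1 + rr k * (1 + (s * p 0 + (1 - s) * q 0) / 16)| ≤
        s * |p 1 + rr k * (1 + p 0 / 16)| + (1 - s) * |q 1 + rr k * (1 + q 0 / 16)| := by
      calc _ = |s * (p 1 + rr k * (1 + p 0 / 16)) + (1 - s) * (q 1 + rr k * (1 + q 0 / 16))| := by
            congr 1; ring
        _ ≤ _ := abs_add_le _ _
        _ = _ := by rw [abs_mul, abs_mul, abs_of_nonneg hs, abs_of_nonneg ht]
    have := mul_le_mul_of_nonneg_left this (show 0 ≤ rr k / 4 by linarith)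
    nlinarith
  · have h1 := mul_le_mul_of_nonneg_left (a5 k) hs
    have h2 := mul_le_mul_of_nonneg_left (b5 k) ht
    refine le_trans (le_of_eq ?_) (add_le_add h1 h2)
    unfold ps; ring

lemma KS_interior : (interior KS).Nonempty := by
  refine ⟨![0, -5, 0], ?_⟩
  rw [mem_interior_iff_mem_nhds, Metric.mem_nhds_iff]
  refine ⟨1, one_pos, fun p hp => ?_⟩
  rw [Metric.mem_ball, dist_pi_lt_iff one_pos] at hp
  have h0 := hp 0
  have h1 := hp 1
  have h2 := hp 2
  rw [Real.dist_eq, abs_lt] at h0 h1 h2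
  simp at h0 h1 h2
  have d1 : -2 ≤ p 0 := by linarith
  have d2 : p 1 ≤ 0 := by linarith
  have d3 : p 0 - p 1 ≤ 10 := by linarith
  exact ⟨d1, d2, d3, fun k => by linarith [(D_bounds d1 d2 d3 k).1],
    fun k => by linarith [(D_bounds d1 d2 d3 k).2.2.2]⟩

lemma mem_vadd_KS (t p : Fin 3 → ℝ) :
    p ∈ t +ᵥ KS ↔ KK (p 0 - t 0) (p 1 - t 1) (p 2 - t 2) := by
  rw [Set.mem_vadd_set_iff_neg_vadd_mem]
  change KK (-t 0 + p 0) (-t 1 + p 1) (-t 2 + p 2) ↔ _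
  rw [neg_add_eq_sub, neg_add_eq_sub, neg_add_eq_sub]

noncomputable def tt (m N i : ℕ) : Fin 3 → ℝ :=
  if i < m then ![(i : ℝ) / m, 0, -100]
  else if i < 2 * m then ![1, 7 - 6 * rr (N + (i - m)), 100 - 7 * rr (N + (i - m)) ^ 2]
  else ![2 + xw m (i - 2 * m + 1), 12 - 2 * rr N, 0]

lemma tt_A {m N i : ℕ} (hi : i < m) (p : Fin 3 → ℝ) :
    p ∈ tt m N i +ᵥ KS ↔ BA m i (p 0) (p 1) (p 2) := by
  rw [mem_vadd_KS]; unfold tt BA; rw [if_pos hi]; simp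

lemma tt_B {m N j : ℕ} (hj : j < m) (p : Fin 3 → ℝ) :
    p ∈ tt m N (m + j) +ᵥ KS ↔ BB N j (p 0) (p 1) (p 2) := by
  rw [mem_vadd_KS]; unfold tt BB; rw [if_neg (by omega), if_pos (by omega)]; simp

lemma tt_C {m N k : ℕ} (p : Fin 3 → ℝ) :
    p ∈ tt m N (2 * m + k) +ᵥ KS ↔ BC m N k (p 0) (p 1) (p 2) := by
  rw [mem_vadd_KS]; unfold tt BC
  by_cases hm : m = 0
  · subst hm; simp
  · rw [if_neg (by omega), if_neg (by omega)]; simp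

lemma union_compl {m N : ℕ} : (⋃ i : Fin (3 * m), tt m N i +ᵥ KS)ᶜ = Air m N := by
  ext p
  rw [Set.mem_compl_iff, Set.mem_iUnion, not_exists]
  constructor
  · intro h
    refine ⟨fun i hi hA => ?_, fun j hj hB => ?_, fun k hk hC => ?_⟩
    · exact h ⟨i, by omega⟩ ((tt_A hi p).2 hA)
    · exact h ⟨m + j, by omega⟩ ((tt_B hj p).2 hB)
    · exact h ⟨2 * m + k, by omega⟩ ((tt_C p).2 hC)
  · rintro ⟨h1, h2, h3⟩ ⟨i, hi⟩ hp
    simp only at hp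
    rcases Nat.lt_or_ge i m with h | h
    · exact h1 i h ((tt_A h p).1 hp)
    · rcases Nat.lt_or_ge i (2 * m) with h' | h'
      · obtain ⟨j, rfl⟩ := Nat.exists_eq_add_of_le h
        exact h2 j (by omega) ((tt_B (by omega) p).1 hp)
      · obtain ⟨k, rfl⟩ := Nat.exists_eq_add_of_le h'
        exact h3 k (by omega) ((tt_C p).1 hp)

lemma exists_N {m : ℕ} (hm : 0 < m) : ∃ N, 2 * rr N ≤ dl m / 2 := by
  have hd := dl_pos hm
  obtain ⟨N, hN⟩ := exists_pow_lt_of_lt_one (show 0 < dl m / 4 by linarith)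
    (show (1 / 2 : ℝ) < 1 by norm_num)
  exact ⟨N, by unfold rr; linarith⟩
end CV

/-- **Theorem 1 (lower bound part).** There exists a compact convex body `K ⊆ ℝ³`
(compact, convex, with nonempty interior) such that for every positive integer `m`
there are `3m` translation vectors for which the complement of the union of the
translates has exactly `m³ − m + 1` connected components. -/
theorem cubic_voids :
    ∃ K : Set (Fin 3 → ℝ),
      IsCompact K ∧ Convex ℝ K ∧ (interior K).Nonempty ∧
      ∀ m : ℕ, 0 < m →
        ∃ t : Fin (3 * m) → (Fin 3 → ℝ),
          Nat.card (ConnectedComponents ↥((⋃ i, t i +ᵥ K)ᶜ)) = m ^ 3 - m + 1 := by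
  refine ⟨CV.KS, CV.KS_compact, CV.KS_convex, CV.KS_interior, fun m hm => ?_⟩
  obtain ⟨N, hN⟩ := CV.exists_N hm
  refine ⟨fun i => CV.tt m N i, ?_⟩
  rw [CV.union_compl]
  exact CV.main_count hm hN
end

section
/- For every integer d ≥ 1, every integer n ≥ 1, and every family X₁, …, Xₙ of compact convex subsets of ℝ^d, the number of connected components of ℝ^d ∖ (X₁ ∪ ⋯ ∪ Xₙ) is at most C(n, d) + 1, where C(n, d) is the binomial coefficient 'n choose d'. -/
namespace HolesAux

open Set Module

variable {E : Type*} [AddCommGroup E] [Module ℝ E]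

/-- A functional outside the span of finitely many functionals is detected by a common zero. -/
lemma exists_of_notMem_span {S : Type*} [Finite S] (b : S → Dual ℝ E) (A : Set S) (f : Dual ℝ E)
    (h : f ∉ Submodule.span ℝ (b '' A)) : ∃ w, (∀ s ∈ A, b s w = 0) ∧ 0 < f w := by
  have h1 : ∃ w, (∀ s ∈ A, b s w = 0) ∧ f w ≠ 0 := by
    by_contra hc
    push Not at hc
    apply h
    have := mem_span_of_iInf_ker_le_ker (L := fun s : A => b s) (K := f) (by
      intro x hx
      simp only [Submodule.mem_iInf, LinearMap.mem_ker] at hx ⊢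
      exact hc x fun s hs => hx ⟨s, hs⟩)
    rwa [image_eq_range]
  obtain ⟨w, hw, hf⟩ := h1
  rcases lt_or_gt_of_ne hf with h2 | h2
  · exact ⟨-w, fun s hs => by simp [hw s hs], by simpa using h2⟩
  · exact ⟨w, hw, h2⟩

/-- The linear algebra at a lowest point of a hole. -/
lemma cone_lemma [FiniteDimensional ℝ E] {S : Type*} [Finite S] (b : S → Dual ℝ E)
    (f : Dual ℝ E)
    (G2 : ∀ A : Set S, f ∈ Submodule.span ℝ (b '' A) → Submodule.span ℝ (b '' A) = ⊤)
    (T : Finset S) (hT : LinearIndepOn ℝ b (T : Set S)) (q : E) (hq : ∀ s ∈ T, 0 < b s q)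
    (hf : ∀ x, (∀ s ∈ T, 0 < b s x) → 0 ≤ f x) :
    T.card = finrank ℝ E ∧ Submodule.span ℝ (b '' T) = ⊤ ∧
      ∃ l : S → ℝ, (∀ s ∈ T, 0 < l s) ∧ f = ∑ s ∈ T, l s • b s := by
  classical
  have hmem : f ∈ Submodule.span ℝ (b '' T) := by
    by_contra hc
    obtain ⟨w, hw, hfw⟩ := exists_of_notMem_span b T f hc
    have := hf (q - ((f q + 1) / f w) • w) (fun s hs => by
      simp [hw s hs, hq s hs])
    simp only [map_sub, map_smul, smul_eq_mul] at this
    rw [div_mul_cancel₀ _ hfw.ne'] at this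
    linarith
  have htop := G2 _ hmem
  refine ⟨?_, htop, ?_⟩
  · have h1 := finrank_span_eq_card hT
    have h2 : range (fun x : (T : Set S) => b x) = b '' T := (image_eq_range _ _).symm
    rw [h2, htop, finrank_top, Subspace.dual_finrank_eq] at h1
    simpa using h1.symm
  · obtain ⟨l, hl⟩ := (Submodule.mem_span_image_finset_iff_exists_fun' ℝ).1 hmem
    refine ⟨l, fun s hs => ?_, hl.symm⟩
    have hsT := (linearIndepOn_iff_notMem_span.1 hT) s hs
    by_contra hneg
    push Not at hneg
    rcases hneg.lt_or_eq with h | h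
    · obtain ⟨u, hu, hsu⟩ := exists_of_notMem_span b _ _ hsT
      have hfu : f u = l s * b s u := by
        rw [← hl, LinearMap.sum_apply, Finset.sum_eq_single_of_mem s hs]
        · simp
        · intro t ht hts
          simp [hu t ⟨ht, hts⟩]
      have hfu0 : f u < 0 := by rw [hfu]; exact mul_neg_of_neg_of_pos h hsu
      have hq0 := hf q hq
      have := hf (q + ((f q + 1) / (- f u)) • u) (fun t ht => by
        by_cases hts : t = s
        · subst hts
          have : 0 ≤ (f q + 1) / (- f u) := div_nonneg (by linarith) (by linarith)
          simp only [map_add, map_smul, smul_eq_mul]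
          have := hq t ht
          positivity
        · simp [hu t ⟨ht, hts⟩, hq t ht])
      simp only [map_add, map_smul, smul_eq_mul] at this
      rw [div_neg, neg_mul, div_mul_cancel₀ _ hfu0.ne] at this
      linarith
    · apply hsT
      have hm : f ∈ Submodule.span ℝ (b '' ((T : Set S) \ {s})) := by
        rw [← hl]
        refine Submodule.sum_mem _ fun t ht => ?_
        by_cases hts : t = s
        · subst hts; rw [h]; simp
        · exact Submodule.smul_mem _ _ (Submodule.subset_span ⟨t, ⟨ht, hts⟩, rfl⟩)
      rw [G2 _ hm]
      trivial

/-- Generic functional. -/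
lemma exists_generic_functional {S : Type*} [Finite S] {V : Type*} [AddCommGroup V] [Module ℝ V]
    (b : S → V) :
    ∃ f : V, ∀ A : Set S, f ∈ Submodule.span ℝ (b '' A) → Submodule.span ℝ (b '' A) = ⊤ := by
  by_contra hc
  push Not at hc
  have := Subspace.exists_eq_top_of_iUnion_eq_univ (k := ℝ) (E := V)
    (ι := {A : Set S // Submodule.span ℝ (b '' A) ≠ ⊤})
    (p := fun A => Submodule.span ℝ (b '' A.1)) (by
      rw [eq_univ_iff_forall]
      intro f
      obtain ⟨A, h1, h2⟩ := hc f
      exact mem_iUnion.2 ⟨⟨A, h2⟩, h1⟩)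
  obtain ⟨A, hA⟩ := this
  exact A.2 hA

/-- Generic right-hand sides. -/
lemma exists_generic_rhs {S : Type*} [Fintype S] (b : S → Dual ℝ E) (lo hi : S → ℝ)
    (h : ∀ s, lo s < hi s) :
    ∃ c : S → ℝ, (∀ s, lo s < c s ∧ c s < hi s) ∧
      ∀ v : E, LinearIndepOn ℝ b {s | b s v = c s} := by
  classical
  have key : ∀ A : {A : Set S // ¬ LinearIndepOn ℝ b A}, ∃ l : S → ℝ, l ≠ 0 ∧
      (∀ s, s ∉ A.1 → l s = 0) ∧ ∑ s, l s • b s = 0 := by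
    rintro ⟨A, hA⟩
    rw [linearIndepOn_iff'] at hA
    push Not at hA
    obtain ⟨t, g, ht, hg, i, hi, hgi⟩ := hA
    refine ⟨fun s => if s ∈ t then g s else 0, ?_, ?_, ?_⟩
    · intro h0
      have := congrFun h0 i
      simp [hi] at this
      exact hgi this
    · intro s hs
      have : s ∉ t := fun h => hs (ht h)
      simp [this]
    · simpa [ite_smul, Finset.sum_ite_mem] using hg
  choose l hl0 hlA hlsum using key
  let L : {A : Set S // ¬ LinearIndepOn ℝ b A} → ((S → ℝ) →ₗ[ℝ] ℝ) := fun A =>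
    ∑ s, l A s • LinearMap.proj s
  have hLc : ∀ A c, L A c = ∑ s, l A s * c s := by
    intro A c
    simp [L, LinearMap.sum_apply]
  have hopen : ∀ A, IsOpen {c | L A c ≠ 0} := fun A =>
    isOpen_ne.preimage (LinearMap.continuous_of_finiteDimensional (L A))
  have hdense : ∀ A, Dense {c | L A c ≠ 0} := by
    intro A
    have : {c | L A c ≠ 0} = ((LinearMap.ker (L A) : Submodule ℝ (S → ℝ)) : Set (S → ℝ))ᶜ := by
      ext c; simp
    rw [this, ← interior_eq_empty_iff_dense_compl]
    by_contra hne
    have htop := Submodule.eq_top_of_nonempty_interior' _ (nonempty_iff_ne_empty.2 hne)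
    apply hl0 A
    ext s
    have h1 : (Pi.single s 1 : S → ℝ) ∈ LinearMap.ker (L A) := htop ▸ trivial
    rw [LinearMap.mem_ker, hLc] at h1
    simpa [Pi.single_apply] using h1
  have hD := dense_iInter_of_isOpen hopen hdense
  have hO : IsOpen (Set.pi univ fun s => Ioo (lo s) (hi s)) :=
    isOpen_set_pi finite_univ fun s _ => isOpen_Ioo
  have hN : (Set.pi univ fun s => Ioo (lo s) (hi s)).Nonempty :=
    ⟨fun s => (lo s + hi s) / 2, fun s _ => ⟨by linarith [h s], by linarith [h s]⟩⟩
  obtain ⟨c, hc1, hc2⟩ := hD.inter_open_nonempty _ hO hN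
  refine ⟨c, fun s => hc1 s trivial, fun v => ?_⟩
  by_contra hv
  have h3 := mem_iInter.1 hc2 ⟨_, hv⟩
  apply h3
  rw [hLc]
  have h4 := congrArg (fun g : Dual ℝ E => g v) (hlsum ⟨_, hv⟩)
  simp only [LinearMap.sum_apply, LinearMap.smul_apply, LinearMap.zero_apply, smul_eq_mul] at h4
  rw [← h4]
  refine Finset.sum_congr rfl fun s _ => ?_
  by_cases hs : b s v = c s
  · rw [hs]
  · rw [hlA ⟨_, hv⟩ s hs]; simp


/-- Complement of the union of the polyhedra given by the constraints. -/
def compl {n : ℕ} {K : Type*} (b : Fin n × K → Dual ℝ E) (c : Fin n × K → ℝ) : Set E :=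
  {x | ∀ i, ∃ k, c (i, k) < b (i, k) x}

open Classical in
/-- Indices of the polyhedra which contain `v`. -/
noncomputable def idx {n : ℕ} {K : Type*} (b : Fin n × K → Dual ℝ E) (c : Fin n × K → ℝ) (v : E) :
    Finset (Fin n) :=
  Finset.univ.filter fun i => ∀ k, b (i, k) v ≤ c (i, k)

lemma mem_idx {n : ℕ} {K : Type*} {b : Fin n × K → Dual ℝ E} {c : Fin n × K → ℝ} {v : E}
    {i : Fin n} : i ∈ idx b c v ↔ ∀ k, b (i, k) v ≤ c (i, k) := by
  simp [idx]

/-- The local structure of a hole near a lowest point. -/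
lemma hole_data {F : Type*} [NormedAddCommGroup F] [NormedSpace ℝ F] [FiniteDimensional ℝ F]
    {n : ℕ} {K : Type*} [Finite K] (b : Fin n × K → Dual ℝ F) (c : Fin n × K → ℝ)
    (f : Dual ℝ F)
    (G1 : ∀ v : F, LinearIndepOn ℝ b {s | b s v = c s})
    (G2 : ∀ A : Set (Fin n × K),
      f ∈ Submodule.span ℝ (b '' A) → Submodule.span ℝ (b '' A) = ⊤)
    (C : Set F) (hCU : C ⊆ compl b c)
    (hC : ∀ W : Set F, Convex ℝ W → W ⊆ compl b c → (W ∩ C).Nonempty → W ⊆ C)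
    (v : F) (hv : v ∈ closure C) (hmin : ∀ x ∈ C, f v ≤ f x) :
    (idx b c v).card = finrank ℝ F ∧ ∃ (T : Finset (Fin n × K)) (l : Fin n × K → ℝ),
      (∀ s, s ∈ T ↔ b s v = c s ∧ s.1 ∈ idx b c v) ∧ Submodule.span ℝ (b '' T) = ⊤ ∧
      (∀ s ∈ T, 0 < l s) ∧ f = ∑ s ∈ T, l s • b s ∧
      ∃ q : F, (∀ s ∈ T, 0 < b s q) ∧ ∃ r : ℝ, 0 < r ∧ 
        ∀ x ∈ Metric.ball v r, (∀ s ∈ T, 0 < b s (x - v)) → x ∈ C := by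
  classical
  have hcont : ∀ s, Continuous (b s) := fun s => LinearMap.continuous_of_finiteDimensional (b s)
  obtain ⟨r, hr, hball⟩ : ∃ r > 0, ∀ x ∈ Metric.ball v r, ∀ s,
      (b s v < c s → b s x < c s) ∧ (c s < b s v → c s < b s x) := by
    have : ∀ᶠ x in nhds v, ∀ s, (b s v < c s → b s x < c s) ∧ (c s < b s v → c s < b s x) := by
      rw [Filter.eventually_all]
      intro s
      rw [Filter.eventually_and]
      constructor
      · by_cases h : b s v < c s
        · filter_upwards [(hcont s).continuousAt.eventually_lt_const h] with x hx _ using hx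
        · exact Filter.Eventually.of_forall fun x hx => absurd hx h
      · by_cases h : c s < b s v
        · filter_upwards [(hcont s).continuousAt.eventually_const_lt h] with x hx _ using hx
        · exact Filter.Eventually.of_forall fun x hx => absurd hx h
    exact Metric.eventually_nhds_iff_ball.1 this
  obtain ⟨p, hpC, hpr⟩ := Metric.mem_closure_iff.1 hv r hr
  have hpb : p ∈ Metric.ball v r := by rwa [Metric.mem_ball, dist_comm]
  have hk := hCU hpC
  choose k hk using hk
  set I := idx b c v with hI
  have hact : ∀ i ∈ I, b (i, k i) v = c (i, k i) := by
    intro i hi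
    refine le_antisymm (mem_idx.1 hi _) ?_
    by_contra hlt
    exact lt_asymm ((hball p hpb _).1 (not_le.1 hlt)) (hk i)
  let T : Finset (Fin n × K) := I.image fun i => (i, k i)
  have hTact : (T : Set (Fin n × K)) ⊆ {s | b s v = c s} := by
    intro s hs
    obtain ⟨i, hi, rfl⟩ := Finset.mem_image.1 hs
    exact hact i hi
  have hTfst : ∀ s ∈ T, s.1 ∈ I := by
    intro s hs
    obtain ⟨i, hi, rfl⟩ := Finset.mem_image.1 hs
    exact hi
  have hTq : ∀ s ∈ T, 0 < b s (p - v) := by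
    intro s hs
    obtain ⟨i, hi, rfl⟩ := Finset.mem_image.1 hs
    rw [map_sub, hact i hi, sub_pos]
    exact hk i
  let W : Set F := Metric.ball v r ∩ {x | ∀ s ∈ T, 0 < b s (x - v)}
  have hWconv : Convex ℝ W := by
    refine (convex_ball v r).inter ?_
    intro x hx y hy α β hα hβ hαβ s hs
    have h1 := hx s hs
    have h2 := hy s hs
    have h3 : α • x + β • y - v = α • (x - v) + β • (y - v) := by
      have : v = (α + β) • v := by rw [hαβ, one_smul]
      nth_rewrite 1 [this]
      module
    rw [h3, map_add, map_smul, map_smul, smul_eq_mul, smul_eq_mul]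
    rcases hα.eq_or_lt with h | h
    · subst h
      have : β = 1 := by linarith
      subst this
      simpa using h2
    · have := mul_pos h h1
      have := mul_nonneg hβ h2.le
      linarith
  have hWU : W ⊆ compl b c := by
    rintro x ⟨hxb, hx⟩ i
    by_cases hi : i ∈ I
    · refine ⟨k i, ?_⟩
      have := hx (i, k i) (Finset.mem_image.2 ⟨i, hi, rfl⟩)
      rw [map_sub, hact i hi] at this
      linarith
    · rw [hI, mem_idx] at hi
      push Not at hi
      obtain ⟨k', hk'⟩ := hi
      exact ⟨k', (hball x hxb _).2 hk'⟩
  have hWC : W ⊆ C := hC W hWconv hWU ⟨p, ⟨hpb, hTq⟩, hpC⟩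
  have hfpos : ∀ x, (∀ s ∈ T, 0 < b s x) → 0 ≤ f x := by
    intro x hx
    obtain ⟨t, ht, htr⟩ : ∃ t : ℝ, 0 < t ∧ t * ‖x‖ < r := by
      refine ⟨r / (‖x‖ + 1), by positivity, ?_⟩
      rw [div_mul_eq_mul_div, div_lt_iff₀ (by positivity)]
      nlinarith [norm_nonneg x]
    have hm : v + t • x ∈ W := by
      refine ⟨?_, fun s hs => ?_⟩
      · rw [Metric.mem_ball, dist_eq_norm, add_sub_cancel_left, norm_smul, Real.norm_of_nonneg ht.le]
        exact htr
      · rw [add_sub_cancel_left, map_smul, smul_eq_mul]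
        exact mul_pos ht (hx s hs)
    have h1 := hmin _ (hWC hm)
    rw [map_add, map_smul, smul_eq_mul] at h1
    by_contra hneg
    nlinarith [mul_neg_of_pos_of_neg ht (not_le.1 hneg)]
  obtain ⟨hcard, htop, l, hl, hfl⟩ :=
    cone_lemma b f G2 T ((G1 v).mono hTact) (p - v) hTq hfpos
  refine ⟨?_, T, l, ?_, htop, hl, hfl, p - v, hTq, r, hr, fun x hx hx' => hWC ⟨hx, hx'⟩⟩
  · rw [← hcard, Finset.card_image_of_injective]
    intro i j hij
    exact congrArg Prod.fst hij
  · intro s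
    refine ⟨fun hs => ⟨hTact hs, hTfst s hs⟩, fun ⟨hs, _⟩ => ?_⟩
    by_contra hsT
    apply linearIndepOn_iff_notMem_span.1 (G1 v) s hs
    have : Submodule.span ℝ (b '' T) ≤ Submodule.span ℝ (b '' ({s | b s v = c s} \ {s})) := by
      apply Submodule.span_mono
      apply image_mono
      intro t ht
      refine ⟨hTact ht, ?_⟩
      rintro rfl
      exact hsT ht
    rw [htop] at this
    exact this trivial

lemma eq_zero_of_span {F : Type*} [AddCommGroup F] [Module ℝ F] [FiniteDimensional ℝ F]
    {S : Type*} (b : S → Dual ℝ F) (T : Set S) (h : Submodule.span ℝ (b '' T) = ⊤) (x : F)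
    (hx : ∀ s ∈ T, b s x = 0) : x = 0 := by
  rw [← Module.forall_dual_apply_eq_zero_iff ℝ]
  intro g
  have hg : g ∈ Submodule.span ℝ (b '' T) := h ▸ trivial
  induction hg using Submodule.span_induction with
  | mem y hy => obtain ⟨s, hs, rfl⟩ := hy; exact hx s hs
  | zero => simp
  | add y z _ _ h1 h2 => simp [h1, h2]
  | smul a y _ h1 => simp [h1]

/-- Holes with the same index set at their lowest points meet. -/
lemma holes_meet {F : Type*} [NormedAddCommGroup F] [NormedSpace ℝ F] [FiniteDimensional ℝ F]
    {n : ℕ} {K : Type*} [Finite K] (b : Fin n × K → Dual ℝ F) (c : Fin n × K → ℝ)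
    (f : Dual ℝ F)
    (G1 : ∀ v : F, LinearIndepOn ℝ b {s | b s v = c s})
    (G2 : ∀ A : Set (Fin n × K),
      f ∈ Submodule.span ℝ (b '' A) → Submodule.span ℝ (b '' A) = ⊤)
    (C C' : Set F) (hCU : C ⊆ compl b c) (hCU' : C' ⊆ compl b c)
    (hC : ∀ W : Set F, Convex ℝ W → W ⊆ compl b c → (W ∩ C).Nonempty → W ⊆ C)
    (hC' : ∀ W : Set F, Convex ℝ W → W ⊆ compl b c → (W ∩ C').Nonempty → W ⊆ C')
    (v v' : F) (hv : v ∈ closure C) (hmin : ∀ x ∈ C, f v ≤ f x)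
    (hv' : v' ∈ closure C') (hmin' : ∀ x ∈ C', f v' ≤ f x)
    (hI : idx b c v = idx b c v') : (C ∩ C').Nonempty := by
  obtain ⟨-, T, l, hT, htop, hl, hfl, q, hq, r, hr, hx⟩ :=
    hole_data b c f G1 G2 C hCU hC v hv hmin
  obtain ⟨-, T', l', hT', htop', hl', hfl', q', hq', r', hr', hx'⟩ :=
    hole_data b c f G1 G2 C' hCU' hC' v' hv' hmin'
  have hterm : ∀ s ∈ T, l s * b s (v' - v) ≤ 0 := by
    intro s hs
    obtain ⟨h1, h2⟩ := (hT s).1 hs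
    rw [hI] at h2
    have h3 := mem_idx.1 h2 s.2
    refine mul_nonpos_of_nonneg_of_nonpos (hl s hs).le ?_
    rw [map_sub, h1]
    linarith
  have hterm' : ∀ s ∈ T', l' s * b s (v - v') ≤ 0 := by
    intro s hs
    obtain ⟨h1, h2⟩ := (hT' s).1 hs
    rw [← hI] at h2
    have h3 := mem_idx.1 h2 s.2
    refine mul_nonpos_of_nonneg_of_nonpos (hl' s hs).le ?_
    rw [map_sub, h1]
    linarith
  have e1 : f (v' - v) = ∑ s ∈ T, l s * b s (v' - v) := by
    conv_lhs => rw [hfl]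
    simp only [LinearMap.sum_apply, LinearMap.smul_apply, smul_eq_mul]
  have e2 : f (v - v') = ∑ s ∈ T', l' s * b s (v - v') := by
    conv_lhs => rw [hfl']
    simp only [LinearMap.sum_apply, LinearMap.smul_apply, smul_eq_mul]
  have h1 : f (v' - v) ≤ 0 := e1 ▸ Finset.sum_nonpos hterm
  have h2 : f (v - v') ≤ 0 := e2 ▸ Finset.sum_nonpos hterm'
  have h0 : ∑ s ∈ T, l s * b s (v' - v) = 0 := by
    rw [← e1]
    rw [map_sub] at h1 h2 ⊢
    linarith
  have hvv : v' - v = 0 := by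
    refine eq_zero_of_span b T htop _ fun s hs => ?_
    have := (Finset.sum_eq_zero_iff_of_nonpos hterm).1 h0 s hs
    exact (mul_eq_zero.1 this).resolve_left (hl s hs).ne'
  obtain rfl : v' = v := sub_eq_zero.1 hvv
  have hTT : T = T' := by
    ext s; rw [hT, hT']
  subst hTT
  obtain ⟨t, ht, htr⟩ : ∃ t : ℝ, 0 < t ∧ t * ‖q‖ < min r r' := by
    have : 0 < min r r' := lt_min hr hr'
    refine ⟨min r r' / (‖q‖ + 1), by positivity, ?_⟩
    rw [div_mul_eq_mul_div, div_lt_iff₀ (by positivity)]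
    nlinarith [norm_nonneg q]
  have hm : ∀ s ∈ T, 0 < b s (v' + t • q - v') := fun s hs => by
    rw [add_sub_cancel_left, map_smul, smul_eq_mul]
    exact mul_pos ht (hq s hs)
  have hd : dist (v' + t • q) v' < min r r' := by
    rwa [dist_eq_norm, add_sub_cancel_left, norm_smul, Real.norm_of_nonneg ht.le]
  exact ⟨v' + t • q, hx _ (hd.trans_le (min_le_left _ _)) hm,
    hx' _ (hd.trans_le (min_le_right _ _)) hm⟩

/-- A hole on which `f` is bounded below has a lowest point in its closure. -/
lemma exists_lowest {d : ℕ} (hd : 1 ≤ d) (U C : Set (Fin d → ℝ)) (f : Dual ℝ (Fin d → ℝ))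
    (hC : ∀ W : Set (Fin d → ℝ), Convex ℝ W → W ⊆ U → (W ∩ C).Nonempty → W ⊆ C)
    (hne : C.Nonempty) (R : ℝ) (hR : ∀ x : Fin d → ℝ, (∃ j, R < |x j|) → x ∈ U)
    (hf0 : f ≠ 0) (hf2 : 2 ≤ d → ∀ j : Fin d, ∃ w : Fin d → ℝ, w j = 0 ∧ 0 < f w)
    (m : ℝ) (hm : ∀ x ∈ C, m ≤ f x) : ∃ v ∈ closure C, ∀ x ∈ C, f v ≤ f x := by
  have hfc : Continuous f := LinearMap.continuous_of_finiteDimensional f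
  obtain ⟨x0, hx0⟩ := hne
  rcases hd.eq_or_lt with h1 | h2
  · subst h1
    have hex : ∀ x : Fin 1 → ℝ, f x = x 0 * f 1 := by
      intro x
      have : x = x 0 • (1 : Fin 1 → ℝ) := by
        ext i
        have : i = 0 := Subsingleton.elim _ _
        subst this
        simp
      conv_lhs => rw [this]
      simp
    have hf1 : f 1 ≠ 0 := by
      intro h
      apply hf0
      refine LinearMap.ext fun x => ?_
      rw [hex, h, mul_zero, LinearMap.zero_apply]
    have hker : LinearMap.ker f = ⊥ := by
      rw [LinearMap.ker_eq_bot']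
      intro x hx
      rw [hex] at hx
      ext i
      have : i = 0 := Subsingleton.elim _ _
      subst this
      simpa [hf1] using hx
    have hK : IsCompact (f ⁻¹' Icc m (f x0)) :=
      (LinearMap.isClosedEmbedding_of_injective hker).isCompact_preimage isCompact_Icc
    obtain ⟨v, hv, hvm⟩ := (hK.inter_left (isClosed_closure (s := C))).exists_isMinOn
      ⟨x0, subset_closure hx0, hm x0 hx0, le_rfl⟩ hfc.continuousOn
    refine ⟨v, hv.1, fun x hx => ?_⟩
    by_cases hxx : f x ≤ f x0
    · exact hvm ⟨subset_closure hx, hm x hx, hxx⟩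
    · exact hv.2.2.trans (not_le.1 hxx).le
  · have hsub : C ⊆ Set.pi univ fun _ => Icc (-R) R := by
      intro x hx j _
      by_contra hxj
      have hxj' : R < |x j| := by
        by_contra h
        exact hxj (abs_le.1 (not_lt.1 h))
      obtain ⟨w, hwj, hfw⟩ := hf2 h2 j
      let W : Set (Fin d → ℝ) := range fun t : ℝ => x + t • w
      have hW : Convex ℝ W := by
        rintro _ ⟨s, rfl⟩ _ ⟨t, rfl⟩ α β hα hβ hαβ
        refine ⟨α * s + β * t, ?_⟩
        have : x = (α + β) • x := by rw [hαβ, one_smul]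
        show x + _ = _
        nth_rewrite 1 [this]
        module
      have hWU : W ⊆ U := by
        rintro _ ⟨t, rfl⟩
        exact hR _ ⟨j, by simpa [hwj] using hxj'⟩
      have hWC := hC W hW hWU ⟨x, ⟨0, by simp⟩, hx⟩
      have := hm _ (hWC ⟨(m - 1 - f x) / f w, rfl⟩)
      simp only [map_add, map_smul, smul_eq_mul] at this
      rw [div_mul_cancel₀ _ hfw.ne'] at this
      linarith
    have hK : IsCompact (Set.pi univ fun _ : Fin d => Icc (-R) R) :=
      isCompact_univ_pi fun _ => isCompact_Icc
    have hKC : IsCompact (closure C) :=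
      hK.of_isClosed_subset isClosed_closure (closure_minimal hsub hK.isClosed)
    obtain ⟨v, hv, hvm⟩ := hKC.exists_isMinOn ⟨x0, subset_closure hx0⟩ hfc.continuousOn
    exact ⟨v, hv, fun x hx => hvm (subset_closure hx)⟩

/-- Counting lemma for generic bounded polyhedra. -/
lemma count {d n N : ℕ} (hd : 1 ≤ d) {K : Type*} [Finite K]
    (b : Fin n × K → Dual ℝ (Fin d → ℝ)) (c : Fin n × K → ℝ) (f : Dual ℝ (Fin d → ℝ))
    (G1 : ∀ v : Fin d → ℝ, LinearIndepOn ℝ b {s | b s v = c s})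
    (G2 : ∀ A : Set (Fin n × K),
      f ∈ Submodule.span ℝ (b '' A) → Submodule.span ℝ (b '' A) = ⊤)
    (R : ℝ) (hR : ∀ x : Fin d → ℝ, (∃ j, R < |x j|) → x ∈ compl b c)
    (hf2 : 2 ≤ d → ∀ j : Fin d, ∃ w : Fin d → ℝ, w j = 0 ∧ 0 < f w)
    (p : Fin N → Fin d → ℝ) (hp : ∀ j, p j ∈ compl b c)
    (hinj : ∀ i j, connectedComponentIn (compl b c) (p i) = connectedComponentIn (compl b c) (p j) →
      i = j) : N ≤ n.choose d + 1 := by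
  classical
  have hfc : Continuous f := LinearMap.continuous_of_finiteDimensional f
  set U := compl b c with hU
  let C : Fin N → Set (Fin d → ℝ) := fun j => connectedComponentIn U (p j)
  have hCU : ∀ j, C j ⊆ U := fun j => connectedComponentIn_subset _ _
  have hC : ∀ j, ∀ W : Set (Fin d → ℝ), Convex ℝ W → W ⊆ U → (W ∩ C j).Nonempty → W ⊆ C j := by
    rintro j W hW hWU ⟨x, hxW, hxC⟩
    have := hW.isPreconnected.subset_connectedComponentIn hxW hWU
    rwa [← connectedComponentIn_eq hxC] at this
  have hmeet : ∀ i j, (C i ∩ C j).Nonempty → i = j := by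
    rintro i j ⟨x, hx, hx'⟩
    exact hinj i j ((connectedComponentIn_eq hx).trans (connectedComponentIn_eq hx').symm)
  have hf0 : f ≠ 0 := by
    intro h
    have h1 := G2 ∅ (by simp [h])
    have h2 : (LinearMap.proj ⟨0, hd⟩ : Dual ℝ (Fin d → ℝ)) ∈ Submodule.span ℝ (b '' ∅) :=
      h1 ▸ trivial
    simp only [image_empty, Submodule.span_empty, Submodule.mem_bot] at h2
    have := congrArg (fun g : Dual ℝ (Fin d → ℝ) => g 1) h2
    simp at this
  obtain ⟨m, hm⟩ : ∃ m : ℝ, ∀ x, f x < m → x ∈ U := by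
    have hK : IsCompact (Set.pi univ fun _ : Fin d => Icc (-R) R) :=
      isCompact_univ_pi fun _ => isCompact_Icc
    obtain ⟨m, hm⟩ := hK.bddBelow_image hfc.continuousOn
    refine ⟨m, fun x hx => ?_⟩
    by_contra hxU
    have : x ∈ Set.pi univ fun _ : Fin d => Icc (-R) R := by
      intro j _
      refine abs_le.1 (not_lt.1 fun h => hxU (hR x ⟨j, h⟩))
    exact absurd (hm ⟨x, this, rfl⟩) (not_le.2 hx)
  let B : Finset (Fin N) := Finset.univ.filter fun j => ∃ x ∈ C j, f x < m
  have hB : B.card ≤ 1 := by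
    rw [Finset.card_le_one]
    intro i hi j hj
    obtain ⟨x, hx, hxm⟩ := (Finset.mem_filter.1 hi).2
    obtain ⟨y, hy, hym⟩ := (Finset.mem_filter.1 hj).2
    have hW : Convex ℝ {x | f x < m} := convex_halfSpace_lt f.isLinear m
    have h1 := hC i _ hW hm ⟨x, hxm, hx⟩
    exact hmeet i j ⟨y, h1 hym, hy⟩
  have hlow : ∀ j, j ∈ Bᶜ → ∃ v ∈ closure (C j), ∀ x ∈ C j, f v ≤ f x := by
    intro j hj
    refine exists_lowest hd U (C j) f (hC j) ⟨p j, mem_connectedComponentIn (hp j)⟩ R hR hf0 hf2 m ?_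
    intro x hx
    by_contra hlt
    exact (Finset.mem_compl.1 hj) (Finset.mem_filter.2 ⟨Finset.mem_univ _, x, hx, not_le.1 hlt⟩)
  choose! v hvc hvm using hlow
  have hBc : Bᶜ.card ≤ n.choose d := by
    have : (Finset.powersetCard d (Finset.univ : Finset (Fin n))).card = n.choose d := by simp
    rw [← this]
    refine Finset.card_le_card_of_injOn (fun j => idx b c (v j)) ?_ ?_
    · intro j hj
      have hj' : j ∈ Bᶜ := hj
      have := (hole_data b c f G1 G2 (C j) (hCU j) (hC j) (v j) (hvc j hj') (hvm j hj')).1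
      rw [Finset.mem_coe, Finset.mem_powersetCard]
      exact ⟨Finset.subset_univ _, by simpa using this⟩
    · intro i hi j hj hij
      have hi' : i ∈ Bᶜ := hi
      have hj' : j ∈ Bᶜ := hj
      exact hmeet i j (holes_meet b c f G1 G2 (C i) (C j) (hCU i) (hCU j) (hC i) (hC j) (v i) (v j)
        (hvc i hi') (hvm i hi') (hvc j hj') (hvm j hj') hij)
  have := Finset.card_add_card_compl B
  rw [Fintype.card_fin] at this
  omega

end HolesAux

/-- **Kovalev's upper bound (compact convex version).** The union of `n` compact
convex sets in `ℝ^d` has at most `C(n,d) + 1` holes, i.e. the complement of the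
union has at most `n choose d` plus one connected components. -/
theorem holes_upper_bound (d n : ℕ) (hd : 1 ≤ d) (hn : 1 ≤ n)
    (X : Fin n → Set (Fin d → ℝ))
    (hcomp : ∀ i, IsCompact (X i)) (hconv : ∀ i, Convex ℝ (X i)) :
    Cardinal.mk (ConnectedComponents ↥((⋃ i, X i)ᶜ)) ≤ (n.choose d + 1 : ℕ) := by
  classical
  by_contra hlt
  rw [not_le] at hlt
  set M := n.choose d + 1 with hM
  have h1 : ((M + 1 : ℕ) : Cardinal) ≤ Cardinal.mk (ConnectedComponents ↥((⋃ i, X i)ᶜ)) := by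
    have := Order.succ_le_of_lt hlt
    rw [Cardinal.succ_natCast] at this
    exact_mod_cast this
  rw [← Cardinal.mk_fin, Cardinal.le_def] at h1
  obtain ⟨e⟩ := h1
  have hsurj := fun j => ConnectedComponents.surjective_coe (e j)
  choose p hp using hsurj
  have hpX : ∀ i j, (p j : Fin d → ℝ) ∉ X i := fun i j h => (p j).2 (Set.mem_iUnion.2 ⟨i, h⟩)
  have hsep := fun (i : Fin n) (j : Fin (M + 1)) =>
    geometric_hahn_banach_closed_point (hconv i) (hcomp i).isClosed (hpX i j)
  choose g u hgu hgp using hsep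
  obtain ⟨R, hR⟩ : ∃ R : ℝ, ∀ i, ∀ x ∈ X i, ∀ l, |x l| ≤ R := by
    have hb : Bornology.IsBounded (⋃ i, X i) := (isCompact_iUnion hcomp).isBounded
    obtain ⟨R, hR⟩ := hb.exists_norm_le
    exact ⟨R, fun i x hx l => (norm_le_pi_norm x l).trans (hR x (Set.mem_iUnion.2 ⟨i, hx⟩))⟩
  let K := Fin (M + 1) ⊕ (Fin d × Bool)
  let b : Fin n × K → Module.Dual ℝ (Fin d → ℝ) := fun s => match s.2 with
    | Sum.inl j => (g s.1 j : (Fin d → ℝ) →ₗ[ℝ] ℝ)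
    | Sum.inr (l, true) => LinearMap.proj l
    | Sum.inr (l, false) => - LinearMap.proj l
  let lo : Fin n × K → ℝ := fun s => match s.2 with
    | Sum.inl j => u s.1 j
    | Sum.inr _ => R
  let hi : Fin n × K → ℝ := fun s => match s.2 with
    | Sum.inl j => g s.1 j (p j)
    | Sum.inr _ => R + 1
  have hlohi : ∀ s, lo s < hi s := by
    rintro ⟨i, j | l⟩
    · exact hgp i j
    · exact lt_add_one R
  obtain ⟨c, hc, G1⟩ := HolesAux.exists_generic_rhs b lo hi hlohi
  obtain ⟨f, G2⟩ := HolesAux.exists_generic_functional b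
  have hXU : HolesAux.compl b c ⊆ (⋃ i, X i)ᶜ := by
    intro x hx hxX
    obtain ⟨i, hi⟩ := Set.mem_iUnion.1 hxX
    obtain ⟨k, hk⟩ := hx i
    have h2 := (hc (i, k)).1
    have h3 : b (i, k) x ≤ lo (i, k) := by
      rcases k with j | ⟨l, _ | _⟩
      · exact (hgu i j x hi).le
      · exact (neg_le_abs _).trans (hR i x hi l)
      · exact (le_abs_self _).trans (hR i x hi l)
    linarith
  have hpU : ∀ j, (p j : Fin d → ℝ) ∈ HolesAux.compl b c := fun j i =>
    ⟨Sum.inl j, (hc (i, Sum.inl j)).2⟩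
  have hcount := HolesAux.count hd b c f G1 G2 (R + 1) (by
    rintro x ⟨l, hl⟩ i
    rcases lt_abs.1 hl with h | h
    · exact ⟨Sum.inr (l, true), (hc (i, Sum.inr (l, true))).2.trans h⟩
    · exact ⟨Sum.inr (l, false), (hc (i, Sum.inr (l, false))).2.trans h⟩) (by
    intro h2 l
    let s : Fin n × K := (⟨0, hn⟩, Sum.inr (l, true))
    have hns : f ∉ Submodule.span ℝ (b '' {s}) := by
      intro hf
      have htop := G2 _ hf
      have h4 := finrank_span_le_card (R := ℝ) (b '' {s})
      rw [htop, finrank_top, Subspace.dual_finrank_eq] at h4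
      simp at h4
      omega
    obtain ⟨w, hw, hfw⟩ := HolesAux.exists_of_notMem_span b {s} f hns
    exact ⟨w, hw s rfl, hfw⟩) (fun j => (p j : Fin d → ℝ)) hpU (by
    intro i j hij
    apply e.injective
    rw [← hp i, ← hp j]
    have hj : (p j : Fin d → ℝ) ∈ connectedComponentIn (HolesAux.compl b c) (p i) := by
      rw [hij]; exact mem_connectedComponentIn (hpU j)
    have hj' := connectedComponentIn_mono (p i : Fin d → ℝ) hXU hj
    rw [connectedComponentIn_eq_image (p i).2] at hj'
    obtain ⟨y, hy, hyj⟩ := hj'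
    have : y = p j := Subtype.ext hyj
    subst this
    exact (ConnectedComponents.coe_eq_coe'.2 hy).symm)
  omega
end

section
/- There exists a compact convex body K ⊆ ℝ³ such that for every positive integer m there is a finite set P ⊆ ℝ³ of 3m points for which the free space {t ∈ ℝ³ : (t + K) ∩ P = ∅} has at least m³ − m + 1 connected components. -/
open Pointwise

namespace FreeSpace

/-- horizontal scale of the `m`-th patch -/
noncomputable def rho (m : ℕ) : ℝ := 1 / (4096 * (m : ℝ) ^ 8)
/-- slope scale of the `m`-th patch -/
noncomputable def del (m : ℕ) : ℝ := 1 / (256 * (m : ℝ) ^ 6)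

/-- lower barrier functions -/
noncomputable def Lw (m i j : ℕ) (x z : ℝ) : ℝ :=
  2 * x / m - 1 / (m : ℝ) ^ 2 + rho m * del m *
    (2 * i * ((x - 1 / m) / rho m) - (i : ℝ) ^ 2
      + 1 / 2 * |(x - 1 / m) / rho m - i - j / (4 * m)|
      + 2 * (m + j) * (z / (2048 * (m : ℝ) ^ 4 * rho m)) - ((m : ℝ) + j) ^ 2)

/-- The (reflected) convex body. -/
def KK (x y z : ℝ) : Prop :=
  -4 ≤ x ∧ x + |z| ≤ 4 ∧ y ≤ -x ^ 2 ∧ -64 ≤ y ∧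
    ∀ m i j : ℕ, 1 ≤ m → i < m → j < m → Lw m i j x z - 64 ≤ y

/-- The convex body. -/
def KS : Set (Fin 3 → ℝ) := {q | KK (-q 0) (-q 1) (-q 2)}

lemma rho_pos {m : ℕ} (hm : 1 ≤ m) : 0 < rho m := by
  have : (0 : ℝ) < m := by exact_mod_cast hm
  unfold rho; positivity

lemma del_pos {m : ℕ} (hm : 1 ≤ m) : 0 < del m := by
  have : (0 : ℝ) < m := by exact_mod_cast hm
  unfold del; positivity

lemma rho_eq {m : ℕ} (hm : 1 ≤ m) : rho m * (16 * (m : ℝ) ^ 2) = del m := by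
  have : (0 : ℝ) < m := by exact_mod_cast hm
  unfold rho del; field_simp; norm_num

lemma del_eq {m : ℕ} (hm : 1 ≤ m) : del m * (256 * (m : ℝ) ^ 6) = 1 := by
  have : (0 : ℝ) < m := by exact_mod_cast hm
  unfold del; field_simp

lemma rho_eq' {m : ℕ} (hm : 1 ≤ m) : rho m * (4096 * (m : ℝ) ^ 8) = 1 := by
  have : (0 : ℝ) < m := by exact_mod_cast hm
  unfold rho; field_simp

lemma Lw_le {m i j : ℕ} (hm : 1 ≤ m) (hi : i < m) (hj : j < m) {x z : ℝ}
    (hx : |x| ≤ 4) (hz : |z| ≤ 2) :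
    Lw m i j x z ≤ x ^ 2 - (x - 1 / m) ^ 2 + 1 / (16 * (m : ℝ) ^ 4) := by
  have hM : (1 : ℝ) ≤ m := by exact_mod_cast hm
  have hM0 : (0 : ℝ) < m := by linarith
  have hI : (i : ℝ) ≤ m := by exact_mod_cast hi.le
  have hJ : (j : ℝ) ≤ m := by exact_mod_cast hj.le
  have hI0 : (0 : ℝ) ≤ i := by positivity
  have hJ0 : (0 : ℝ) ≤ j := by positivity
  have hr := rho_pos hm
  have hd := del_pos hm
  have h1m : 1 / (m : ℝ) ≤ 1 := by rw [div_le_one hM0]; exact hM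
  have h1m0 : 0 < 1 / (m : ℝ) := by positivity
  set u : ℝ := x - 1 / m with hu
  have hu5 : |u| ≤ 5 := by
    rw [abs_le] at hx ⊢; constructor <;> linarith [hx.1, hx.2]
  have hk : 0 < rho m * del m := by positivity
  have e1 : rho m * del m * (2 * i * (u / rho m)) ≤ 10 * m * del m := by
    have : rho m * del m * (2 * i * (u / rho m)) = del m * (2 * i * u) := by
      field_simp
    rw [this]
    have : (i : ℝ) * u ≤ m * 5 := by
      calc (i : ℝ) * u ≤ i * |u| := by gcongr; exact le_abs_self u
        _ ≤ m * 5 := by gcongr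
    nlinarith
  have e2 : |u / rho m - i - j / (4 * m)| ≤ 5 / rho m + 2 * m := by
    have h4 : (j : ℝ) / (4 * m) ≤ 1 := by
      rw [div_le_one (by positivity)]; linarith
    have h40 : 0 ≤ (j : ℝ) / (4 * m) := by positivity
    have hur : |u / rho m| ≤ 5 / rho m := by
      rw [abs_div, abs_of_pos hr]; gcongr
    rw [abs_le] at hur ⊢
    constructor <;> linarith [hur.1, hur.2]
  have e2' : rho m * del m * (1 / 2 * |u / rho m - i - j / (4 * m)|)
      ≤ del m * (5 / 2) + rho m * del m * m := by
    calc _ ≤ rho m * del m * (1 / 2 * (5 / rho m + 2 * m)) := by gcongr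
      _ = _ := by field_simp
  have e3 : rho m * del m * (2 * (m + j) * (z / (2048 * (m : ℝ) ^ 4 * rho m)))
      ≤ del m := by
    have : rho m * del m * (2 * (m + j) * (z / (2048 * (m : ℝ) ^ 4 * rho m)))
      = del m * ((m + j) * z / (1024 * (m : ℝ) ^ 4)) := by field_simp; ring
    rw [this]
    have : ((m : ℝ) + j) * z / (1024 * (m : ℝ) ^ 4) ≤ 1 := by
      rw [div_le_one (by positivity)]
      have h4 : (m : ℝ) ≤ (m : ℝ) ^ 4 := le_self_pow₀ hM (by norm_num)
      calc ((m : ℝ) + j) * z ≤ (m + j) * |z| := by gcongr; exact le_abs_self z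
        _ ≤ (m + m) * 2 := by gcongr
        _ ≤ _ := by nlinarith
    nlinarith
  have e4 : rho m * del m * m ≤ del m := by
    have h8 : (m : ℝ) ≤ (m : ℝ) ^ 8 := le_self_pow₀ hM (by norm_num)
    have := rho_eq' hm
    have : rho m * m ≤ 1 := by nlinarith
    nlinarith
  have e5 : 16 * (m : ℝ) ^ 2 * del m = 1 / (16 * (m : ℝ) ^ 4) := by
    unfold del; field_simp; norm_num
  have e6 : 15 * (m : ℝ) * del m ≤ 16 * (m : ℝ) ^ 2 * del m := by
    have : 15 * (m : ℝ) ≤ 16 * (m : ℝ) ^ 2 := by nlinarith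
    gcongr
  have e7 : x ^ 2 - u ^ 2 = 2 * x / m - 1 / (m : ℝ) ^ 2 := by
    rw [hu]; field_simp; ring
  rw [e7]
  unfold Lw
  rw [← hu]
  have n1 : 0 ≤ rho m * del m * (i : ℝ) ^ 2 := by positivity
  have n2 : 0 ≤ rho m * del m * ((m : ℝ) + j) ^ 2 := by positivity
  have : del m ≤ m * del m := by nlinarith
  linarith

lemma Lw_le' {m i j : ℕ} (hm : 1 ≤ m) (hi : i < m) (hj : j < m) {x z : ℝ}
    (hx : |x| ≤ 4) (hz : |z| ≤ 2) : Lw m i j x z ≤ x ^ 2 + 1 := by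
  have h := Lw_le hm hi hj hx hz
  have hM : (1 : ℝ) ≤ m := by exact_mod_cast hm
  have : 1 / (16 * (m : ℝ) ^ 4) ≤ 1 := by
    rw [div_le_one (by positivity)]
    have := one_le_pow₀ hM (n := 4)
    linarith
  nlinarith [sq_nonneg (x - 1 / m)]

lemma Lw_convex {m i j : ℕ} (hm : 1 ≤ m) (x z x' z' a b : ℝ) (ha : 0 ≤ a) (hb : 0 ≤ b)
    (hab : a + b = 1) :
    Lw m i j (a * x + b * x') (a * z + b * z') ≤ a * Lw m i j x z + b * Lw m i j x' z' := by
  have hr := rho_pos hm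
  have hd := del_pos hm
  have hk : 0 < rho m * del m := by positivity
  unfold Lw
  set U := (x - 1 / m) / rho m - i - j / (4 * m) with hU
  set V := (x' - 1 / m) / rho m - i - j / (4 * m) with hV
  have hb' : b = 1 - a := by linarith
  have e : (a * x + b * x' - 1 / m) / rho m - i - j / (4 * m) = a * U + b * V := by
    rw [hU, hV, hb']; ring
  have : |a * U + b * V| ≤ a * |U| + b * |V| := by
    calc _ ≤ |a * U| + |b * V| := abs_add_le _ _
      _ = _ := by rw [abs_mul, abs_mul, abs_of_nonneg ha, abs_of_nonneg hb]
  rw [e]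
  have h2 := mul_le_mul_of_nonneg_left this hk.le
  have key : ∀ W : ℝ, 2 * (a * x + b * x') / m - 1 / (m : ℝ) ^ 2 + rho m * del m *
    (2 * i * ((a * x + b * x' - 1 / m) / rho m) - (i : ℝ) ^ 2
      + 1 / 2 * W
      + 2 * (m + j) * ((a * z + b * z') / (2048 * (m : ℝ) ^ 4 * rho m)) - ((m : ℝ) + j) ^ 2)
     = a * (2 * x / m - 1 / (m : ℝ) ^ 2 + rho m * del m *
    (2 * i * ((x - 1 / m) / rho m) - (i : ℝ) ^ 2
      + 1 / 2 * |U|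
      + 2 * (m + j) * (z / (2048 * (m : ℝ) ^ 4 * rho m)) - ((m : ℝ) + j) ^ 2))
     + b * (2 * x' / m - 1 / (m : ℝ) ^ 2 + rho m * del m *
    (2 * i * ((x' - 1 / m) / rho m) - (i : ℝ) ^ 2
      + 1 / 2 * |V|
      + 2 * (m + j) * (z' / (2048 * (m : ℝ) ^ 4 * rho m)) - ((m : ℝ) + j) ^ 2))
     + 1 / 2 * (rho m * del m * W - rho m * del m * (a * |U| + b * |V|)) := by
    intro W; rw [hb']; ring
  rw [key]
  linarith

lemma KK_convex {x y z x' y' z' a b : ℝ} (h : KK x y z) (h' : KK x' y' z')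
    (ha : 0 ≤ a) (hb : 0 ≤ b) (hab : a + b = 1) :
    KK (a * x + b * x') (a * y + b * y') (a * z + b * z') := by
  obtain ⟨h1, h2, h3, h4, h5⟩ := h
  obtain ⟨g1, g2, g3, g4, g5⟩ := h'
  refine ⟨by nlinarith, ?_, ?_, by nlinarith, ?_⟩
  · have : |a * z + b * z'| ≤ a * |z| + b * |z'| := by
      calc _ ≤ |a * z| + |b * z'| := abs_add_le _ _
        _ = _ := by rw [abs_mul, abs_mul, abs_of_nonneg ha, abs_of_nonneg hb]
    nlinarith
  · have hb' : b = 1 - a := by linarith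
    have : (a * x + b * x') ^ 2 + a * b * (x - x') ^ 2 = a * x ^ 2 + b * x' ^ 2 := by
      rw [hb']; ring
    have : 0 ≤ a * b * (x - x') ^ 2 := by positivity
    nlinarith
  · intro m i j hm hi hj
    have := Lw_convex (i := i) (j := j) hm x z x' z' a b ha hb hab
    have := h5 m i j hm hi hj
    have := g5 m i j hm hi hj
    nlinarith

lemma KS_convex : Convex ℝ KS := by
  intro p hp q hq a b ha hb hab
  have := KK_convex hp hq ha hb hab
  unfold KS
  simp only [Set.mem_ofPred_eq, Pi.add_apply, Pi.smul_apply, smul_eq_mul]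
  convert this using 1 <;> ring

lemma Lw_cont (m i j : ℕ) : Continuous (fun q : Fin 3 → ℝ => Lw m i j (-q 0) (-q 2)) := by
  unfold Lw
  simp only [div_eq_mul_inv]
  fun_prop

lemma KS_closed : IsClosed KS := by
  unfold KS KK
  simp only [Set.ofPred_and, Set.ofPred_forall]
  refine IsClosed.inter (isClosed_le (by fun_prop) (by fun_prop)) ?_
  refine IsClosed.inter (isClosed_le (by fun_prop) (by fun_prop)) ?_
  refine IsClosed.inter (isClosed_le (by fun_prop) (by fun_prop)) ?_
  refine IsClosed.inter (isClosed_le (by fun_prop) (by fun_prop)) ?_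
  refine isClosed_iInter fun m => isClosed_iInter fun i => isClosed_iInter fun j =>
    isClosed_iInter fun _ => isClosed_iInter fun _ => isClosed_iInter fun _ => ?_
  exact isClosed_le ((Lw_cont m i j).sub continuous_const) (by fun_prop)

lemma KS_compact : IsCompact KS := by
  refine Metric.isCompact_of_isClosed_isBounded KS_closed ?_
  refine (Metric.isBounded_closedBall (x := (0 : Fin 3 → ℝ)) (r := 64)).subset ?_
  intro q hq
  obtain ⟨h1, h2, h3, h4, -⟩ := hq
  rw [mem_closedBall_zero_iff, pi_norm_le_iff_of_nonneg (by norm_num)]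
  have := abs_nonneg (-q 2)
  have h5 : |-q 2| ≤ 8 := by linarith
  rw [abs_le] at h5
  intro i
  fin_cases i <;> simp only [Real.norm_eq_abs, abs_le] <;> constructor <;> simp <;> nlinarith

lemma KS_interior : (interior KS).Nonempty := by
  refine ⟨![0, 8, 0], ?_⟩
  rw [mem_interior]
  refine ⟨Metric.ball ![0, 8, 0] 1, ?_, Metric.isOpen_ball, Metric.mem_ball_self (by norm_num)⟩
  intro q hq
  rw [Metric.mem_ball, dist_pi_lt_iff (by norm_num)] at hq
  have h0 := hq 0
  have h1 := hq 1
  have h2 := hq 2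
  simp only [Real.dist_eq, abs_lt] at h0 h1 h2
  simp at h0 h1 h2
  have hx : |-q 0| ≤ 1 := by rw [abs_le]; constructor <;> linarith [h0.1, h0.2]
  have hz : |-q 2| ≤ 1 := by rw [abs_le]; constructor <;> linarith [h2.1, h2.2]
  refine ⟨by linarith, by linarith, by nlinarith, by linarith, ?_⟩
  intro m i j hm hi hj
  have := Lw_le' hm hi hj (hx.trans (by norm_num)) (hz.trans (by norm_num))
  nlinarith

/-- topological counting lemma -/
lemma comps {X : Type} [TopologicalSpace X] (F : Set X) {ι : Type} (q : ι → X) (q0 : X)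
    (O C : ι → Set X) (hq : ∀ i, q i ∈ F) (hq0 : q0 ∈ F)
    (hO : ∀ i, IsOpen (O i)) (hC : ∀ i, IsClosed (C i)) (hOC : ∀ i, O i ⊆ C i)
    (hCO : ∀ i, C i ∩ F ⊆ O i) (hqO : ∀ i, q i ∈ O i) (hqO' : ∀ i j, i ≠ j → q j ∉ O i)
    (hq0' : ∀ i, q0 ∉ O i) :
    Cardinal.mk (Option ι) ≤ Cardinal.mk (ConnectedComponents ↥F) := by
  have clop : ∀ i, IsClopen ((fun x : F => (x : X)) ⁻¹' (O i)) := by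
    intro i
    refine ⟨?_, (hO i).preimage continuous_subtype_val⟩
    have : ((fun x : F => (x : X)) ⁻¹' (O i)) = ((fun x : F => (x : X)) ⁻¹' (C i)) := by
      ext x; exact ⟨fun h => hOC i h, fun h => hCO i ⟨h, x.2⟩⟩
    rw [this]
    exact (hC i).preimage continuous_subtype_val
  have sep : ∀ i (x y : F), (x : X) ∈ O i → (y : X) ∉ O i →
      (x : ConnectedComponents F) ≠ (y : ConnectedComponents F) := by
    intro i x y hx hy h
    have h' : connectedComponent x = connectedComponent y := ConnectedComponents.coe_eq_coe.1 h
    have := (clop i).connectedComponent_subset (x := x) hx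
    rw [h'] at this
    exact hy (this mem_connectedComponent)
  let f : Option ι → ConnectedComponents F := fun o =>
    match o with
    | none => ((⟨q0, hq0⟩ : F) : ConnectedComponents F)
    | some i => ((⟨q i, hq i⟩ : F) : ConnectedComponents F)
  refine Cardinal.mk_le_of_injective (f := f) ?_
  intro a b hab
  rcases a with _ | i <;> rcases b with _ | j
  · rfl
  · exact absurd hab.symm (sep j _ _ (hqO j) (hq0' j))
  · exact absurd hab (sep i _ _ (hqO i) (hq0' i))
  · by_contra hne
    have hij : i ≠ j := fun h => hne (by rw [h])
    exact sep i _ _ (hqO i) (hqO' i j hij) hab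


/-- auxiliary: powers are dominated -/
lemma rho_mul_le {m : ℕ} (hm : 1 ≤ m) {n : ℕ} (hn : n ≤ 8) : rho m * (m : ℝ) ^ n ≤ 1 / 4096 := by
  have hM : (1 : ℝ) ≤ m := by exact_mod_cast hm
  have h := pow_le_pow_right₀ hM hn
  have := rho_eq' hm
  have hr := rho_pos hm
  nlinarith

lemma del_mul_le {m : ℕ} (hm : 1 ≤ m) {n : ℕ} (hn : n ≤ 6) : del m * (m : ℝ) ^ n ≤ 1 / 256 := by
  have hM : (1 : ℝ) ≤ m := by exact_mod_cast hm
  have h := pow_le_pow_right₀ hM hn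
  have := del_eq hm
  have hr := del_pos hm
  nlinarith

noncomputable def ax (m i : ℕ) : ℝ := 1 / m + i * del m + rho m * i
noncomputable def ay (m i : ℕ) : ℝ :=
  ax m i ^ 2 - rho m * del m * (i : ℝ) ^ 2 - rho m ^ 2 * (i : ℝ) ^ 2
noncomputable def bz (m j : ℕ) : ℝ := -(2048 * (m : ℝ) ^ 4 * rho m * (m + j))
noncomputable def byy (m j : ℕ) : ℝ :=
  64 - 1 / (m : ℝ) ^ 2 - rho m * del m * ((m : ℝ) + j) ^ 2 - rho m * del m * (1 / (64 * m))

lemma ax_bd {m i : ℕ} (hm : 1 ≤ m) (hi : i < m) : 0 < ax m i ∧ ax m i ≤ 2 := by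
  have hM : (1 : ℝ) ≤ m := by exact_mod_cast hm
  have hM0 : (0 : ℝ) < m := by linarith
  have hI : (i : ℝ) ≤ m := by exact_mod_cast hi.le
  have hI0 : (0 : ℝ) ≤ i := by positivity
  have hr := rho_pos hm
  have hd := del_pos hm
  have h1m : 1 / (m : ℝ) ≤ 1 := by rw [div_le_one hM0]; exact hM
  have h1m0 : 0 < 1 / (m : ℝ) := by positivity
  have h1 := rho_mul_le hm (n := 1) (by norm_num)
  have h2 := del_mul_le hm (n := 1) (by norm_num)
  rw [pow_one] at h1 h2
  unfold ax
  constructor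
  · positivity
  · nlinarith

lemma A_in {m i : ℕ} (hm : 1 ≤ m) (hi : i < m) {X Y ζ : ℝ} (hX0 : 0 ≤ X) (hXm : X ≤ m)
    (hY : -1 ≤ Y) (hζ0 : -(512 * (m : ℝ) ^ 2) ≤ ζ) (hζ1 : ζ ≤ m)
    (h : Y ≤ 2 * i * X - (i : ℝ) ^ 2 - (X - i) ^ 2 / (16 * (m : ℝ) ^ 2)) :
    KK (rho m * X - ax m i) (2 * (rho m * X) / m + rho m * del m * Y - ay m i)
      (4 * m * rho m * ζ) := by
  have hM : (1 : ℝ) ≤ m := by exact_mod_cast hm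
  have hM0 : (0 : ℝ) < m := by linarith
  have hr := rho_pos hm
  have hd := del_pos hm
  obtain ⟨ha0, ha2⟩ := ax_bd hm hi
  have h1 := rho_mul_le hm (n := 1) (by norm_num)
  have h3 := rho_mul_le hm (n := 3) (by norm_num)
  have h2 := rho_mul_le hm (n := 2) (by norm_num)
  have hd0 := del_mul_le hm (n := 0) (by norm_num)
  have hr0 := rho_mul_le hm (n := 0) (by norm_num)
  rw [pow_one] at h1
  rw [pow_zero, mul_one] at hd0 hr0
  have hrX0 : 0 ≤ rho m * X := by positivity
  have hrX : rho m * X ≤ 1 / 4096 := by nlinarith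
  have hz : |4 * m * rho m * ζ| ≤ 1 := by
    rw [abs_le]
    constructor
    · have : 4 * m * rho m * (-(512 * (m : ℝ) ^ 2)) ≤ 4 * m * rho m * ζ := by gcongr
      nlinarith
    · have : 4 * m * rho m * ζ ≤ 4 * m * rho m * m := by gcongr
      nlinarith
  have hx : |rho m * X - ax m i| ≤ 2 := by
    rw [abs_le]; constructor <;> linarith
  have hx' := abs_le.1 hx
  have hk : 0 < rho m * del m := by positivity
  have hkle : rho m * del m ≤ 1 := by nlinarith
  have hay : ay m i ≤ 4 := by
    unfold ay
    have : 0 ≤ rho m * del m * (i : ℝ) ^ 2 := by positivity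
    have : 0 ≤ rho m ^ 2 * (i : ℝ) ^ 2 := by positivity
    nlinarith
  have hyl : -5 ≤ 2 * (rho m * X) / m + rho m * del m * Y - ay m i := by
    have : 0 ≤ 2 * (rho m * X) / m := by positivity
    nlinarith
  refine ⟨by linarith, by linarith, ?_, by linarith, ?_⟩
  · have hr2 : rho m * del m * ((X - i) ^ 2 / (16 * (m : ℝ) ^ 2)) = rho m ^ 2 * (X - i) ^ 2 := by
      rw [← rho_eq hm]; field_simp
    have h' := mul_le_mul_of_nonneg_left h hk.le
    rw [mul_sub, hr2] at h'
    have hax : 2 * (rho m * X) / m = 2 * rho m * X * (ax m i - i * del m - rho m * i) := by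
      unfold ax; field_simp; ring
    rw [hax]
    unfold ay
    nlinarith
  · intro m' i' j' hm' hi' hj'
    have := Lw_le' hm' hi' hj' (hx.trans (by norm_num)) (hz.trans (by norm_num))
    nlinarith

lemma A_out {m i : ℕ} (hm : 1 ≤ m) {X Y z : ℝ}
    (h : 2 * i * X - (i : ℝ) ^ 2 < Y) :
    ¬ KK (rho m * X - ax m i) (2 * (rho m * X) / m + rho m * del m * Y - ay m i) z := by
  rintro ⟨-, -, h3, -, -⟩
  have hM0 : (0 : ℝ) < m := by exact_mod_cast hm
  have hr := rho_pos hm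
  have hd := del_pos hm
  have hk : 0 < rho m * del m := by positivity
  have h' := mul_lt_mul_of_pos_left h hk
  have hax : 2 * (rho m * X) / m = 2 * rho m * X * (ax m i - i * del m - rho m * i) := by
    unfold ax; field_simp; ring
  rw [hax] at h3
  unfold ay at h3
  nlinarith [sq_nonneg (rho m * (X - i))]

/-- the form of a barrier in window coordinates -/
lemma Lw_win {m : ℕ} (hm : 1 ≤ m) (i j' j : ℕ) (X ζ : ℝ) :
    Lw m i j' (rho m * X - (-(1 / m))) (4 * m * rho m * ζ - bz m j) =
      1 / (m : ℝ) ^ 2 + 2 * (rho m * X) / m + rho m * del m *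
      (2 * i * X - (i : ℝ) ^ 2 + 1 / 2 * |X - i - j' / (4 * m)|
        + (m + j') / (256 * (m : ℝ) ^ 3) * ζ + ((m : ℝ) + j) ^ 2 - ((j : ℝ) - j') ^ 2) := by
  have hM0 : (0 : ℝ) < m := by exact_mod_cast hm
  have hr := rho_pos hm
  have e1 : (rho m * X - (-(1 / (m : ℝ))) - 1 / m) / rho m = X := by field_simp; ring
  have e2 : (4 * m * rho m * ζ - bz m j) / (2048 * (m : ℝ) ^ 4 * rho m)
      = ζ / (512 * (m : ℝ) ^ 3) + (m + j) := by
    unfold bz; field_simp; ring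
  unfold Lw
  rw [e1, e2]
  field_simp
  ring

lemma B_out {m i j : ℕ} (hm : 1 ≤ m) (hi : i < m) (hj : j < m) {X Y ζ : ℝ}
    (h : Y < 2 * i * X - (i : ℝ) ^ 2 + 1 / 2 * |X - i - j / (4 * m)|
      + (m + j) / (256 * (m : ℝ) ^ 3) * ζ - 1 / (64 * m)) :
    ¬ KK (rho m * X - (-(1 / m))) (2 * (rho m * X) / m + rho m * del m * Y - byy m j)
      (4 * m * rho m * ζ - bz m j) := by
  rintro ⟨-, -, -, -, h5⟩
  have h5 := h5 m i j hm hi hj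
  rw [Lw_win hm] at h5
  have hr := rho_pos hm
  have hd := del_pos hm
  have hk : 0 < rho m * del m := by positivity
  have h' := mul_lt_mul_of_pos_left h hk
  unfold byy at h5
  rw [sub_self] at h5
  linarith

lemma gap {m m' : ℕ} (hm : 1 ≤ m) (hm' : 1 ≤ m') (h : m ≠ m') :
    1 / (2 * (m : ℝ) ^ 2) ≤ |1 / (m : ℝ) - 1 / m'| := by
  have hM : (1 : ℝ) ≤ m := by exact_mod_cast hm
  have hM0 : (0 : ℝ) < m := by linarith
  have hM' : (1 : ℝ) ≤ m' := by exact_mod_cast hm'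
  have hM0' : (0 : ℝ) < m' := by linarith
  rcases lt_or_gt_of_ne h with h | h
  · have h1 : (m : ℝ) + 1 ≤ m' := by exact_mod_cast h
    refine le_trans ?_ (le_abs_self _)
    rw [div_sub_div _ _ hM0.ne' hM0'.ne', div_le_div_iff₀ (by positivity) (by positivity)]
    nlinarith [mul_nonneg hM0.le (sub_nonneg.2 h1), mul_nonneg (mul_nonneg hM0.le hM0.le) (sub_nonneg.2 h1), mul_nonneg hM0.le (sub_nonneg.2 hM)]
  · have h1 : (m' : ℝ) + 1 ≤ m := by exact_mod_cast h
    refine le_trans ?_ (neg_le_abs _)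
    rw [neg_sub, div_sub_div _ _ hM0'.ne' hM0.ne', div_le_div_iff₀ (by positivity) (by positivity)]
    nlinarith [mul_nonneg hM0.le (sub_nonneg.2 h1), mul_nonneg (mul_nonneg hM0.le hM0.le) (sub_nonneg.2 h1), mul_nonneg hM0.le (sub_nonneg.2 hM)]

set_option maxHeartbeats 1000000 in
lemma B_in {m j : ℕ} (hm : 1 ≤ m) (hj : j < m) {X Y ζ : ℝ} (hX0 : 0 ≤ X) (hXm : X ≤ m)
    (hY : -1 ≤ Y) (hY1 : Y ≤ 8 * (m : ℝ) ^ 2)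
    (hζ0 : -(512 * (m : ℝ) ^ 2) ≤ ζ) (hζ1 : ζ ≤ m)
    (h : ∀ i' j' : ℕ, i' < m → j' < m →
      2 * i' * X - (i' : ℝ) ^ 2 + 1 / 2 * |X - i' - j' / (4 * m)|
        + (m + j') / (256 * (m : ℝ) ^ 3) * ζ - ((j : ℝ) - j') ^ 2 - 1 / (64 * m) ≤ Y) :
    KK (rho m * X - (-(1 / m))) (2 * (rho m * X) / m + rho m * del m * Y - byy m j)
      (4 * m * rho m * ζ - bz m j) := by
  have hM : (1 : ℝ) ≤ m := by exact_mod_cast hm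
  have hM0 : (0 : ℝ) < m := by linarith
  have hJ : (j : ℝ) ≤ m := by exact_mod_cast hj.le
  have hJ0 : (0 : ℝ) ≤ j := by positivity
  have hr := rho_pos hm
  have hd := del_pos hm
  have hk : 0 < rho m * del m := by positivity
  have h1 := rho_mul_le hm (n := 1) (by norm_num)
  have h3 := rho_mul_le hm (n := 3) (by norm_num)
  have h5 := rho_mul_le hm (n := 5) (by norm_num)
  have h2 := rho_mul_le hm (n := 2) (by norm_num)
  have hd0 := del_mul_le hm (n := 0) (by norm_num)
  rw [pow_one] at h1
  rw [pow_zero, mul_one] at hd0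
  have h1m : 1 / (m : ℝ) ≤ 1 := by rw [div_le_one hM0]; exact hM
  have h1m0 : 0 < 1 / (m : ℝ) := by positivity
  have hrX0 : 0 ≤ rho m * X := by positivity
  have hrX : rho m * X ≤ 1 / 4096 := by nlinarith
  have hz : |4 * m * rho m * ζ - bz m j| ≤ 2 := by
    have b1 : -bz m j ≤ 1 := by
      unfold bz
      have : 2048 * (m : ℝ) ^ 4 * rho m * (m + j) ≤ 2048 * (m : ℝ) ^ 4 * rho m * (m + m) := by
        gcongr
      nlinarith
    have b0 : 0 ≤ -bz m j := by
      unfold bz; rw [neg_neg]; positivity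
    rw [abs_le]
    constructor
    · have : 4 * m * rho m * (-(512 * (m : ℝ) ^ 2)) ≤ 4 * m * rho m * ζ := by gcongr
      nlinarith
    · have : 4 * m * rho m * ζ ≤ 4 * m * rho m * m := by gcongr
      nlinarith
  have hx : |rho m * X - (-(1 / (m : ℝ)))| ≤ 3 / 2 := by
    rw [abs_le]; constructor <;> linarith
  have hx' := abs_le.1 hx
  have hν : 0 ≤ 1 / (64 * (m : ℝ)) := by positivity
  have hν1 : 1 / (64 * (m : ℝ)) ≤ 1 := by
    rw [div_le_one (by positivity)]; linarith
  have hs0 : 0 ≤ Y + (m + j : ℝ) ^ 2 + 1 / (64 * m) := by nlinarith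
  have hs1 : rho m * del m * (Y + (m + j : ℝ) ^ 2 + 1 / (64 * m)) ≤ 1 := by
    have : Y + (m + j : ℝ) ^ 2 + 1 / (64 * m) ≤ 13 * (m : ℝ) ^ 2 := by nlinarith
    calc _ ≤ rho m * del m * (13 * (m : ℝ) ^ 2) := by gcongr
      _ = del m * (13 * (rho m * (m : ℝ) ^ 2)) := by ring
      _ ≤ 1 / 256 * (13 * (1 / 4096)) := by gcongr
      _ ≤ 1 := by norm_num
  have hs0' : 0 ≤ rho m * del m * (Y + (m + j : ℝ) ^ 2 + 1 / (64 * m)) := by positivity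
  have hy : 2 * (rho m * X) / m + rho m * del m * Y - byy m j =
      -64 + 1 / (m : ℝ) ^ 2 + 2 * (rho m * X) / m
        + rho m * del m * (Y + (m + j : ℝ) ^ 2 + 1 / (64 * m)) := by
    unfold byy; ring
  have hsq : 1 / (m : ℝ) ^ 2 + 2 * (rho m * X) / m
      = (rho m * X - (-(1 / (m : ℝ)))) ^ 2 - (rho m * X) ^ 2 := by
    field_simp; ring
  have hq0 : 0 ≤ 1 / (m : ℝ) ^ 2 + 2 * (rho m * X) / m := by positivity
  refine ⟨by linarith, by linarith, ?_, ?_, ?_⟩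
  · rw [hy]; nlinarith
  · rw [hy]; linarith
  · intro m' i' j' hm' hi' hj'
    rw [hy]
    by_cases hmm : m' = m
    · subst hmm
      rw [Lw_win hm]
      have h' := mul_le_mul_of_nonneg_left (h i' j' hi' hj') hk.le
      linarith
    · have hL := Lw_le hm' hi' hj' (hx.trans (by norm_num)) hz
      have g1 := gap hm hm' (Ne.symm hmm)
      have g2 := gap hm' hm hmm
      rw [abs_sub_comm] at g2
      set g := |1 / (m : ℝ) - 1 / m'| with hg
      have hM' : (1 : ℝ) ≤ m' := by exact_mod_cast hm'
      have hM0' : (0 : ℝ) < m' := by linarith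
      have q2 : 1 / (16 * (m' : ℝ) ^ 4) ≤ g ^ 2 / 4 := by
        have : 1 / (16 * (m' : ℝ) ^ 4) = (1 / (2 * (m' : ℝ) ^ 2)) ^ 2 / 4 := by
          field_simp; norm_num
        rw [this]; gcongr
      have q1 : rho m * X ≤ g / 4 := by
        have : rho m * X ≤ 1 / (2 * (m : ℝ) ^ 2) / 4 := by
          rw [div_div, le_div_iff₀ (by positivity)]
          have : rho m * X ≤ rho m * m := by gcongr
          have : rho m * X * (2 * (m : ℝ) ^ 2 * 4) ≤ rho m * m * (2 * (m : ℝ) ^ 2 * 4) := by gcongr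
          have e : rho m * m * (2 * (m : ℝ) ^ 2 * 4) = 8 * (rho m * (m : ℝ) ^ 3) := by ring
          linarith
        linarith
      have q3 : 3 / 4 * g ≤ |rho m * X - (-(1 / (m : ℝ))) - 1 / m'| := by
        have : |1 / (m : ℝ) - 1 / m'| ≤ |rho m * X - (-(1 / (m : ℝ))) - 1 / m'| + |rho m * X| := by
          have e : 1 / (m : ℝ) - 1 / m' =
            (rho m * X - (-(1 / (m : ℝ))) - 1 / m') - rho m * X := by ring
          rw [e, sub_eq_add_neg _ (rho m * X), ← abs_neg (rho m * X)]
          exact abs_add_le _ _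
        rw [abs_of_nonneg hrX0, ← hg] at this
        linarith
      have hg0 : 0 ≤ g := abs_nonneg _
      have q4 : (3 / 4 * g) ^ 2 ≤ (rho m * X - (-(1 / (m : ℝ))) - 1 / m') ^ 2 := by
        rw [← sq_abs (rho m * X - (-(1 / (m : ℝ))) - 1 / m')]; gcongr
      have q5 : (rho m * X) ^ 2 ≤ (g / 4) ^ 2 := by gcongr
      have e1 : (g / 4) ^ 2 = g ^ 2 / 16 := by ring
      have e2 : (3 / 4 * g) ^ 2 = 9 / 16 * g ^ 2 := by ring
      rw [e1] at q5
      rw [e2] at q4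
      have hsum : -64 + 1 / (m : ℝ) ^ 2 + 2 * (rho m * X) / m = -64 +
        ((rho m * X - (-(1 / (m : ℝ)))) ^ 2 - (rho m * X) ^ 2) := by linarith
      rw [hsum]
      have key : ∀ L W V R s t G : ℝ, L ≤ W - V + t → t ≤ G / 4 → 9 / 16 * G ≤ V → R ≤ G / 16 →
          0 ≤ s → 0 ≤ G → L - 64 ≤ -64 + (W - R) + s := by
        intro L W V R s t G _ _ _ _ _ _
        linarith
      exact key _ _ _ _ _ _ _ hL q2 q4 q5 hs0' (sq_nonneg g)

/-- `x`-coordinate and `y`-coordinate of the third family -/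
noncomputable def cx (m : ℕ) : ℝ := rho m * m - 4

lemma C_in {m : ℕ} (hm : 1 ≤ m) {X Y : ℝ} (hX0 : 0 ≤ X) (hXm : X ≤ m)
    (hY : -1 ≤ Y) (hY1 : Y ≤ 8 * (m : ℝ) ^ 2) :
    KK (rho m * X - cx m) (2 * (rho m * X) / m + rho m * del m * Y - 30) 0 := by
  have hM : (1 : ℝ) ≤ m := by exact_mod_cast hm
  have hM0 : (0 : ℝ) < m := by linarith
  have hr := rho_pos hm
  have hd := del_pos hm
  have hk : 0 < rho m * del m := by positivity
  have h1 := rho_mul_le hm (n := 1) (by norm_num)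
  have h0 := rho_mul_le hm (n := 0) (by norm_num)
  have h2 := rho_mul_le hm (n := 2) (by norm_num)
  have hd0 := del_mul_le hm (n := 0) (by norm_num)
  rw [pow_one] at h1
  rw [pow_zero, mul_one] at hd0 h0
  have hrX0 : 0 ≤ rho m * X := by positivity
  have hrX : rho m * X ≤ rho m * m := by gcongr
  have hx : |rho m * X - cx m| ≤ 4 := by
    unfold cx; rw [abs_le]; constructor <;> linarith
  have hx' := abs_le.1 hx
  have a1 : 0 ≤ 2 * (rho m * X) / m := by positivity
  have a2 : 2 * (rho m * X) / m ≤ 1 := by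
    rw [div_le_one hM0]; linarith
  have b1 : -1 ≤ rho m * del m * Y := by
    have : rho m * del m ≤ 1 := by nlinarith
    nlinarith
  have b2 : rho m * del m * Y ≤ 1 := by
    calc _ ≤ rho m * del m * (8 * (m : ℝ) ^ 2) := by gcongr
      _ = del m * (8 * (rho m * (m : ℝ) ^ 2)) := by ring
      _ ≤ 1 / 256 * (8 * (1 / 4096)) := by gcongr
      _ ≤ 1 := by norm_num
  have hsq : (rho m * X - cx m) ^ 2 ≤ 16 := by nlinarith
  refine ⟨hx'.1, by simpa using hx'.2, by nlinarith, by linarith, ?_⟩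
  intro m' i' j' hm' hi' hj'
  have := Lw_le' hm' hi' hj' hx (z := 0) (by simp)
  linarith

lemma C_out {m : ℕ} (hm : 1 ≤ m) {X y ζ : ℝ} (hX0 : 0 ≤ X) (k : ℕ) (h : 1 / 2 ≤ |ζ - k|) :
    ¬ KK (rho m * X - cx m) y (4 * m * rho m * ζ - 4 * m * rho m * k) := by
  rintro ⟨-, h2, -⟩
  have hM0 : (0 : ℝ) < m := by exact_mod_cast hm
  have hr := rho_pos hm
  have hrX0 : 0 ≤ rho m * X := by positivity
  rw [← mul_sub, abs_mul, abs_of_pos (by positivity : 0 < 4 * m * rho m)] at h2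
  unfold cx at h2
  have : 4 * m * rho m * (1 / 2) ≤ 4 * m * rho m * |ζ - k| := by gcongr
  have : 0 < m * rho m := by positivity
  linarith


/-- the point with given window coordinates -/
noncomputable def pt (m : ℕ) (X Y ζ : ℝ) : Fin 3 → ℝ :=
  ![rho m * X, 2 * (rho m * X) / m + rho m * del m * Y, 4 * m * rho m * ζ]

noncomputable def pa (m i : ℕ) : Fin 3 → ℝ := ![ax m i, ay m i, 0]
noncomputable def pb (m j : ℕ) : Fin 3 → ℝ := ![-(1 / m), byy m j, bz m j]
noncomputable def pc (m k : ℕ) : Fin 3 → ℝ := ![cx m, 30, 4 * m * rho m * k]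

/-- the obstacles -/
noncomputable def PP (m : ℕ) : Finset (Fin 3 → ℝ) :=
  (Finset.range m).image (pa m) ∪ ((Finset.range m).image (pb m) ∪ (Finset.range m).image (pc m))

/-- the free space -/
def FF (m : ℕ) : Set (Fin 3 → ℝ) := {t | (t +ᵥ KS) ∩ ↑(PP m) = ∅}

lemma mem_FF {m : ℕ} {t : Fin 3 → ℝ} :
    t ∈ FF m ↔ ∀ p ∈ PP m, ¬ KK (t 0 - p 0) (t 1 - p 1) (t 2 - p 2) := by
  have key : ∀ p : Fin 3 → ℝ, p ∈ t +ᵥ KS ↔ KK (t 0 - p 0) (t 1 - p 1) (t 2 - p 2) := by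
    intro p
    rw [Set.mem_vadd_set_iff_neg_vadd_mem]
    simp only [KS, Set.mem_ofPred_eq, vadd_eq_add, Pi.add_apply, Pi.neg_apply, neg_add_rev, neg_neg]
    rw [show -p 0 + t 0 = t 0 - p 0 by ring, show -p 1 + t 1 = t 1 - p 1 by ring,
      show -p 2 + t 2 = t 2 - p 2 by ring]
  unfold FF
  rw [Set.mem_ofPred_eq, Set.eq_empty_iff_forall_notMem]
  constructor
  · intro h p hp hK
    exact h p ⟨(key p).2 hK, hp⟩
  · rintro h p ⟨h1, h2⟩
    exact h p h2 ((key p).1 h1)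

lemma mem_FF_pt {m : ℕ} {X Y ζ : ℝ} : pt m X Y ζ ∈ FF m ↔
    (∀ i < m, ¬ KK (rho m * X - ax m i) (2 * (rho m * X) / m + rho m * del m * Y - ay m i)
      (4 * m * rho m * ζ)) ∧
    (∀ j < m, ¬ KK (rho m * X - (-(1 / m))) (2 * (rho m * X) / m + rho m * del m * Y - byy m j)
      (4 * m * rho m * ζ - bz m j)) ∧
    (∀ k < m, ¬ KK (rho m * X - cx m) (2 * (rho m * X) / m + rho m * del m * Y - 30)
      (4 * m * rho m * ζ - 4 * m * rho m * k)) := by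
  rw [mem_FF]
  unfold PP
  simp only [Finset.mem_union, Finset.mem_image, Finset.mem_range]
  constructor
  · intro h
    refine ⟨fun i hi => ?_, fun j hj => ?_, fun k hk => ?_⟩
    · simpa [pt, pa] using h _ (Or.inl ⟨i, hi, rfl⟩)
    · simpa [pt, pb] using h _ (Or.inr (Or.inl ⟨j, hj, rfl⟩))
    · simpa [pt, pc] using h _ (Or.inr (Or.inr ⟨k, hk, rfl⟩))
  · rintro ⟨h1, h2, h3⟩ p (⟨i, hi, rfl⟩ | ⟨j, hj, rfl⟩ | ⟨k, hk, rfl⟩)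
    · simpa [pt, pa] using h1 i hi
    · simpa [pt, pb] using h2 j hj
    · simpa [pt, pc] using h3 k hk

lemma s_le {m j : ℕ} (hm : 1 ≤ m) (hj : j < m) {ζ : ℝ} (hζ : ζ ≤ m) :
    (m + j) / (256 * (m : ℝ) ^ 3) * ζ ≤ 1 / (128 * m) := by
  have hM0 : (0 : ℝ) < m := by exact_mod_cast hm
  have hJ : (j : ℝ) ≤ m := by exact_mod_cast hj.le
  calc (m + j) / (256 * (m : ℝ) ^ 3) * ζ ≤ (m + j) / (256 * (m : ℝ) ^ 3) * m := by gcongr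
    _ ≤ (m + m) / (256 * (m : ℝ) ^ 3) * m := by gcongr
    _ = 1 / (128 * m) := by field_simp; norm_num

lemma th_bd {m j : ℕ} (hm : 1 ≤ m) (hj : j < m) :
    0 ≤ (j : ℝ) / (4 * m) ∧ (j : ℝ) / (4 * m) ≤ 1 / 4 := by
  have hM0 : (0 : ℝ) < m := by exact_mod_cast hm
  have hJ : (j : ℝ) ≤ m := by exact_mod_cast hj.le
  refine ⟨by positivity, ?_⟩
  rw [div_le_div_iff₀ (by positivity) (by norm_num)]
  linarith

lemma int_ineq (k : ℤ) {θ : ℝ} (h0 : 0 ≤ θ) (h1 : θ ≤ 1 / 4) :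
    1 / 2 * |(k : ℝ)| ≤ (k : ℝ) * (k + 2 * θ) := by
  rcases lt_trichotomy k 0 with h | h | h
  · have : (k : ℝ) ≤ -1 := by exact_mod_cast (by omega : k ≤ -1)
    rw [abs_of_nonpos (by linarith)]
    nlinarith
  · subst h; simp
  · have : (1 : ℝ) ≤ k := by exact_mod_cast (by omega : 1 ≤ k)
    rw [abs_of_nonneg (by linarith)]
    nlinarith

lemma faceX {m i j : ℕ} (hm : 1 ≤ m) (hi : i < m) (hj : j < m) {X Y ζ : ℝ}
    (hX : X = i + j / (4 * m)) (hY : -1 ≤ Y) (hY1 : Y ≤ 8 * (m : ℝ) ^ 2)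
    (hζ0 : -(512 * (m : ℝ) ^ 2) ≤ ζ) (hζ1 : ζ ≤ m) : pt m X Y ζ ∉ FF m := by
  intro hF
  obtain ⟨hA, hB, -⟩ := mem_FF_pt.1 hF
  have hM : (1 : ℝ) ≤ m := by exact_mod_cast hm
  have hM0 : (0 : ℝ) < m := by linarith
  have hI : (i : ℝ) + 1 ≤ m := by exact_mod_cast hi
  have hI0 : (0 : ℝ) ≤ i := by positivity
  obtain ⟨t0, t1⟩ := th_bd hm hj
  have hX0 : 0 ≤ X := by rw [hX]; linarith
  have hXm : X ≤ m := by rw [hX]; linarith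
  by_cases h : Y ≤ 2 * i * X - (i : ℝ) ^ 2 - (X - i) ^ 2 / (16 * (m : ℝ) ^ 2)
  · exact hA i hi (A_in hm hi hX0 hXm hY hζ0 hζ1 h)
  · refine hB j hj (B_in hm hj hX0 hXm hY hY1 hζ0 hζ1 ?_)
    intro i' j' hi' hj'
    have hs := s_le hm hj' hζ1
    obtain ⟨t0', t1'⟩ := th_bd hm hj'
    have hk := int_ineq ((i : ℤ) - i') t0 t1
    push_cast at hk
    set θ : ℝ := (j : ℝ) / (4 * m) with hθ
    set θ' : ℝ := (j' : ℝ) / (4 * m) with hθ'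
    have hsq : (X - i) ^ 2 / (16 * (m : ℝ) ^ 2) ≤ 1 / (128 * m) := by
      have : (X - i) ^ 2 ≤ 1 / 16 := by rw [hX]; nlinarith
      rw [div_le_div_iff₀ (by positivity) (by positivity)]
      nlinarith
    have hν : 1 / (64 * (m : ℝ)) = 1 / (128 * m) + 1 / (128 * m) := by field_simp; norm_num
    have hp : 1 / (128 * (m : ℝ)) ≤ 1 / 128 := by
      rw [div_le_div_iff₀ (by positivity) (by norm_num)]; linarith
    have hab : 1 / 2 * |X - i' - θ'| - ((j : ℝ) - j') ^ 2 ≤ 1 / 2 * |(i : ℝ) - i'| := by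
      by_cases hjj : j = j'
      · subst hjj
        have : X - i' - θ' = (i : ℝ) - i' := by rw [hX]; ring
        rw [this]; simp
      · have h1 : (1 : ℝ) ≤ ((j : ℝ) - j') ^ 2 := by
          have : (1 : ℤ) ≤ ((j : ℤ) - j') ^ 2 := by
            have : (j : ℤ) - j' ≠ 0 := by omega
            have := pow_pos (abs_pos.2 this) 2
            rw [sq_abs] at this
            omega
          exact_mod_cast this
        have h2 : |X - i' - θ'| ≤ |(i : ℝ) - i'| + |θ - θ'| := by
          have : X - i' - θ' = ((i : ℝ) - i') + (θ - θ') := by rw [hX]; ring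
          rw [this]; exact abs_add_le _ _
        have h3 : |θ - θ'| ≤ 1 / 4 := by rw [abs_le]; constructor <;> linarith
        linarith
    have e : 2 * i * X - (i : ℝ) ^ 2 - (2 * i' * X - (i' : ℝ) ^ 2)
        = ((i : ℝ) - i') * (i - i' + 2 * θ) := by rw [hX]; ring
    push Not at h
    linarith

lemma faceYbot {m : ℕ} (hm : 1 ≤ m) {X ζ : ℝ} (hX0 : 0 ≤ X) (hXm : X ≤ m)
    (hζ0 : -(512 * (m : ℝ) ^ 2) ≤ ζ) (hζ1 : ζ ≤ m) : pt m X (-1) ζ ∉ FF m := by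
  intro hF
  obtain ⟨hA, -, -⟩ := mem_FF_pt.1 hF
  have hM0 : (0 : ℝ) < m := by exact_mod_cast hm
  refine hA 0 hm (A_in hm hm hX0 hXm le_rfl hζ0 hζ1 ?_)
  have : (X - (0 : ℕ)) ^ 2 / (16 * (m : ℝ) ^ 2) ≤ 1 := by
    rw [div_le_one (by positivity)]
    push_cast
    nlinarith
  push_cast at this ⊢
  linarith

lemma faceYtop {m : ℕ} (hm : 1 ≤ m) {X ζ : ℝ} (hX0 : 0 ≤ X) (hXm : X ≤ m)
    (hζ0 : -(512 * (m : ℝ) ^ 2) ≤ ζ) (hζ1 : ζ ≤ m) : pt m X (8 * (m : ℝ) ^ 2) ζ ∉ FF m := by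
  intro hF
  obtain ⟨-, hB, -⟩ := mem_FF_pt.1 hF
  have hM : (1 : ℝ) ≤ m := by exact_mod_cast hm
  have hM0 : (0 : ℝ) < m := by linarith
  refine hB 0 hm (B_in hm hm hX0 hXm (by nlinarith) le_rfl hζ0 hζ1 ?_)
  intro i' j' hi' hj'
  have hs := s_le hm hj' hζ1
  obtain ⟨t0', t1'⟩ := th_bd hm hj'
  set θ' : ℝ := (j' : ℝ) / (4 * m) with hθ'
  have hI : (i' : ℝ) ≤ m := by exact_mod_cast hi'.le
  have hI0 : (0 : ℝ) ≤ i' := by positivity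
  have h1 : |X - i' - θ'| ≤ m + 1 := by rw [abs_le]; constructor <;> linarith
  have hν : 0 ≤ 1 / (64 * (m : ℝ)) := by positivity
  have hp : 1 / (128 * (m : ℝ)) ≤ 1 / 128 := by
    rw [div_le_div_iff₀ (by positivity) (by norm_num)]; linarith
  have h2 : (i' : ℝ) * X ≤ m * m := by gcongr
  have h3 : (1 : ℝ) ≤ m * m := by nlinarith
  have h4 : (m : ℝ) ≤ m * m := by nlinarith
  have h5 : 0 ≤ (((0 : ℕ) : ℝ) - j') ^ 2 := sq_nonneg _
  have h6 := sq_nonneg (i' : ℝ)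
  have e : 8 * (m : ℝ) ^ 2 = 8 * (m * m) := by ring
  rw [e]
  generalize (((0 : ℕ) : ℝ) - j') ^ 2 = q at h5 ⊢
  generalize (m + j') / (256 * (m : ℝ) ^ 3) * ζ = S at hs ⊢
  linarith

lemma faceZ {m k : ℕ} (hm : 1 ≤ m) (hk : k < m) {X Y : ℝ} (hX0 : 0 ≤ X) (hXm : X ≤ m)
    (hY : -1 ≤ Y) (hY1 : Y ≤ 8 * (m : ℝ) ^ 2) : pt m X Y k ∉ FF m := by
  intro hF
  obtain ⟨-, -, hC⟩ := mem_FF_pt.1 hF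
  refine hC k hk ?_
  rw [sub_self]
  exact C_in hm hX0 hXm hY hY1

lemma faceZlow {m : ℕ} (hm : 1 ≤ m) {X Y : ℝ} (hX0 : 0 ≤ X) (hXm : X ≤ m - 3 / 4)
    (hY : -1 ≤ Y) (hY1 : Y ≤ 8 * (m : ℝ) ^ 2) : pt m X Y (-(512 * (m : ℝ) ^ 2)) ∉ FF m := by
  intro hF
  obtain ⟨hA, hB, -⟩ := mem_FF_pt.1 hF
  have hM : (1 : ℝ) ≤ m := by exact_mod_cast hm
  have hM0 : (0 : ℝ) < m := by linarith
  have hm2 : -(512 * (m : ℝ) ^ 2) ≤ m := by nlinarith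
  obtain ⟨i, hi, hi1, hi2⟩ : ∃ i : ℕ, i < m ∧ -(1 / 2) ≤ X - i ∧ X - i ≤ 1 / 2 := by
    refine ⟨⌊X + 1 / 2⌋₊, ?_, ?_, ?_⟩
    · rw [Nat.floor_lt (by linarith)]; linarith
    · have := Nat.floor_le (by linarith : 0 ≤ X + 1 / 2); linarith
    · have := Nat.lt_floor_add_one (X + 1 / 2); linarith
  by_cases h : Y ≤ 2 * i * X - (i : ℝ) ^ 2 - (X - i) ^ 2 / (16 * (m : ℝ) ^ 2)
  · exact hA i hi (A_in hm hi hX0 (by linarith) hY le_rfl hm2 h)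
  · refine hB 0 hm (B_in hm hm hX0 (by linarith) hY hY1 le_rfl hm2 ?_)
    intro i' j' hi' hj'
    obtain ⟨t0', t1'⟩ := th_bd hm hj'
    set θ' : ℝ := (j' : ℝ) / (4 * m) with hθ'
    have hs : (m + j') / (256 * (m : ℝ) ^ 3) * -(512 * (m : ℝ) ^ 2) ≤ -2 := by
      have e : (m + j') / (256 * (m : ℝ) ^ 3) * -(512 * (m : ℝ) ^ 2) = -2 - 2 * j' / m := by
        field_simp; ring
      have : 0 ≤ 2 * (j' : ℝ) / m := by positivity
      linarith
    have hν : 0 ≤ 1 / (64 * (m : ℝ)) := by positivity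
    have h5 : 0 ≤ (((0 : ℕ) : ℝ) - j') ^ 2 := sq_nonneg _
    have hsq : (X - i) ^ 2 / (16 * (m : ℝ) ^ 2) ≤ 1 / 64 := by
      have : (X - i) ^ 2 ≤ 1 / 4 := by nlinarith
      rw [div_le_div_iff₀ (by positivity) (by positivity)]
      nlinarith
    obtain ⟨φ, hφ⟩ : ∃ φ, φ = X - i := ⟨_, rfl⟩
    obtain ⟨κ, hκ⟩ : ∃ κ, κ = (i' : ℝ) - i := ⟨_, rfl⟩
    rw [← hφ] at hi1 hi2
    have e : 2 * i' * X - (i' : ℝ) ^ 2 - (2 * i * X - (i : ℝ) ^ 2) = 2 * κ * φ - κ ^ 2 := by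
      rw [hφ, hκ]; ring
    have e2 : X - i' - θ' = φ - κ - θ' := by rw [hφ, hκ]; ring
    have h7 : |φ - κ - θ'| ≤ 1 / 2 + |κ| + 1 / 4 := by
      have := neg_abs_le κ
      have := le_abs_self κ
      rw [abs_le]; constructor <;> linarith
    have h8 : 2 * κ * φ ≤ |κ| := by
      rcases abs_cases κ with ⟨h, _⟩ | ⟨h, _⟩ <;> rw [h] <;> nlinarith
    have h9 : 3 / 2 * |κ| - κ ^ 2 ≤ 9 / 16 := by
      rw [← sq_abs κ]; nlinarith [sq_nonneg (|κ| - 3 / 4)]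
    rw [e2]
    push Not at h
    generalize (((0 : ℕ) : ℝ) - j') ^ 2 = q at h5 ⊢
    generalize (m + j') / (256 * (m : ℝ) ^ 3) * -(512 * (m : ℝ) ^ 2) = S at hs ⊢
    linarith

lemma sample {m i j k : ℕ} (hm : 1 ≤ m) (hi : i < m) (hj : j < m) {X : ℝ}
    (hX : X = i + j / (4 * m) + 1 / (8 * m)) :
    pt m X (2 * i * X - (i : ℝ) ^ 2 + 1 / (64 * m)) (k - 1 / 2) ∈ FF m := by
  have hM : (1 : ℝ) ≤ m := by exact_mod_cast hm
  have hM0 : (0 : ℝ) < m := by linarith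
  have hI0 : (0 : ℝ) ≤ i := by positivity
  have hν : 0 < 1 / (64 * (m : ℝ)) := by positivity
  obtain ⟨t0, t1⟩ := th_bd hm hj
  have hp : 1 / (8 * (m : ℝ)) ≤ 1 / 8 := by
    rw [div_le_div_iff₀ (by positivity) (by norm_num)]; linarith
  have hp0 : 0 < 1 / (8 * (m : ℝ)) := by positivity
  have hX0 : 0 ≤ X := by linarith
  rw [mem_FF_pt]
  refine ⟨fun i' hi' => ?_, fun j' hj' => ?_, fun k' hk' => ?_⟩
  · apply A_out hm
    have : 0 ≤ ((i : ℝ) - i') * (2 * X - i - i') := by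
      rcases lt_trichotomy i i' with h | h | h
      · have : (i : ℝ) + 1 ≤ i' := by exact_mod_cast h
        apply mul_nonneg_of_nonpos_of_nonpos <;> linarith
      · subst h; simp
      · have : (i' : ℝ) + 1 ≤ i := by exact_mod_cast h
        apply mul_nonneg <;> linarith
    nlinarith
  · apply B_out hm hi hj'
    have h1 : 1 / (8 * (m : ℝ)) ≤ |X - i - j' / (4 * m)| := by
      rcases le_or_gt j' j with h | h
      · have h : (j' : ℝ) ≤ j := by exact_mod_cast h
        refine le_trans ?_ (le_abs_self _)
        have : (j' : ℝ) / (4 * m) ≤ j / (4 * m) := by gcongr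
        linarith
      · have h : (j : ℝ) + 1 ≤ j' := by exact_mod_cast h
        refine le_trans ?_ (neg_le_abs _)
        have h2 : ((j : ℝ) + 1) / (4 * m) ≤ j' / (4 * m) := by gcongr
        have h3 : ((j : ℝ) + 1) / (4 * m) = j / (4 * m) + (1 / (8 * m) + 1 / (8 * m)) := by
          field_simp; ring
        linarith
    have h2 : -(1 / (256 * (m : ℝ))) ≤ (m + j') / (256 * (m : ℝ) ^ 3) * ((k : ℝ) - 1 / 2) := by
      have hJ : (j' : ℝ) ≤ m := by exact_mod_cast hj'.le
      have hk : (0 : ℝ) ≤ k := by positivity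
      calc -(1 / (256 * (m : ℝ))) ≤ -((m + j') / (256 * (m : ℝ) ^ 3) * (1 / 2)) := by
            rw [neg_le_neg_iff, div_mul_div_comm, div_le_div_iff₀ (by positivity) (by positivity)]
            have a1 : (m : ℝ) * m ≤ m ^ 3 := by nlinarith [mul_pos hM0 hM0]
            have a2 : ((m : ℝ) + j') * m ≤ (m + m) * m := by gcongr
            nlinarith
        _ = (m + j') / (256 * (m : ℝ) ^ 3) * (0 - 1 / 2) := by ring
        _ ≤ (m + j') / (256 * (m : ℝ) ^ 3) * ((k : ℝ) - 1 / 2) := by gcongr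
    have e1 : 1 / (64 * (m : ℝ)) = 1 / 64 * (1 / m) := by field_simp
    have e2 : 1 / (8 * (m : ℝ)) = 1 / 8 * (1 / m) := by field_simp
    have e3 : 1 / (256 * (m : ℝ)) = 1 / 256 * (1 / m) := by field_simp
    have : 0 < 1 / (m : ℝ) := by positivity
    rw [e2] at h1
    rw [e3] at h2
    rw [e1]
    generalize (m + j') / (256 * (m : ℝ) ^ 3) * ((k : ℝ) - 1 / 2) = S at h2 ⊢
    linarith
  · apply C_out hm hX0
    rcases le_or_gt k k' with h | h
    · have h : (k : ℝ) ≤ k' := by exact_mod_cast h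
      refine le_trans ?_ (neg_le_abs _)
      linarith
    · have h : (k' : ℝ) + 1 ≤ k := by exact_mod_cast h
      refine le_trans ?_ (le_abs_self _)
      linarith

lemma outer {m : ℕ} (hm : 1 ≤ m) : (![100, 0, 0] : Fin 3 → ℝ) ∈ FF m := by
  rw [mem_FF]
  have hM : (1 : ℝ) ≤ m := by exact_mod_cast hm
  have hM0 : (0 : ℝ) < m := by linarith
  have h1 := rho_mul_le hm (n := 1) (by norm_num)
  rw [pow_one] at h1
  rintro p hp ⟨-, h, -⟩
  have hz := abs_nonneg ((![100, 0, 0] : Fin 3 → ℝ) 2 - p 2)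
  have h96 : 96 ≤ p 0 := by
    have : (![100, 0, 0] : Fin 3 → ℝ) 0 = 100 := rfl
    rw [this] at h
    linarith
  unfold PP at hp
  simp only [Finset.mem_union, Finset.mem_image, Finset.mem_range] at hp
  rcases hp with ⟨i, hi, rfl⟩ | ⟨j, hj, rfl⟩ | ⟨k, hk, rfl⟩
  · have := (ax_bd hm hi).2
    simp only [pa, Matrix.cons_val_zero] at h96
    linarith
  · simp only [pb, Matrix.cons_val_zero] at h96
    have : 0 < 1 / (m : ℝ) := by positivity
    linarith
  · simp only [pc, cx, Matrix.cons_val_zero] at h96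
    linarith

lemma card_PP {m : ℕ} (hm : 1 ≤ m) : (PP m).card = 3 * m := by
  have hM : (1 : ℝ) ≤ m := by exact_mod_cast hm
  have hM0 : (0 : ℝ) < m := by linarith
  have hr := rho_pos hm
  have hd := del_pos hm
  have h1 := rho_mul_le hm (n := 1) (by norm_num)
  rw [pow_one] at h1
  have hm1 : 0 < 1 / (m : ℝ) := by positivity
  have hm2 : 1 / (m : ℝ) ≤ 1 := by rw [div_le_one hM0]; exact hM
  have ia : Function.Injective (pa m) := by
    intro i i' h
    have h := congrFun h 0
    simp only [pa, Matrix.cons_val_zero, ax] at h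
    have : ((i : ℝ) - i') * (del m + rho m) = 0 := by linarith
    rcases mul_eq_zero.1 this with h | h
    · exact_mod_cast sub_eq_zero.1 h
    · linarith
  have ib : Function.Injective (pb m) := by
    intro i i' h
    have h := congrFun h 2
    simp only [pb, bz] at h
    have h : -(2048 * (m : ℝ) ^ 4 * rho m * (m + i)) = -(2048 * (m : ℝ) ^ 4 * rho m * (m + i')) := h
    have : (2048 * (m : ℝ) ^ 4 * rho m) * ((i : ℝ) - i') = 0 := by linarith
    rcases mul_eq_zero.1 this with h | h
    · have : 0 < 2048 * (m : ℝ) ^ 4 * rho m := by positivity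
      linarith
    · exact_mod_cast sub_eq_zero.1 h
  have ic : Function.Injective (pc m) := by
    intro i i' h
    have h := congrFun h 2
    have h : 4 * m * rho m * (i : ℝ) = 4 * m * rho m * i' := h
    have : (4 * m * rho m) * ((i : ℝ) - i') = 0 := by linarith
    rcases mul_eq_zero.1 this with h | h
    · have : 0 < 4 * m * rho m := by positivity
      linarith
    · exact_mod_cast sub_eq_zero.1 h
  unfold PP
  rw [Finset.card_union_of_disjoint, Finset.card_union_of_disjoint,
    Finset.card_image_of_injective _ ia, Finset.card_image_of_injective _ ib,
    Finset.card_image_of_injective _ ic, Finset.card_range]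
  · ring
  · rw [Finset.disjoint_left]
    simp only [Finset.mem_image, Finset.mem_range]
    rintro _ ⟨j, hj, rfl⟩ ⟨k, hk, h⟩
    have h := congrFun h 0
    simp only [pb, pc, cx, Matrix.cons_val_zero] at h
    linarith
  · rw [Finset.disjoint_left]
    simp only [Finset.mem_image, Finset.mem_range, Finset.mem_union]
    rintro _ ⟨i, hi, rfl⟩ (⟨k, hk, h⟩ | ⟨k, hk, h⟩)
    · have := (ax_bd hm hi).1
      have h := congrFun h 0
      simp only [pa, pb, Matrix.cons_val_zero] at h
      linarith
    · have := (ax_bd hm hi).1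
      have h := congrFun h 0
      simp only [pa, pc, cx, Matrix.cons_val_zero] at h
      linarith

/-- positions of the vertical walls -/
noncomputable def xn (m n : ℕ) : ℝ := (n / m : ℕ) + ((n % m : ℕ) : ℝ) / (4 * m)

lemma xn_step {m : ℕ} (hm : 1 ≤ m) (n : ℕ) : xn m n + 1 / (8 * m) < xn m (n + 1) := by
  have hM : (1 : ℝ) ≤ m := by exact_mod_cast hm
  have hM0 : (0 : ℝ) < m := by linarith
  have hdm := Nat.mod_add_div n m
  have hlt := Nat.mod_lt n hm
  obtain ⟨t0, t1⟩ := th_bd hm hlt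
  have hp0 : 0 < 1 / (8 * (m : ℝ)) := by positivity
  have hp : 1 / (8 * (m : ℝ)) ≤ 1 / 8 := by
    rw [div_le_div_iff₀ (by positivity) (by norm_num)]; linarith
  unfold xn
  by_cases h : n % m + 1 < m
  · obtain ⟨e1, e2⟩ := (Nat.div_mod_unique (a := n + 1) (d := n / m) (c := n % m + 1) hm).2
      ⟨by omega, h⟩
    rw [e1, e2]
    push_cast
    have h3 : (((n % m : ℕ) : ℝ) + 1) / (4 * m)
        = ((n % m : ℕ) : ℝ) / (4 * m) + (1 / (8 * m) + 1 / (8 * m)) := by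
      field_simp; ring
    rw [h3]
    linarith
  · have hmul : m * (n / m + 1) = m * (n / m) + m := by ring
    obtain ⟨e1, e2⟩ := (Nat.div_mod_unique (a := n + 1) (d := n / m + 1) (c := 0) hm).2
      ⟨by omega, by omega⟩
    rw [e1, e2]
    push_cast
    rw [zero_div]
    linarith

lemma xn_mono {m : ℕ} (hm : 1 ≤ m) : StrictMono (xn m) := by
  apply strictMono_nat_of_lt_succ
  intro n
  have hM0 : (0 : ℝ) < m := by exact_mod_cast hm
  have hp0 : 0 < 1 / (8 * (m : ℝ)) := by positivity
  linarith [xn_step hm n]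

lemma xn_nonneg (m n : ℕ) : 0 ≤ xn m n := by unfold xn; positivity

lemma xn_le {m n : ℕ} (hm : 1 ≤ m) (hn : n < m * m) : xn m n ≤ m - 3 / 4 := by
  have hi : n / m < m := Nat.div_lt_of_lt_mul hn
  have hI : ((n / m : ℕ) : ℝ) + 1 ≤ m := by exact_mod_cast hi
  have := (th_bd hm (Nat.mod_lt n hm)).2
  unfold xn
  linarith

/-- window coordinates -/
noncomputable def uX (m : ℕ) (t : Fin 3 → ℝ) : ℝ := t 0 / rho m
noncomputable def uY (m : ℕ) (t : Fin 3 → ℝ) : ℝ := (t 1 - 2 * t 0 / m) / (rho m * del m)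
noncomputable def uZ (m : ℕ) (t : Fin 3 → ℝ) : ℝ := t 2 / (4 * m * rho m)

lemma uX_cont (m : ℕ) : Continuous (uX m) := by unfold uX; fun_prop
lemma uY_cont (m : ℕ) : Continuous (uY m) := by unfold uY; fun_prop
lemma uZ_cont (m : ℕ) : Continuous (uZ m) := by unfold uZ; fun_prop

lemma pt_u {m : ℕ} (hm : 1 ≤ m) (t : Fin 3 → ℝ) : pt m (uX m t) (uY m t) (uZ m t) = t := by
  have hM0 : (0 : ℝ) < m := by exact_mod_cast hm
  have hr := rho_pos hm
  have hd := del_pos hm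
  have e0 : rho m * (t 0 / rho m) = t 0 := by field_simp
  funext l
  fin_cases l
  · exact e0
  · change 2 * (rho m * (t 0 / rho m)) / m
      + rho m * del m * ((t 1 - 2 * t 0 / m) / (rho m * del m)) = t 1
    rw [e0, mul_div_cancel₀ _ (by positivity)]
    ring
  · change 4 * m * rho m * (t 2 / (4 * m * rho m)) = t 2
    rw [mul_div_cancel₀ _ (by positivity)]

lemma uX_pt {m : ℕ} (hm : 1 ≤ m) (X Y ζ : ℝ) : uX m (pt m X Y ζ) = X := by
  have hr := rho_pos hm
  change rho m * X / rho m = X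
  field_simp

lemma uY_pt {m : ℕ} (hm : 1 ≤ m) (X Y ζ : ℝ) : uY m (pt m X Y ζ) = Y := by
  have hr := rho_pos hm
  have hd := del_pos hm
  change (2 * (rho m * X) / m + rho m * del m * Y - 2 * (rho m * X) / m) / (rho m * del m) = Y
  rw [add_sub_cancel_left, mul_div_cancel_left₀ _ (by positivity)]

lemma uZ_pt {m : ℕ} (hm : 1 ≤ m) (X Y ζ : ℝ) : uZ m (pt m X Y ζ) = ζ := by
  have hM0 : (0 : ℝ) < m := by exact_mod_cast hm
  have hr := rho_pos hm
  change 4 * m * rho m * ζ / (4 * m * rho m) = ζ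
  rw [mul_div_cancel_left₀ _ (by positivity)]

/-- lower end of the vertical slots -/
noncomputable def lo (m k : ℕ) : ℝ := if k = 0 then -(512 * (m : ℝ) ^ 2) else (k : ℝ) - 1

lemma lo_ge {m k : ℕ} : -(512 * (m : ℝ) ^ 2) ≤ lo m k := by
  unfold lo
  split_ifs with h
  · exact le_rfl
  · have : (1 : ℝ) ≤ k := by exact_mod_cast Nat.one_le_iff_ne_zero.2 h
    nlinarith [sq_nonneg (m : ℝ)]

lemma lo_le {m k : ℕ} (hm : 1 ≤ m) : lo m k ≤ k - 1 := by
  unfold lo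
  split_ifs with h
  · have hM : (1 : ℝ) ≤ m := by exact_mod_cast hm
    subst h
    push_cast
    nlinarith
  · exact le_rfl

/-- open boxes -/
def OO (m n k : ℕ) : Set (Fin 3 → ℝ) :=
  {t | xn m n < uX m t ∧ uX m t < xn m (n + 1) ∧ -1 < uY m t ∧ uY m t < 8 * (m : ℝ) ^ 2 ∧
    lo m k < uZ m t ∧ uZ m t < k}

/-- closed boxes -/
def CC (m n k : ℕ) : Set (Fin 3 → ℝ) :=
  {t | xn m n ≤ uX m t ∧ uX m t ≤ xn m (n + 1) ∧ -1 ≤ uY m t ∧ uY m t ≤ 8 * (m : ℝ) ^ 2 ∧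
    lo m k ≤ uZ m t ∧ uZ m t ≤ k}

lemma OO_open (m n k : ℕ) : IsOpen (OO m n k) := by
  have hX := uX_cont m
  have hY := uY_cont m
  have hZ := uZ_cont m
  refine (isOpen_lt continuous_const hX).inter <| (isOpen_lt hX continuous_const).inter <|
    (isOpen_lt continuous_const hY).inter <| (isOpen_lt hY continuous_const).inter <|
    (isOpen_lt continuous_const hZ).inter (isOpen_lt hZ continuous_const)

lemma CC_closed (m n k : ℕ) : IsClosed (CC m n k) := by
  have hX := uX_cont m
  have hY := uY_cont m
  have hZ := uZ_cont m
  refine (isClosed_le continuous_const hX).inter <| (isClosed_le hX continuous_const).inter <|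
    (isClosed_le continuous_const hY).inter <| (isClosed_le hY continuous_const).inter <|
    (isClosed_le continuous_const hZ).inter (isClosed_le hZ continuous_const)

lemma wall {m n k : ℕ} (hm : 1 ≤ m) (hn : n + 1 < m * m) (hk : k < m) :
    CC m n k ∩ FF m ⊆ OO m n k := by
  rintro t ⟨⟨x0, x1, y0, y1, z0, z1⟩, hF⟩
  have hM : (1 : ℝ) ≤ m := by exact_mod_cast hm
  have hK : (k : ℝ) ≤ m := by exact_mod_cast hk.le
  rw [← pt_u hm t] at hF
  have hX0 := (xn_nonneg m n).trans x0
  have hX1 := x1.trans (xn_le hm hn)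
  have hXm : uX m t ≤ m := by linarith
  have hz0 := (lo_ge (m := m) (k := k)).trans z0
  have hz1 := z1.trans hK
  have hn' : n < m * m := by omega
  refine ⟨lt_of_le_of_ne x0 ?_, lt_of_le_of_ne x1 ?_, lt_of_le_of_ne y0 ?_,
    lt_of_le_of_ne y1 ?_, lt_of_le_of_ne z0 ?_, lt_of_le_of_ne z1 ?_⟩
  · intro h
    exact faceX hm (Nat.div_lt_of_lt_mul hn') (Nat.mod_lt n hm) h.symm y0 y1 hz0 hz1 hF
  · intro h
    exact faceX hm (Nat.div_lt_of_lt_mul hn) (Nat.mod_lt _ hm) h y0 y1 hz0 hz1 hF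
  · intro h
    rw [← h] at hF
    exact faceYbot hm hX0 hXm hz0 hz1 hF
  · intro h
    rw [h] at hF
    exact faceYtop hm hX0 hXm hz0 hz1 hF
  · intro h
    rw [← h] at hF
    unfold lo at hF
    split_ifs at hF with hk0
    · exact faceZlow hm hX0 hX1 y0 y1 hF
    · have : (k : ℝ) - 1 = ((k - 1 : ℕ) : ℝ) := by
        rw [Nat.cast_sub (Nat.one_le_iff_ne_zero.2 hk0), Nat.cast_one]
      rw [this] at hF
      exact faceZ hm (by omega) hX0 hXm y0 y1 hF
  · intro h
    rw [h] at hF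
    exact faceZ hm hk hX0 hXm y0 y1 hF

/-- sample points of the bounded components -/
noncomputable def qq (m n k : ℕ) : Fin 3 → ℝ :=
  pt m (xn m n + 1 / (8 * m))
    (2 * (n / m : ℕ) * (xn m n + 1 / (8 * m)) - ((n / m : ℕ) : ℝ) ^ 2 + 1 / (64 * m)) (k - 1 / 2)

lemma qq_free {m n k : ℕ} (hm : 1 ≤ m) (hn : n < m * m) : qq m n k ∈ FF m :=
  sample hm (Nat.div_lt_of_lt_mul hn) (Nat.mod_lt n hm) rfl

lemma qq_mem {m n k : ℕ} (hm : 1 ≤ m) (hn : n < m * m) : qq m n k ∈ OO m n k := by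
  have hM : (1 : ℝ) ≤ m := by exact_mod_cast hm
  have hM0 : (0 : ℝ) < m := by linarith
  have hp0 : 0 < 1 / (8 * (m : ℝ)) := by positivity
  have hp : 1 / (8 * (m : ℝ)) ≤ 1 / 8 := by
    rw [div_le_div_iff₀ (by positivity) (by norm_num)]; linarith
  have hν0 : 0 < 1 / (64 * (m : ℝ)) := by positivity
  have hν : 1 / (64 * (m : ℝ)) ≤ 1 / 64 := by
    rw [div_le_div_iff₀ (by positivity) (by norm_num)]; linarith
  have hlo := lo_le (m := m) (k := k) hm
  unfold OO qq
  simp only [Set.mem_ofPred_eq, uX_pt hm, uY_pt hm, uZ_pt hm]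
  have hI0 : (0 : ℝ) ≤ ((n / m : ℕ) : ℝ) := by positivity
  have hIm : ((n / m : ℕ) : ℝ) ≤ m := by exact_mod_cast (Nat.div_lt_of_lt_mul hn).le
  have hxi : ((n / m : ℕ) : ℝ) ≤ xn m n := by
    have := (th_bd hm (Nat.mod_lt n hm)).1
    unfold xn; linarith
  have hxm := xn_le hm hn
  generalize ((n / m : ℕ) : ℝ) = I at *
  have hW : I ≤ xn m n + 1 / (8 * (m : ℝ)) := by linarith
  have hW1 : xn m n + 1 / (8 * (m : ℝ)) ≤ m := by linarith
  refine ⟨by linarith, xn_step hm n, ?_, ?_, by linarith, by linarith⟩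
  · generalize xn m n + 1 / (8 * (m : ℝ)) = W at *
    nlinarith
  · generalize xn m n + 1 / (8 * (m : ℝ)) = W at *
    have hW0 : 0 ≤ W := hI0.trans hW
    have : I * W ≤ m * m := by gcongr
    nlinarith [sq_nonneg I]

lemma qq_sep {m n k n' k' : ℕ} (hm : 1 ≤ m) (h : qq m n' k' ∈ OO m n k) :
    n = n' ∧ k = k' := by
  have hM0 : (0 : ℝ) < m := by exact_mod_cast hm
  have hp0 : 0 < 1 / (8 * (m : ℝ)) := by positivity
  unfold OO qq at h
  simp only [Set.mem_ofPred_eq, uX_pt hm, uY_pt hm, uZ_pt hm] at h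
  obtain ⟨x0, x1, -, -, z0, z1⟩ := h
  have hs := xn_step hm n'
  constructor
  · have a := (xn_mono hm).lt_iff_lt.1 (x0.trans hs)
    have b := (xn_mono hm).lt_iff_lt.1 ((by linarith : xn m n' < xn m n' + 1 / (8 * m)).trans x1)
    omega
  · have b : k' < k + 1 := by
      have : (k' : ℝ) < k + 1 := by linarith
      exact_mod_cast this
    have a : k < k' + 1 := by
      unfold lo at z0
      split_ifs at z0 with h0
      · omega
      · have : (k : ℝ) < k' + 1 := by linarith
        exact_mod_cast this
    omega

lemma outer_sep {m n k : ℕ} (hm : 1 ≤ m) (hn : n + 1 < m * m) :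
    (![100, 0, 0] : Fin 3 → ℝ) ∉ OO m n k := by
  rintro ⟨-, h, -⟩
  have hr := rho_pos hm
  have h1 := rho_mul_le hm (n := 1) (by norm_num)
  rw [pow_one] at h1
  have h2 := xn_le hm hn
  have h3 : (100 : ℝ) / rho m < xn m (n + 1) := h
  rw [div_lt_iff₀ hr] at h3
  have : xn m (n + 1) * rho m ≤ m * rho m := by gcongr; linarith
  linarith

lemma final {m : ℕ} (hm : 0 < m) :
    ((m ^ 3 - m + 1 : ℕ) : Cardinal) ≤ Cardinal.mk (ConnectedComponents ↥(FF m)) := by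
  have hm : 1 ≤ m := hm
  have hmm : 1 ≤ m * m := Nat.mul_pos hm hm
  have key := comps (ι := Fin (m * m - 1) × Fin m) (FF m) (fun p => qq m p.1 p.2) ![100, 0, 0]
    (fun p => OO m p.1 p.2) (fun p => CC m p.1 p.2)
    (fun p => qq_free hm (by have := p.1.2; omega)) (outer hm)
    (fun p => OO_open _ _ _) (fun p => CC_closed _ _ _)
    (fun p t ht => ⟨ht.1.le, ht.2.1.le, ht.2.2.1.le, ht.2.2.2.1.le, ht.2.2.2.2.1.le,
      ht.2.2.2.2.2.le⟩)
    (fun p => wall hm (by have := p.1.2; omega) p.2.2)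
    (fun p => qq_mem hm (by have := p.1.2; omega))
    (fun p q hpq hmem => hpq (by
      obtain ⟨h1, h2⟩ := qq_sep hm hmem
      exact Prod.ext (Fin.ext h1) (Fin.ext h2)))
    (fun p => outer_sep hm (by have := p.1.2; omega))
  have e : Cardinal.mk (Option (Fin (m * m - 1) × Fin m)) = ((m ^ 3 - m + 1 : ℕ) : Cardinal) := by
    rw [Cardinal.mk_fintype, Fintype.card_option, Fintype.card_prod, Fintype.card_fin,
      Fintype.card_fin, Nat.sub_mul, one_mul]
    congr 3
    ring
  rw [← e]
  exact key

end FreeSpace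

/-- **Corollary (motion planning).** There exist a convex body `K` in `ℝ³` and, for
every positive integer `m`, a set `P` of `3m` point obstacles such that the free
space for moving `K` by translations while avoiding `P` has at least `m³ − m + 1`
connected components. -/
theorem free_space_many_components :
    ∃ K : Set (Fin 3 → ℝ),
      IsCompact K ∧ Convex ℝ K ∧ (interior K).Nonempty ∧
      ∀ m : ℕ, 0 < m →
        ∃ P : Finset (Fin 3 → ℝ), P.card = 3 * m ∧
          ((m ^ 3 - m + 1 : ℕ) : Cardinal) ≤
            Cardinal.mk (ConnectedComponents ↥{t : Fin 3 → ℝ | (t +ᵥ K) ∩ ↑P = ∅}) := by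
  exact ⟨FreeSpace.KS, FreeSpace.KS_compact, FreeSpace.KS_convex, FreeSpace.KS_interior,
    fun m hm => ⟨FreeSpace.PP m, FreeSpace.card_PP hm, FreeSpace.final hm⟩⟩
end
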